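/- arXiv:2303.09509 — 3 statements merged into one kernel-verified Lean document; each statement's English description precedes it below -/
import Mathlib

section
/- Let p be a prime, f ≥ 1, n ≥ 2, and let q = p^f. Assume PSL_n(q) is a simple group (i.e. (n,q) ∉ {(2,2),(2,3)}). Let G be a finite almost simple group with socle S ≅ PSL_n(q) (that is, S is a normal subgroup of G isomorphic to PSL_n(q) with trivial centralizer in G). Then the number of maximal subgroups of G that contain S is at most 2(n−1) + ω(f) + 10. -/
open Matrix

/-!
Write `π` for the map from `SL_n(F)`, `|F| = p ^ f`, to `G` with image `S` and central kernel.
Maximal subgroups of `G` containing `S` are the maximal subgroups of `Γ = G ⧸ S`, so the theorem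
splits into a description of `Γ` and a count.

**Count.** Suppose `Γ` has a cyclic normal subgroup `⟨d⟩` with `d ^ n = 1`, abelian quotient
`Γ ⧸ ⟨d⟩`, and a subgroup `E = ⟨d, x⟩` of index at most two with `x ^ f ∈ ⟨d⟩` (`OuterShape`).
A maximal subgroup `M` containing `d` and `x` is `E`. If it contains `d` but not `x` it has prime
index `r ∣ f`, and there is one such `M` for `r` odd and at most two for `r = 2`. If `d ∉ M`, then
`d ^ r ∈ M` for a prime `r ∣ n`, and there are at most `2 r` such `M`: when `Γ` acts nontrivially on
`⟨d⟩ ⧸ ⟨d ^ r⟩`, fix an element `b` acting nontrivially: `M` is determined by which of the elements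
`b d ^ j` it contains. Otherwise `M` is normal and is determined by residues modulo `r`. As
distinct primes dividing `n` have sum at most `n`, the total is at most `2 n + ω(f) + 2`
(`OuterShape.ncard_coatoms_le`).

**Shape of `Γ`.** No automorphism theorem for `PSL_n` is assumed; the action of `G` is read off from
transvections `1 + w ψᵀ`, `ψ ⬝ w = 0`. For a nonzero vector `w` the transvections with centre `w`
form an elementary abelian group `Cen w`, and for a nonzero covector `ψ` those with axis `ψ` form
`Hyp ψ`.

* Conjugation by `G` permutes the images of the groups `Cen w` and `Hyp ψ` (`cj_mem_Fam`). The
  root groups `Cen w ∩ Hyp ψ` are centres of Sylow `p`-subgroups, so `G` maps transvections to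
  transvections; a `p`-group of transvections lies in some `Cen w` or `Hyp ψ`, and all of these
  have the same order.
* An element of `G` centralizing the image of `Cen w` lies in `S` (`mem_range_of_commute_Cen`): after
  multiplication by a transvection with centre `w` it normalizes the image of every `Hyp ψ`, and
  the only element of `G` doing so is `1`, because `S` has trivial centralizer.
* By the Frattini argument `G = S N`, where `N` normalizes a Sylow `p`-subgroup whose centre is the
  root group of a flag `(w, ψ₀)`. An element `k ∈ N` acts on this root group `{1 + c w ψ₀ᵀ}` by
  `c ↦ m σ(c)` with `σ` a field automorphism: the torus provides multiplication by squares, which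
  generate `F` additively (`exists_rootAct`). It also permutes `{Cen w, Hyp ψ₀}`, which gives the
  subgroup `P` of index at most two (`mul_mem_cjStab_iff`).
* If `k ∈ P` has `σ = 1`, it acts on `Cen w` through an `F`-linear map (`exists_linAct`), whose
  determinant is multiplicative in `k`. If the determinant is an `n`-th power, the linear map is
  realized by an element of `SL_n(F)` and `k ∈ S` (`LinAct.mem_range`).

As `Fˣ` and `Gal(F / 𝔽_p)` are cyclic, the latter of order `f`, the group `Γ` has the required shape
(`exists_outerShape`).
-/

/-! ### Counting maximal subgroups of the outer group -/

lemma ncard_le_of_label {α β : Type*} (A : Set α) (t : Finset β) (P : α → β → Prop)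
    (hex : ∀ M ∈ A, ∃ i ∈ t, P M i)
    (hinj : ∀ M ∈ A, ∀ M' ∈ A, ∀ i ∈ t, P M i → P M' i → M = M') : A.ncard ≤ t.card := by
  classical
  rcases A.eq_empty_or_nonempty with rfl | ⟨M₀, hM₀⟩
  · simp
  obtain ⟨i₀, -, -⟩ := hex M₀ hM₀
  have : Nonempty β := ⟨i₀⟩
  choose! l hl hP using hex
  rw [← Set.ncard_coe_finset t]
  exact Set.ncard_le_ncard_of_injOn l (fun M hM => by simpa using hl M hM)
    (fun M hM M' hM' h => hinj M hM M' hM' (l M) (hl M hM) (hP M hM) (h ▸ hP M' hM'))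
    t.finite_toSet

/-- A sum of distinct primes dividing `n` is at most `n`. -/
lemma sum_primeFactors_le {n : ℕ} (hn : n ≠ 0) : ∑ r ∈ n.primeFactors, r ≤ n := by
  have h : ∀ s : Finset ℕ, (∀ r ∈ s, 2 ≤ r) → ∑ r ∈ s, r ≤ ∏ r ∈ s, r := by
    intro s
    induction s using Finset.induction_on with
    | empty => simp
    | insert a s ha ih =>
      intro h
      rw [Finset.sum_insert ha, Finset.prod_insert ha]
      have h1 := ih fun r hr => h r (Finset.mem_insert_of_mem hr)
      have h2 := h a (Finset.mem_insert_self a s)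
      rcases s.eq_empty_or_nonempty with rfl | ⟨b, hb⟩
      · simp
      · have h3 : 2 ≤ ∏ r ∈ s, r :=
          (h b (Finset.mem_insert_of_mem hb)).trans (Nat.le_of_dvd
            (Finset.prod_pos fun r hr => by
              have := h r (Finset.mem_insert_of_mem hr); omega) (Finset.dvd_prod_of_mem _ hb))
        nlinarith
  exact (h _ fun r hr => (Nat.prime_of_mem_primeFactors hr).two_le).trans
    (Nat.le_of_dvd (Nat.pos_of_ne_zero hn) (Nat.prod_primeFactors_dvd n))

section Counting

variable {Γ : Type*} [Group Γ]

/-- If `z ∉ M`, `z ^ r ∈ M` and `r` is prime, then `M` contains exactly the powers of `z` with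
exponent divisible by `r`. -/
lemma zpow_mem_iff_dvd {M : Subgroup Γ} {z : Γ} {r : ℕ} (hr : r.Prime) (hz : z ∉ M)
    (hzr : z ^ r ∈ M) (a : ℤ) : z ^ a ∈ M ↔ (r : ℤ) ∣ a := by
  constructor
  · intro h
    by_contra hnd
    have hc : IsCoprime (r : ℤ) a :=
      ((Nat.prime_iff_prime_int.mp hr).coprime_iff_not_dvd).mpr hnd
    obtain ⟨u, v, huv⟩ := hc
    apply hz
    have : z = (z ^ r) ^ u * (z ^ a) ^ v := by
      rw [← zpow_natCast, ← _root_.zpow_mul, ← _root_.zpow_mul, ← _root_.zpow_add,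
        mul_comm (r : ℤ), mul_comm a, huv, zpow_one]
    rw [this]
    exact M.mul_mem (M.zpow_mem hzr u) (M.zpow_mem h v)
  · rintro ⟨k, rfl⟩
    rw [_root_.zpow_mul, zpow_natCast]
    exact M.zpow_mem hzr k

/-- If `z ∉ M` has a power `z ^ n ∈ M` and `M` has a supplement property with respect to each
subgroup `⟨z ^ r⟩`, then `z ^ r ∈ M` for a prime divisor `r` of `n`. -/
lemma exists_prime_pow_mem {M : Subgroup Γ} {z : Γ} {n : ℕ} (hn : n ≠ 0) (hz : z ∉ M)
    (hzn : z ^ n ∈ M)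
    (hsup : ∀ r : ℕ, z ^ r ∉ M → ∃ k : ℤ, z * ((z ^ r) ^ k) ∈ M) :
    ∃ r ∈ n.primeFactors, z ^ r ∈ M := by
  classical
  have hex : ∃ o : ℕ, 0 < o ∧ o ∣ n ∧ z ^ o ∈ M := ⟨n, Nat.pos_of_ne_zero hn, dvd_rfl, hzn⟩
  obtain ⟨ho, hon, hzo⟩ := Nat.find_spec hex
  set o := Nat.find hex with hodef
  have ho1 : o ≠ 1 := fun h => hz (by rw [h, pow_one] at hzo; exact hzo)
  obtain ⟨r, hr, hro⟩ := Nat.exists_prime_and_dvd ho1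
  refine ⟨r, Nat.mem_primeFactors.mpr ⟨hr, hro.trans hon, hn⟩, ?_⟩
  by_contra hzr
  obtain ⟨k, hk⟩ := hsup r hzr
  obtain ⟨s, hs⟩ := hro
  -- `z ^ s` lies in `M` because `z ≡ z ^ (- r k)` there, contradicting the minimality of `o = r s`
  have hs0 : 0 < s := by
    rcases Nat.eq_zero_or_pos s with h | h
    · rw [h] at hs; omega
    · exact h
  have hzs : z ^ s ∈ M := by
    have h1 : z * (z ^ r) ^ k = z ^ (1 + r * k : ℤ) := by
      rw [← zpow_natCast, ← _root_.zpow_mul, ← _root_.zpow_one_add]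
    rw [h1] at hk
    have h2 : z ^ s = (z ^ (1 + r * k : ℤ)) ^ (s : ℤ) * (z ^ o) ^ (-k) := by
      rw [← zpow_natCast z o, ← zpow_natCast z s, ← _root_.zpow_mul, ← _root_.zpow_mul,
        ← _root_.zpow_add, hs]
      congr 1
      push_cast; ring
    rw [h2]
    exact M.mul_mem (M.zpow_mem hk _) (M.zpow_mem hzo _)
  refine Nat.find_min hex (m := s) ?_ ⟨hs0, (Dvd.intro_left r hs.symm).trans hon, hzs⟩
  rw [← hodef, hs]
  exact lt_mul_of_one_lt_left hs0 hr.one_lt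

/-- A proper supplement: if `M` is maximal and the normal-product decomposition with `⟨c⟩` is
available, every element can be moved into `M` by a power of `c`. -/
lemma exists_mul_zpow_mem {M : Subgroup Γ} (hM : IsCoatom M) {c : Γ} (hc : c ∉ M)
    (hn : (Subgroup.zpowers c).Normal ∨ M.Normal) (g : Γ) : ∃ k : ℤ, g * c ^ k ∈ M := by
  have htop : M ⊔ Subgroup.zpowers c = ⊤ := by
    refine hM.2 _ (lt_of_le_of_ne le_sup_left fun h => hc ?_)
    rw [h]
    exact Subgroup.mem_sup_right (Subgroup.mem_zpowers c)
  have hg : g ∈ M ⊔ Subgroup.zpowers c := htop ▸ Subgroup.mem_top g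
  have : ∃ m ∈ M, ∃ e ∈ Subgroup.zpowers c, m * e = g := by
    rcases hn with h | h
    · exact Subgroup.mem_sup_of_normal_right.mp hg
    · exact Subgroup.mem_sup_of_normal_left.mp hg
  obtain ⟨m, hm, e, ⟨k, rfl⟩, rfl⟩ := this
  refine ⟨-k, ?_⟩
  simpa [mul_assoc] using hm

lemma mk_eq_zpow {N : Subgroup Γ} [N.Normal] {g z : Γ} {i : ℤ} (h : g * z ^ i ∈ N) :
    (g : Γ ⧸ N) = (z : Γ ⧸ N) ^ (-i) := by
  rw [← QuotientGroup.eq_one_iff, QuotientGroup.mk_mul, QuotientGroup.mk_zpow] at h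
  rw [_root_.zpow_neg]
  exact eq_inv_of_mul_eq_one_left h

lemma exists_label {M : Subgroup Γ} {r : ℕ} (hr : r.Prime) (hM : IsCoatom M) {c : Γ} (hc : c ∉ M)
    (hcr : c ^ r ∈ M) (hn : (Subgroup.zpowers c).Normal ∨ M.Normal) (g : Γ) :
    ∃ j ∈ Finset.range r, g * c ^ (j : ℤ) ∈ M := by
  obtain ⟨k, hk⟩ := exists_mul_zpow_mem hM hc hn g
  have hr0 : (r : ℤ) ≠ 0 := by exact_mod_cast hr.ne_zero
  refine ⟨(k % r).toNat, ?_, ?_⟩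
  · have := Int.emod_lt_of_pos k (show (0 : ℤ) < r by exact_mod_cast hr.pos)
    have := Int.emod_nonneg k hr0
    simp only [Finset.mem_range]
    omega
  · rw [Int.toNat_of_nonneg (Int.emod_nonneg k hr0)]
    have h1 := M.mul_mem hk ((zpow_mem_iff_dvd hr hc hcr (k % r - k)).mpr
      ((Int.modEq_iff_dvd).mp (Int.mod_modEq k r).symm))
    rwa [mul_assoc, ← _root_.zpow_add, add_sub_cancel] at h1

/-- Shape of a group `Γ` with a cyclic normal subgroup `⟨d⟩`, abelian quotient, and a subgroup
`E = ⟨d, x⟩` of index at most two whose other coset, if any, is represented by `y`. -/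
structure OuterShape (Γ : Type*) [Group Γ] (n f : ℕ) where
  /-- generator of the cyclic normal subgroup -/
  d : Γ
  /-- generator of `E` modulo `⟨d⟩` -/
  x : Γ
  /-- representative of the coset of `E` other than `E` -/
  y : Γ
  /-- subgroup of index at most two -/
  E : Subgroup Γ
  d_pow : d ^ n = 1
  normal : (Subgroup.zpowers d).Normal
  comm : ∀ g h : Γ, g * h * g⁻¹ * h⁻¹ ∈ Subgroup.zpowers d
  x_mem : x ∈ E
  x_pow : x ^ f ∈ Subgroup.zpowers d
  mem_E : ∀ e ∈ E, ∃ a k : ℤ, e = x ^ a * d ^ k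
  cover : ∀ g, g ∈ E ∨ y⁻¹ * g ∈ E
  y_sq : y ^ 2 ∈ E

namespace OuterShape

variable {n f : ℕ} (O : OuterShape Γ n f)
include O

lemma mem_zpow_d {g : Γ} (h : g ∈ Subgroup.zpowers O.d) {M : Subgroup Γ} (hd : O.d ∈ M) : g ∈ M :=
  (Subgroup.zpowers_le.mpr hd) h

lemma normal_of_mem {M : Subgroup Γ} (hd : O.d ∈ M) : M.Normal := by
  constructor
  intro m hm g
  have := M.mul_mem (O.mem_zpow_d (O.comm g m) hd) hm
  simpa using this

lemma normal_form (g : Γ) : ∃ (ε : ℕ) (a k : ℤ), g = O.y ^ ε * (O.x ^ a * O.d ^ k) := by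
  rcases O.cover g with h | h
  · obtain ⟨a, k, rfl⟩ := O.mem_E g h
    exact ⟨0, a, k, by simp⟩
  · obtain ⟨a, k, hk⟩ := O.mem_E _ h
    exact ⟨1, a, k, by rw [← hk]; simp⟩

/-- A maximal subgroup that is normal with quotient generated by `z` is
determined by the exponents expressing `x`, `y`, `d` through `z`. -/
lemma eq_of_residues {r : ℕ} (hr : r.Prime) {M M' : Subgroup Γ} (hM : M.Normal) (hM' : M'.Normal)
    {z : Γ} (hz : z ∉ M) (hzr : z ^ r ∈ M) (hz' : z ∉ M') (hzr' : z ^ r ∈ M') {i j l : ℤ}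
    (hx : O.x * z ^ i ∈ M) (hx' : O.x * z ^ i ∈ M') (hy : O.y * z ^ j ∈ M)
    (hy' : O.y * z ^ j ∈ M') (hd : O.d * z ^ l ∈ M) (hd' : O.d * z ^ l ∈ M') : M = M' := by
  have key : ∀ N : Subgroup Γ, N.Normal → z ∉ N → z ^ r ∈ N → O.x * z ^ i ∈ N →
      O.y * z ^ j ∈ N → O.d * z ^ l ∈ N → ∀ (ε : ℕ) (a k : ℤ),
      O.y ^ ε * (O.x ^ a * O.d ^ k) ∈ N ↔ (r : ℤ) ∣ -(j * ε + (i * a + l * k)) := by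
    intro N hN h1 h2 hx hy hd ε a k
    rw [← zpow_mem_iff_dvd hr h1 h2, ← QuotientGroup.eq_one_iff, ← QuotientGroup.eq_one_iff]
    simp only [QuotientGroup.mk_mul, QuotientGroup.mk_zpow, QuotientGroup.mk_pow]
    rw [mk_eq_zpow hx, mk_eq_zpow hy, mk_eq_zpow hd, ← zpow_natCast, ← _root_.zpow_mul,
      ← _root_.zpow_mul, ← _root_.zpow_mul, ← _root_.zpow_add, ← _root_.zpow_add]
    rw [show -j * (ε : ℤ) + (-i * a + -l * k) = -(j * ε + (i * a + l * k)) by ring]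
  ext g
  obtain ⟨ε, a, k, rfl⟩ := O.normal_form g
  rw [key M hM hz hzr hx hy hd, key M' hM' hz' hzr' hx' hy' hd']

/-- Twice the exponent of `y` is determined modulo `r` by the exponents of `x` and `d`, because
`y ^ 2` lies in `E`. -/
lemma y_residue {r : ℕ} (hr : r.Prime) {z : Γ} (i l : ℤ) :
    ∃ c : ℤ, ∀ M : Subgroup Γ, M.Normal → z ∉ M → z ^ r ∈ M → O.x * z ^ i ∈ M →
      O.d * z ^ l ∈ M → ∀ j : ℤ, O.y * z ^ j ∈ M → (r : ℤ) ∣ 2 * j - c := by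
  obtain ⟨a, k, hak⟩ := O.mem_E _ O.y_sq
  refine ⟨i * a + l * k, ?_⟩
  intro N hN h1 h2 hx hd j hy
  rw [← dvd_neg, ← zpow_mem_iff_dvd hr h1 h2]
  have h := congrArg (fun g : Γ => (g : Γ ⧸ N)) hak
  simp only [QuotientGroup.mk_mul, QuotientGroup.mk_zpow, QuotientGroup.mk_pow] at h
  rw [mk_eq_zpow hx, mk_eq_zpow hy, mk_eq_zpow hd, ← zpow_natCast, ← _root_.zpow_mul,
    ← _root_.zpow_mul, ← _root_.zpow_mul, ← _root_.zpow_add] at h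
  rw [← QuotientGroup.eq_one_iff, QuotientGroup.mk_zpow,
    show -(2 * j - (i * a + l * k)) = (-j * (2 : ℕ)) - (-i * a + -l * k) by push_cast; ring,
    _root_.zpow_sub, h, mul_inv_cancel]

/-- For an odd prime `r` the element `y` imposes no further choice. -/
lemma y_mem_of_odd {r : ℕ} (hr : r.Prime) (hr2 : r ≠ 2) {M M' : Subgroup Γ} (hM : M.Normal)
    (hM' : M'.Normal) {z : Γ} (hz : z ∉ M) (hzr : z ^ r ∈ M) (hz' : z ∉ M') (hzr' : z ^ r ∈ M')
    {i j j' l : ℤ} (hx : O.x * z ^ i ∈ M) (hx' : O.x * z ^ i ∈ M') (hd : O.d * z ^ l ∈ M)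
    (hd' : O.d * z ^ l ∈ M') (hy : O.y * z ^ j ∈ M) (hy' : O.y * z ^ j' ∈ M') :
    O.y * z ^ j ∈ M' := by
  obtain ⟨c, hc⟩ := O.y_residue hr (z := z) i l
  have h1 := hc M hM hz hzr hx hd j hy
  have h2 := hc M' hM' hz' hzr' hx' hd' j' hy'
  have h3 : (r : ℤ) ∣ 2 * (j - j') := by
    have := dvd_sub h1 h2
    rwa [show 2 * j - c - (2 * j' - c) = 2 * (j - j') by ring] at this
  have hr' := Nat.prime_iff_prime_int.mp hr
  have h4 : (r : ℤ) ∣ j - j' := by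
    refine (hr'.dvd_or_dvd h3).resolve_left fun h => hr2 ?_
    exact (Nat.prime_dvd_prime_iff_eq hr Nat.prime_two).mp (by exact_mod_cast h)
  have h5 := M'.mul_mem hy' ((zpow_mem_iff_dvd hr hz' hzr' (j - j')).mpr h4)
  rwa [mul_assoc, ← _root_.zpow_add, add_sub_cancel] at h5

/-- Maximal subgroups containing `d` but not `x`; for `r` prime, those of index `r`. -/
def above (r : ℕ) : Set (Subgroup Γ) := {M | IsCoatom M ∧ O.d ∈ M ∧ O.x ∉ M ∧ O.x ^ r ∈ M}

/-- Maximal subgroups not containing `d`; for `r` prime, those of index `r`. -/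
def suppl (r : ℕ) : Set (Subgroup Γ) := {M | IsCoatom M ∧ O.d ∉ M ∧ O.d ^ r ∈ M}

lemma ncard_above {r : ℕ} (hr : r.Prime) : (O.above r).ncard ≤ if r = 2 then 2 else 1 := by
  have hxx : ∀ M : Subgroup Γ, O.x * O.x ^ (-1 : ℤ) ∈ M := fun M => by simp
  split_ifs with h2
  · refine (ncard_le_of_label _ (Finset.range r) (fun M j => O.y * O.x ^ (j : ℤ) ∈ M) ?_ ?_).trans
      (by simp [h2])
    · rintro M ⟨hM, hd, hx, hxr⟩
      exact exists_label hr hM hx hxr (Or.inr (O.normal_of_mem hd)) _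
    · rintro M ⟨hM, hd, hx, hxr⟩ M' ⟨hM', hd', hx', hxr'⟩ j - hj hj'
      exact O.eq_of_residues hr (O.normal_of_mem hd) (O.normal_of_mem hd') hx hxr hx' hxr'
        (hxx M) (hxx M') hj hj' (l := 0) (by simpa using hd) (by simpa using hd')
  · refine (ncard_le_of_label _ ({()} : Finset Unit) (fun _ _ => True) ?_ ?_).trans (by simp)
    · intro M _
      exact ⟨(), by simp, trivial⟩
    · rintro M ⟨hM, hd, hx, hxr⟩ M' ⟨hM', hd', hx', hxr'⟩ _ - - -
      obtain ⟨j, -, hj⟩ := exists_label hr hM hx hxr (Or.inr (O.normal_of_mem hd)) O.y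
      obtain ⟨j', -, hj'⟩ := exists_label hr hM' hx' hxr' (Or.inr (O.normal_of_mem hd')) O.y
      have h0 : O.d * O.x ^ (0 : ℤ) ∈ M := by simpa using hd
      have h0' : O.d * O.x ^ (0 : ℤ) ∈ M' := by simpa using hd'
      exact O.eq_of_residues hr (O.normal_of_mem hd) (O.normal_of_mem hd') hx hxr hx' hxr'
        (hxx M) (hxx M') hj (O.y_mem_of_odd hr h2 (O.normal_of_mem hd) (O.normal_of_mem hd') hx hxr
          hx' hxr' (hxx M) (hxx M') h0 h0' hj hj') h0 h0'

lemma conj_d (g : Γ) : ∃ s : ℤ, g * O.d * g⁻¹ = O.d ^ s := by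
  obtain ⟨s, hs⟩ := O.normal.conj_mem _ (Subgroup.mem_zpowers O.d) g
  exact ⟨s, hs.symm⟩

/-- If conjugation by `b` is nontrivial on `⟨d⟩` modulo `d ^ r`, a supplement of `⟨d⟩` is
determined by containing `b`. -/
lemma suppl_le_of_mem {r : ℕ} (hr : r.Prime) {M M' : Subgroup Γ} (hM : M ∈ O.suppl r)
    (hM' : M' ∈ O.suppl r) {b : Γ} {s : ℤ} (hb : b * O.d * b⁻¹ = O.d ^ s)
    (hs : ¬ (r : ℤ) ∣ s - 1) (hbM : b ∈ M) (hbM' : b ∈ M') : M ≤ M' := by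
  obtain ⟨hM, hd, hdr⟩ := hM
  obtain ⟨hM', hd', hdr'⟩ := hM'
  intro m hm
  obtain ⟨k, hk⟩ := exists_mul_zpow_mem hM' hd' (Or.inl O.normal) m⁻¹
  have hk2 : O.d ^ (-k) * m ∈ M' := by simpa using M'.inv_mem hk
  obtain ⟨a, ha⟩ := O.comm b m
  beta_reduce at ha
  have h1 : O.d ^ a ∈ M := by
    rw [ha]
    exact M.mul_mem (M.mul_mem (M.mul_mem hbM hm) (M.inv_mem hbM)) (M.inv_mem hm)
  have h2 := (zpow_mem_iff_dvd hr hd hdr a).mp h1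
  have h3 : b * (O.d ^ (-k) * m) * b⁻¹ * (O.d ^ (-k) * m)⁻¹ ∈ M' :=
    M'.mul_mem (M'.mul_mem (M'.mul_mem hbM' hk2) (M'.inv_mem hbM')) (M'.inv_mem hk2)
  have h4 : b * (O.d ^ (-k) * m) * b⁻¹ * (O.d ^ (-k) * m)⁻¹ = O.d ^ (-k * (s - 1) + a) := by
    have h5 : b * O.d ^ (-k) * b⁻¹ = O.d ^ (s * (-k)) := by
      rw [← conj_zpow, hb, _root_.zpow_mul]
    calc _ = (b * O.d ^ (-k) * b⁻¹) * (b * m * b⁻¹ * m⁻¹) * O.d ^ k := by group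
      _ = _ := by
        rw [h5, ← ha, ← _root_.zpow_add, ← _root_.zpow_add]
        congr 1; ring
  rw [h4, zpow_mem_iff_dvd hr hd' hdr', dvd_add_left h2] at h3
  have h6 := ((Nat.prime_iff_prime_int.mp hr).dvd_or_dvd h3).resolve_right hs
  have h7 := M'.mul_mem (M'.inv_mem ((zpow_mem_iff_dvd hr hd' hdr' _).mpr h6)) hk2
  simpa using h7

lemma suppl_normal {r : ℕ} (hr : r.Prime) {M : Subgroup Γ} (hM : M ∈ O.suppl r)
    (ht : ∀ (b : Γ) (s : ℤ), b * O.d * b⁻¹ = O.d ^ s → (r : ℤ) ∣ s - 1) : M.Normal := by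
  obtain ⟨hM, hd, hdr⟩ := hM
  constructor
  intro m hm g
  obtain ⟨k, hk⟩ := exists_mul_zpow_mem hM hd (Or.inl O.normal) g
  obtain ⟨s, hs⟩ := O.conj_d m⁻¹
  have h1 : m⁻¹ * O.d ^ (-k) * m = O.d ^ (s * (-k)) := by
    have := conj_zpow (i := -k) (a := m⁻¹) (b := O.d)
    rw [hs, ← _root_.zpow_mul, inv_inv] at this
    exact this.symm
  have h2 : g * m * g⁻¹ = (g * O.d ^ k) * (m * ((m⁻¹ * O.d ^ (-k) * m) * O.d ^ k)) *
      (g * O.d ^ k)⁻¹ := by group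
  rw [h2, h1, ← _root_.zpow_add]
  refine M.mul_mem (M.mul_mem hk (M.mul_mem hm ?_)) (M.inv_mem hk)
  rw [zpow_mem_iff_dvd hr hd hdr, show s * -k + k = (s - 1) * (-k) by ring]
  exact (ht _ _ hs).mul_right _

lemma ncard_suppl {r : ℕ} (hr : r.Prime) : (O.suppl r).ncard ≤ 2 * r := by
  by_cases ht : ∀ (b : Γ) (s : ℤ), b * O.d * b⁻¹ = O.d ^ s → (r : ℤ) ∣ s - 1
  · have hdd : ∀ M : Subgroup Γ, O.d * O.d ^ (-1 : ℤ) ∈ M := fun M => by simp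
    by_cases h2 : r = 2
    · refine (ncard_le_of_label _ (Finset.range r ×ˢ Finset.range r)
        (fun M j => O.x * O.d ^ (j.1 : ℤ) ∈ M ∧ O.y * O.d ^ (j.2 : ℤ) ∈ M) ?_ ?_).trans
        (by simp [h2])
      · intro M hM
        obtain ⟨i, hi, hi'⟩ := exists_label hr hM.1 hM.2.1 hM.2.2 (Or.inl O.normal) O.x
        obtain ⟨j, hj, hj'⟩ := exists_label hr hM.1 hM.2.1 hM.2.2 (Or.inl O.normal) O.y
        exact ⟨(i, j), Finset.mem_product.mpr ⟨hi, hj⟩, hi', hj'⟩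
      · rintro M hM M' hM' j - hj hj'
        exact O.eq_of_residues hr (O.suppl_normal hr hM ht) (O.suppl_normal hr hM' ht) hM.2.1
          hM.2.2 hM'.2.1 hM'.2.2 hj.1 hj'.1 hj.2 hj'.2 (hdd M) (hdd M')
    · refine (ncard_le_of_label _ (Finset.range r) (fun M j => O.x * O.d ^ (j : ℤ) ∈ M)
        ?_ ?_).trans (by simp; omega)
      · intro M hM
        exact exists_label hr hM.1 hM.2.1 hM.2.2 (Or.inl O.normal) O.x
      · rintro M hM M' hM' i - hi hi'
        obtain ⟨j, -, hj⟩ := exists_label hr hM.1 hM.2.1 hM.2.2 (Or.inl O.normal) O.y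
        obtain ⟨j', -, hj'⟩ := exists_label hr hM'.1 hM'.2.1 hM'.2.2 (Or.inl O.normal) O.y
        have hN := O.suppl_normal hr hM ht
        have hN' := O.suppl_normal hr hM' ht
        exact O.eq_of_residues hr hN hN' hM.2.1 hM.2.2 hM'.2.1 hM'.2.2 hi hi' hj
          (O.y_mem_of_odd hr h2 hN hN' hM.2.1 hM.2.2 hM'.2.1 hM'.2.2 hi hi' (hdd M) (hdd M')
            hj hj') (hdd M) (hdd M')
  · push Not at ht
    obtain ⟨b, s, hb, hs⟩ := ht
    refine (ncard_le_of_label _ (Finset.range r) (fun M j => b * O.d ^ (j : ℤ) ∈ M)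
        ?_ ?_).trans (by simp; omega)
    · intro M hM
      exact exists_label hr hM.1 hM.2.1 hM.2.2 (Or.inl O.normal) b
    · rintro M hM M' hM' i - hi hi'
      have hb' : (b * O.d ^ (i : ℤ)) * O.d * (b * O.d ^ (i : ℤ))⁻¹ = O.d ^ s := by
        rw [← hb]; group
      exact le_antisymm (O.suppl_le_of_mem hr hM hM' hb' hs hi hi')
        (O.suppl_le_of_mem hr hM' hM hb' hs hi' hi)

lemma cover_coatoms (hn : n ≠ 0) (hf : f ≠ 0) :
    {M : Subgroup Γ | IsCoatom M} ⊆ {O.E} ∪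
      ((⋃ r ∈ f.primeFactors, O.above r) ∪ ⋃ r ∈ n.primeFactors, O.suppl r) := by
  intro M hM
  change IsCoatom M at hM
  by_cases hd : O.d ∈ M
  · by_cases hx : O.x ∈ M
    · left
      have hEM : O.E ≤ M := by
        intro e he
        obtain ⟨a, k, rfl⟩ := O.mem_E e he
        exact M.mul_mem (M.zpow_mem hx a) (M.zpow_mem hd k)
      refine le_antisymm ?_ hEM
      intro m hm
      rcases O.cover m with h | h
      · exact h
      · refine absurd (eq_top_iff.mpr fun g _ => ?_) hM.1
        have hy : O.y ∈ M := by simpa using M.mul_mem hm (M.inv_mem (hEM h))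
        rcases O.cover g with h' | h'
        · exact hEM h'
        · simpa using M.mul_mem hy (hEM h')
    · right; left
      obtain ⟨r, hr, hxr⟩ := exists_prime_pow_mem hf hx (O.mem_zpow_d O.x_pow hd) fun r hr =>
        exists_mul_zpow_mem hM hr (Or.inr (O.normal_of_mem hd)) O.x
      simp only [Set.mem_iUnion]
      exact ⟨r, hr, hM, hd, hx, hxr⟩
  · right; right
    obtain ⟨r, hr, hdr⟩ := exists_prime_pow_mem hn hd (O.d_pow ▸ M.one_mem) fun r hr => by
      refine exists_mul_zpow_mem hM hr (Or.inl ⟨?_⟩) O.d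
      rintro _ ⟨k, rfl⟩ g
      obtain ⟨s, hs⟩ := O.conj_d g
      refine ⟨s * k, ?_⟩
      beta_reduce
      rw [← conj_zpow, ← conj_pow, hs]
      simp only [← zpow_natCast, ← _root_.zpow_mul]
      congr 1; ring
    simp only [Set.mem_iUnion]
    exact ⟨r, hr, hM, hd, hdr⟩

theorem ncard_coatoms_le [Finite Γ] (hn : n ≠ 0) (hf : f ≠ 0) :
    {M : Subgroup Γ | IsCoatom M}.ncard ≤ 2 * n + f.primeFactors.card + 2 := by
  have h1 : (⋃ r ∈ f.primeFactors, O.above r).ncard ≤ f.primeFactors.card + 1 := by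
    refine (Finset.set_ncard_biUnion_le _ _).trans ?_
    refine (Finset.sum_le_sum fun r hr =>
      (O.ncard_above (Nat.prime_of_mem_primeFactors hr)).trans
        (show _ ≤ 1 + if r = 2 then 1 else 0 by split_ifs <;> simp)).trans ?_
    rw [Finset.sum_add_distrib, Finset.sum_ite_eq']
    simp only [Finset.sum_const, smul_eq_mul, mul_one]
    split_ifs <;> omega
  have h2 : (⋃ r ∈ n.primeFactors, O.suppl r).ncard ≤ 2 * n := by
    refine (Finset.set_ncard_biUnion_le _ _).trans ?_
    refine (Finset.sum_le_sum fun r hr =>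
      O.ncard_suppl (Nat.prime_of_mem_primeFactors hr)).trans ?_
    rw [← Finset.mul_sum]
    exact Nat.mul_le_mul_left 2 (sum_primeFactors_le hn)
  have h3 := Set.ncard_le_ncard (O.cover_coatoms hn hf) (Set.toFinite _)
  have h4 := Set.ncard_union_le {O.E}
    ((⋃ r ∈ f.primeFactors, O.above r) ∪ ⋃ r ∈ n.primeFactors, O.suppl r)
  have h5 := Set.ncard_union_le (⋃ r ∈ f.primeFactors, O.above r)
    (⋃ r ∈ n.primeFactors, O.suppl r)
  rw [Set.ncard_singleton] at h4
  omega

end OuterShape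
end Counting

/-! ### Transvections -/

section Transvections

variable {ι : Type*} [Fintype ι] [DecidableEq ι] {F : Type*} [Field F]

/-- The inclusion of the special linear group into the matrices, as a monoid homomorphism. -/
def mat : SpecialLinearGroup ι F →* Matrix ι ι F where
  toFun g := g.1
  map_one' := rfl
  map_mul' _ _ := rfl

/-- The element of the special linear group given by a matrix of determinant one. -/
def slMk (A : Matrix ι ι F) (h : A.det = 1) : SpecialLinearGroup ι F := ⟨A, h⟩

theorem mat_slMk (A : Matrix ι ι F) (h : A.det = 1) : mat (slMk A h) = A := rfl

theorem mat_injective : Function.Injective (mat (ι := ι) (F := F)) := Subtype.val_injective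

/-- The transvection `v ↦ v + (ψ ⬝ᵥ v) • w` attached to a column vector `w` and a row vector `ψ`
with `ψ ⬝ᵥ w = 0`; the identity when `ψ ⬝ᵥ w ≠ 0`. -/
noncomputable def tv (w ψ : ι → F) : SpecialLinearGroup ι F :=
  open Classical in
  if h : ψ ⬝ᵥ w = 0 then
    slMk (1 + vecMulVec w ψ) (by
      rw [vecMulVec_eq Unit, det_one_add_replicateCol_mul_replicateRow, h, add_zero])
  else 1

theorem coe_tv {w ψ : ι → F} (h : ψ ⬝ᵥ w = 0) :
    mat (tv w ψ) = 1 + vecMulVec w ψ := by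
  rw [tv, dif_pos h, mat_slMk]

theorem tv_mul_tv_right {w ψ ψ' : ι → F} (h : ψ ⬝ᵥ w = 0) (h' : ψ' ⬝ᵥ w = 0) :
    tv w ψ * tv w ψ' = tv w (ψ + ψ') := by
  apply mat_injective
  rw [map_mul, coe_tv h, coe_tv h', coe_tv (by simp [add_dotProduct, h, h'])]
  simp only [add_mul, mul_add, one_mul, mul_one, vecMulVec_mul_vecMulVec, h, zero_smul,
    vecMulVec_zero, vecMulVec_add]
  abel

theorem tv_mul_tv_left {w w' ψ : ι → F} (h : ψ ⬝ᵥ w = 0) (h' : ψ ⬝ᵥ w' = 0) :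
    tv w ψ * tv w' ψ = tv (w + w') ψ := by
  apply mat_injective
  rw [map_mul, coe_tv h, coe_tv h', coe_tv (by simp [dotProduct_add, h, h'])]
  simp only [add_mul, mul_add, one_mul, mul_one, vecMulVec_mul_vecMulVec, h', zero_smul,
    vecMulVec_zero, add_vecMulVec]
  abel

@[simp] theorem tv_zero_right (w : ι → F) : tv w 0 = 1 := by
  apply mat_injective; rw [coe_tv (by simp)]; simp

@[simp] theorem tv_zero_left (ψ : ι → F) : tv 0 ψ = 1 := by
  apply mat_injective; rw [coe_tv (by simp)]; simp

theorem tv_inv_right {w ψ : ι → F} (h : ψ ⬝ᵥ w = 0) : (tv w ψ)⁻¹ = tv w (-ψ) := by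
  rw [inv_eq_iff_mul_eq_one, tv_mul_tv_right h (by simp [h])]; simp

theorem tv_inv_left {w ψ : ι → F} (h : ψ ⬝ᵥ w = 0) : (tv w ψ)⁻¹ = tv (-w) ψ := by
  rw [inv_eq_iff_mul_eq_one, tv_mul_tv_left h (by simp [h])]; simp

theorem tv_smul_left {w ψ : ι → F} (h : ψ ⬝ᵥ w = 0) (c : F) : tv (c • w) ψ = tv w (c • ψ) := by
  apply mat_injective
  rw [coe_tv (by simp [h]), coe_tv (by simp [h]), smul_vecMulVec, vecMulVec_smul]

theorem coe_mul_coe_inv (h : SpecialLinearGroup ι F) :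
    mat h * mat h⁻¹ = 1 := by
  rw [← map_mul, mul_inv_cancel, map_one]

theorem coe_inv_mul_coe (h : SpecialLinearGroup ι F) :
    mat h⁻¹ * mat h = 1 := by
  rw [← map_mul, inv_mul_cancel, map_one]

theorem dot_conj (h : SpecialLinearGroup ι F) (w ψ : ι → F) :
    (ψ ᵥ* mat h⁻¹) ⬝ᵥ (mat h *ᵥ w)
      = ψ ⬝ᵥ w := by
  rw [dotProduct_mulVec, vecMul_vecMul, coe_inv_mul_coe, vecMul_one]

theorem conj_tv (h : SpecialLinearGroup ι F) {w ψ : ι → F} (hw : ψ ⬝ᵥ w = 0) :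
    h * tv w ψ * h⁻¹ = tv (mat h *ᵥ w)
      (ψ ᵥ* mat h⁻¹) := by
  apply mat_injective
  rw [map_mul, map_mul, coe_tv hw,
    coe_tv (by rw [dot_conj, hw]), mul_add, add_mul, mul_one, coe_mul_coe_inv, mul_vecMulVec,
    vecMulVec_mul]

theorem mulVec_ne_zero (h : SpecialLinearGroup ι F) {w : ι → F} (hw : w ≠ 0) :
    mat h *ᵥ w ≠ 0 := by
  intro h0
  apply hw
  rw [← one_mulVec w, ← coe_inv_mul_coe h, ← mulVec_mulVec, h0, mulVec_zero]

theorem vecMul_ne_zero (h : SpecialLinearGroup ι F) {w : ι → F} (hw : w ≠ 0) :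
    w ᵥ* mat h ≠ 0 := by
  intro h0
  apply hw
  rw [← vecMul_one w, ← coe_mul_coe_inv h, ← vecMul_vecMul, h0, zero_vecMul]

omit [Fintype ι] [DecidableEq ι] in
/-- Proportionality of the two factors of a nonzero rank-one matrix. -/
theorem vecMulVec_eq_iff {w w' ψ ψ' : ι → F} (hw : w ≠ 0) (hψ : ψ ≠ 0)
    (h : vecMulVec w ψ = vecMulVec w' ψ') :
    ∃ c : F, c ≠ 0 ∧ w' = c • w ∧ ψ = c • ψ' := by
  obtain ⟨i, hi⟩ := Function.ne_iff.mp hw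
  obtain ⟨j, hj⟩ := Function.ne_iff.mp hψ
  have e : ∀ a b, w a * ψ b = w' a * ψ' b := fun a b => by
    have := congrFun (congrFun h a) b
    simpa [vecMulVec_apply] using this
  simp only [Pi.zero_apply] at hi hj
  have hij : w' i * ψ' j ≠ 0 := by rw [← e]; exact mul_ne_zero hi hj
  have h1 : w' i ≠ 0 := left_ne_zero_of_mul hij
  have h2 : ψ' j ≠ 0 := right_ne_zero_of_mul hij
  refine ⟨ψ j / ψ' j, div_ne_zero hj h2, ?_, ?_⟩
  · ext a
    simp only [Pi.smul_apply, smul_eq_mul]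
    field_simp
    linear_combination -(e a j)
  · ext b
    simp only [Pi.smul_apply, smul_eq_mul]
    have e1 := e i b
    have e2 := e i j
    field_simp
    apply mul_left_cancel₀ hi
    linear_combination ψ' j * e1 - ψ' b * e2

theorem tv_eq_tv {w w' ψ ψ' : ι → F} (h : ψ ⬝ᵥ w = 0) (h' : ψ' ⬝ᵥ w' = 0) (hw : w ≠ 0)
    (hψ : ψ ≠ 0) (e : tv w ψ = tv w' ψ') :
    ∃ c : F, c ≠ 0 ∧ w' = c • w ∧ ψ = c • ψ' := by
  have := congrArg mat e
  simp only [coe_tv h, coe_tv h', add_right_inj] at this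
  exact vecMulVec_eq_iff hw hψ this

theorem tv_eq_tv_right {w ψ ψ' : ι → F} (h : ψ ⬝ᵥ w = 0) (h' : ψ' ⬝ᵥ w = 0) (hw : w ≠ 0)
    (e : tv w ψ = tv w ψ') : ψ = ψ' := by
  obtain ⟨i, hi⟩ := Function.ne_iff.mp hw
  have := congrArg mat e
  simp only [coe_tv h, coe_tv h', add_right_inj] at this
  ext b
  have := congrFun (congrFun this i) b
  simpa [vecMulVec_apply, show w i ≠ 0 from hi] using this

theorem tv_ne_one {w ψ : ι → F} (h : ψ ⬝ᵥ w = 0) (hw : w ≠ 0) (hψ : ψ ≠ 0) : tv w ψ ≠ 1 := by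
  intro e
  exact hψ (tv_eq_tv_right h (by simp) hw (e.trans (tv_zero_right w).symm))

/-- The group of all transvections with centre `w`. -/
def Cen (w : ι → F) : Subgroup (SpecialLinearGroup ι F) where
  carrier := {g | ∃ ψ : ι → F, ψ ⬝ᵥ w = 0 ∧ g = tv w ψ}
  one_mem' := ⟨0, by simp, by simp⟩
  mul_mem' := by
    rintro _ _ ⟨ψ, h, rfl⟩ ⟨ψ', h', rfl⟩
    exact ⟨ψ + ψ', by simp [add_dotProduct, h, h'], tv_mul_tv_right h h'⟩
  inv_mem' := by
    rintro _ ⟨ψ, h, rfl⟩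
    exact ⟨-ψ, by simp [h], tv_inv_right h⟩

/-- The group of all transvections with axis `ψ = 0`. -/
def Hyp (ψ : ι → F) : Subgroup (SpecialLinearGroup ι F) where
  carrier := {g | ∃ w : ι → F, ψ ⬝ᵥ w = 0 ∧ g = tv w ψ}
  one_mem' := ⟨0, by simp, by simp⟩
  mul_mem' := by
    rintro _ _ ⟨w, h, rfl⟩ ⟨w', h', rfl⟩
    exact ⟨w + w', by simp [dotProduct_add, h, h'], tv_mul_tv_left h h'⟩
  inv_mem' := by
    rintro _ ⟨w, h, rfl⟩
    exact ⟨-w, by simp [h], tv_inv_left h⟩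

theorem tv_mem_Cen {w ψ : ι → F} (h : ψ ⬝ᵥ w = 0) : tv w ψ ∈ Cen w := ⟨ψ, h, rfl⟩

theorem tv_mem_Hyp {w ψ : ι → F} (h : ψ ⬝ᵥ w = 0) : tv w ψ ∈ Hyp ψ := ⟨w, h, rfl⟩

theorem tv_pow {w ψ : ι → F} (h : ψ ⬝ᵥ w = 0) (k : ℕ) : tv w ψ ^ k = tv w ((k : F) • ψ) := by
  induction k with
  | zero => simp
  | succ k ih =>
    rw [pow_succ, ih, tv_mul_tv_right (by simp [h]) h]
    congr 1
    push_cast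
    rw [add_smul, one_smul]

variable {p : ℕ} [CharP F p]

theorem tv_pow_char {w ψ : ι → F} (h : ψ ⬝ᵥ w = 0) : tv w ψ ^ p = 1 := by
  rw [tv_pow h, CharP.cast_eq_zero, zero_smul, tv_zero_right]

theorem isPGroup_Cen (w : ι → F) : IsPGroup p (Cen w) := by
  rintro ⟨_, ψ, h, rfl⟩
  exact ⟨1, Subtype.ext (by simpa using tv_pow_char h)⟩

theorem isPGroup_Hyp (ψ : ι → F) : IsPGroup p (Hyp ψ) := by
  rintro ⟨_, w, h, rfl⟩
  exact ⟨1, Subtype.ext (by simpa using tv_pow_char h)⟩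

theorem card_Cen {w : ι → F} (hw : w ≠ 0) :
    Nat.card (Cen w) = Nat.card {ψ : ι → F // ψ ⬝ᵥ w = 0} := by
  refine (Nat.card_eq_of_bijective
    (fun ψ : {ψ : ι → F // ψ ⬝ᵥ w = 0} => (⟨tv w ψ.1, tv_mem_Cen ψ.2⟩ : Cen w)) ⟨?_, ?_⟩).symm
  · intro a b e
    exact Subtype.ext (tv_eq_tv_right a.2 b.2 hw (congrArg Subtype.val e))
  · rintro ⟨_, ψ, h, rfl⟩
    exact ⟨⟨ψ, h⟩, rfl⟩

theorem tv_eq_tv_left {w w' ψ : ι → F} (h : ψ ⬝ᵥ w = 0) (h' : ψ ⬝ᵥ w' = 0) (hψ : ψ ≠ 0)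
    (e : tv w ψ = tv w' ψ) : w = w' := by
  obtain ⟨i, hi⟩ := Function.ne_iff.mp hψ
  have := congrArg mat e
  simp only [coe_tv h, coe_tv h', add_right_inj] at this
  ext b
  have := congrFun (congrFun this b) i
  simpa [vecMulVec_apply, show ψ i ≠ 0 from hi] using this

theorem card_Hyp {ψ : ι → F} (hψ : ψ ≠ 0) :
    Nat.card (Hyp ψ) = Nat.card {w : ι → F // ψ ⬝ᵥ w = 0} := by
  refine (Nat.card_eq_of_bijective
    (fun w : {w : ι → F // ψ ⬝ᵥ w = 0} => (⟨tv w.1 ψ, tv_mem_Hyp w.2⟩ : Hyp ψ)) ⟨?_, ?_⟩).symm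
  · intro a b e
    exact Subtype.ext (tv_eq_tv_left a.2 b.2 hψ (congrArg Subtype.val e))
  · rintro ⟨_, w, h, rfl⟩
    exact ⟨⟨w, h⟩, rfl⟩

theorem card_perp [Finite F] {w : ι → F} (hw : w ≠ 0) :
    Nat.card {ψ : ι → F // w ⬝ᵥ ψ = 0} = Nat.card F ^ (Fintype.card ι - 1) := by
  let ℓ : (ι → F) →ₗ[F] F :=
    { toFun := fun ψ => w ⬝ᵥ ψ
      map_add' := fun a b => by simp [dotProduct_add]
      map_smul' := fun c a => by simp }
  have hℓ : Function.Surjective ℓ := by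
    obtain ⟨i, hi⟩ := Function.ne_iff.mp hw
    intro c
    refine ⟨Pi.single i (c / w i), ?_⟩
    simp only [Pi.zero_apply] at hi
    simp only [ℓ, LinearMap.coe_mk, AddHom.coe_mk, dotProduct_single]
    field_simp
  have h1 := LinearMap.finrank_range_add_finrank_ker ℓ
  rw [LinearMap.range_eq_top.mpr hℓ, finrank_top, Module.finrank_self,
    Module.finrank_fintype_fun_eq_card] at h1
  have h2 : Nat.card (LinearMap.ker ℓ) = Nat.card F ^ Module.finrank F (LinearMap.ker ℓ) :=
    Module.natCard_eq_pow_finrank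
  rw [show Fintype.card ι - 1 = Module.finrank F (LinearMap.ker ℓ) by omega, ← h2]
  rfl

theorem card_Hyp_eq_card_Cen [Finite F] {w ψ : ι → F} (hw : w ≠ 0) (hψ : ψ ≠ 0) :
    Nat.card (Hyp ψ) = Nat.card (Cen w) := by
  rw [card_Hyp hψ, card_Cen hw, card_perp hψ, ← card_perp hw]
  simp only [dotProduct_comm]

end Transvections

/-! ### Flags and Sylow subgroups -/

section FixedVectors

variable {ι : Type*} [Fintype ι] [DecidableEq ι] {F : Type*} [Field F]

/-- A vector annihilated by everything that annihilates `w ≠ 0` is a multiple of `w`. -/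
theorem exists_smul_of_perp {w u : ι → F} (hw : w ≠ 0)
    (h : ∀ φ : ι → F, φ ⬝ᵥ w = 0 → φ ⬝ᵥ u = 0) : ∃ c : F, u = c • w := by
  obtain ⟨i, hi⟩ := Function.ne_iff.mp hw
  simp only [Pi.zero_apply] at hi
  refine ⟨u i / w i, ?_⟩
  ext j
  have := h (Pi.single j (w i) - Pi.single i (w j)) (by
    simp only [sub_dotProduct, single_dotProduct]; ring)
  simp only [sub_dotProduct, single_dotProduct] at this
  simp only [Pi.smul_apply, smul_eq_mul]
  field_simp
  linear_combination this

theorem mat_tv_mulVec {w ψ : ι → F} (h : ψ ⬝ᵥ w = 0) (v : ι → F) :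
    mat (tv w ψ) *ᵥ v = v + (ψ ⬝ᵥ v) • w := by
  rw [coe_tv h, add_mulVec, one_mulVec, vecMulVec_mulVec]
  simp

theorem vecMul_mat_tv {w ψ : ι → F} (h : ψ ⬝ᵥ w = 0) (φ : ι → F) :
    φ ᵥ* mat (tv w ψ) = φ + (φ ⬝ᵥ w) • ψ := by
  rw [coe_tv h, vecMul_add, vecMul_one, vecMul_vecMulVec]

theorem vecMul_mat_tv_inv {w ψ : ι → F} (h : ψ ⬝ᵥ w = 0) (φ : ι → F) :
    φ ᵥ* mat (tv w ψ)⁻¹ = φ - (φ ⬝ᵥ w) • ψ := by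
  rw [tv_inv_right h, vecMul_mat_tv (by simp [h]), smul_neg, sub_eq_add_neg]

variable {p : ℕ} [hp : Fact p.Prime] [CharP F p]

include hp in
/-- A finite `p`-group acting linearly in characteristic `p` has a nonzero fixed vector. -/
theorem exists_fixed_vector [Finite F] [Nonempty ι] {P : Type*} [Group P] [Finite P]
    (hP : IsPGroup p P) (ρ : P →* Matrix ι ι F) : ∃ u : ι → F, u ≠ 0 ∧ ∀ g, ρ g *ᵥ u = u := by
  let _ : MulAction P (ι → F) :=
    { smul := fun g v => ρ g *ᵥ v
      one_smul := fun v => by change ρ 1 *ᵥ v = v; rw [map_one, one_mulVec]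
      mul_smul := fun g h v => by
        change ρ (g * h) *ᵥ v = ρ g *ᵥ (ρ h *ᵥ v); rw [map_mul, mulVec_mulVec] }
  have h1 : p ∣ Nat.card (ι → F) := by
    rw [Nat.card_fun]
    refine dvd_pow ?_ Nat.card_pos.ne'
    have := Fintype.ofFinite F
    obtain ⟨n, -, hn⟩ := FiniteField.card F p
    rw [Nat.card_eq_fintype_card, hn]
    exact dvd_pow_self p n.ne_zero
  obtain ⟨u, hu, hu0⟩ := hP.exists_fixed_point_of_prime_dvd_card_of_fixed_point (ι → F) h1
    (a := 0) (fun g => mulVec_zero _)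
  exact ⟨u, hu0.symm, fun g => hu g⟩

/-- A Sylow subgroup `R` of the special linear group which contains the root groups `Cen w` and
`Hyp ψ` and stabilizes the vector `w` and the covector `ψ`. -/
structure IsFlagSylow (w ψ : ι → F) (R : Sylow p (SpecialLinearGroup ι F)) : Prop where
  cen_le : Cen w ≤ R
  hyp_le : Hyp ψ ≤ R
  mulVec_eq : ∀ r ∈ R, mat r *ᵥ w = w
  vecMul_eq : ∀ r ∈ R, ψ ᵥ* mat r = ψ

include hp in
theorem exists_isFlagSylow [Finite F] {w ψ : ι → F} (hw : w ≠ 0) (hψ : ψ ≠ 0)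
    (h : ψ ⬝ᵥ w = 0) : ∃ R : Sylow p (SpecialLinearGroup ι F), IsFlagSylow w ψ R := by
  have hne : Nonempty ι := by
    obtain ⟨i, -⟩ := Function.ne_iff.mp hw
    exact ⟨i⟩
  have hfin : Finite (SpecialLinearGroup ι F) := Finite.of_injective _ mat_injective
  have hnorm : Hyp ψ ≤ Subgroup.normalizer (Cen w : Set (SpecialLinearGroup ι F)) := by
    have key : ∀ g ∈ Hyp ψ, ∀ x ∈ Cen w, g * x * g⁻¹ ∈ Cen w := by
      rintro _ ⟨w', hw', rfl⟩ _ ⟨φ, hφ, rfl⟩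
      have e : mat (tv w' ψ) *ᵥ w = w := by rw [mat_tv_mulVec hw', h, zero_smul, add_zero]
      have := dot_conj (tv w' ψ) w φ
      rw [conj_tv _ hφ]
      rw [e] at this ⊢
      exact tv_mem_Cen (this.trans hφ)
    intro g hg
    rw [Subgroup.mem_normalizer_iff]
    refine fun x => ⟨fun hx => key g hg x hx, fun hx => ?_⟩
    have := key g⁻¹ (inv_mem hg) _ hx
    simpa [mul_assoc] using this
  obtain ⟨R, hR⟩ := (IsPGroup.to_sup_of_normal_right' (isPGroup_Hyp (p := p) ψ)
    (isPGroup_Cen (p := p) w) hnorm).exists_le_sylow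
  have hC : Cen w ≤ R := le_sup_right.trans hR
  have hH : Hyp ψ ≤ R := le_sup_left.trans hR
  refine ⟨R, hC, hH, ?_, ?_⟩
  · obtain ⟨u, hu0, hu⟩ := exists_fixed_vector R.isPGroup'
      ((mat (ι := ι) (F := F)).comp (R : Subgroup (SpecialLinearGroup ι F)).subtype)
    obtain ⟨c, hc⟩ : ∃ c : F, u = c • w := by
      refine exists_smul_of_perp hw fun φ hφ => ?_
      have := hu ⟨tv w φ, hC (tv_mem_Cen hφ)⟩
      simp only [MonoidHom.comp_apply, Subgroup.coe_subtype, mat_tv_mulVec hφ] at this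
      simpa [hw] using this
    have hc0 : c ≠ 0 := by rintro rfl; simp [hc] at hu0
    intro r hr
    have := hu ⟨r, hr⟩
    simp only [MonoidHom.comp_apply, Subgroup.coe_subtype, hc, mulVec_smul] at this
    exact smul_right_injective _ hc0 this
  · let ρ : SpecialLinearGroup ι F →* Matrix ι ι F :=
      { toFun := fun g => (mat g⁻¹)ᵀ
        map_one' := by simp
        map_mul' := fun a b => by simp }
    obtain ⟨u, hu0, hu⟩ := exists_fixed_vector R.isPGroup'
      (ρ.comp (R : Subgroup (SpecialLinearGroup ι F)).subtype)
    have hu' : ∀ r ∈ R, u ᵥ* mat r = u := by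
      intro r hr
      have := hu ⟨r⁻¹, inv_mem hr⟩
      simpa [ρ, mulVec_transpose] using this
    obtain ⟨c, hc⟩ : ∃ c : F, u = c • ψ := by
      refine exists_smul_of_perp hψ fun v hv => ?_
      rw [dotProduct_comm] at hv
      have := hu' _ (hH (tv_mem_Hyp hv))
      rw [vecMul_mat_tv hv] at this
      rw [dotProduct_comm]
      simpa [hψ] using this
    have hc0 : c ≠ 0 := by rintro rfl; simp [hc] at hu0
    intro r hr
    have := hu' r hr
    rw [hc, smul_vecMul] at this
    exact smul_right_injective _ hc0 this

/-- The common centralizer of `Cen w` and `Hyp ψ` in the stabilizer of `w` and `ψ` is the root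
group `{tv w (c • ψ)}`. -/
theorem eq_tv_of_commute {w ψ : ι → F} (hw : w ≠ 0) (hψ : ψ ≠ 0) (h : ψ ⬝ᵥ w = 0)
    {z : SpecialLinearGroup ι F} (hz : mat z *ᵥ w = w) (hz' : ψ ᵥ* mat z = ψ)
    (hC : ∀ x ∈ Cen w, z * x = x * z) (hH : ∀ x ∈ Hyp ψ, z * x = x * z) :
    ∃ c : F, z = tv w (c • ψ) := by
  have hz'' : ψ ᵥ* mat z⁻¹ = ψ := by
    conv_lhs => rw [← hz']
    rw [vecMul_vecMul, coe_mul_coe_inv, vecMul_one]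
  have h1 : ∀ φ : ι → F, φ ⬝ᵥ w = 0 → φ ᵥ* mat z = φ := by
    intro φ hφ
    have e := conj_tv z hφ
    rw [hC _ (tv_mem_Cen hφ), mul_inv_cancel_right, hz] at e
    have d := dot_conj z w φ
    rw [hz, hφ] at d
    have := tv_eq_tv_right hφ d hw e
    conv_lhs => rw [this]
    rw [vecMul_vecMul, coe_inv_mul_coe, vecMul_one]
  have h2 : ∀ v : ι → F, ψ ⬝ᵥ v = 0 → mat z *ᵥ v = v := by
    intro v hv
    have e := conj_tv z hv
    rw [hH _ (tv_mem_Hyp hv), mul_inv_cancel_right, hz''] at e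
    have d := dot_conj z v ψ
    rw [hz'', hv] at d
    exact (tv_eq_tv_left hv d hψ e).symm
  have h3 : ∀ v : ι → F, ∃ c : F, mat z *ᵥ v - v = c • w := by
    intro v
    refine exists_smul_of_perp hw fun φ hφ => ?_
    rw [dotProduct_sub, dotProduct_mulVec, h1 φ hφ, sub_self]
  choose a ha using fun j => h3 (Pi.single j 1)
  have hz3 : mat z = 1 + vecMulVec w a := by
    ext i j
    have := congrFun (ha j) i
    simp only [mulVec_single_one, Pi.sub_apply, Pi.smul_apply, smul_eq_mul, col_apply] at this
    rw [Matrix.add_apply, vecMulVec_apply, one_apply]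
    rw [Pi.single_apply] at this
    linear_combination this
  obtain ⟨c, hc⟩ : ∃ c : F, a = c • ψ := by
    refine exists_smul_of_perp hψ fun v hv => ?_
    rw [dotProduct_comm] at hv ⊢
    have := h2 v hv
    rw [hz3, add_mulVec, one_mulVec, vecMulVec_mulVec] at this
    simpa [hw] using this
  refine ⟨c, mat_injective ?_⟩
  rw [coe_tv (by simp [h]), hz3, hc]

end FixedVectors

section PElements

variable {ι : Type*} [Fintype ι] [DecidableEq ι] {F : Type*} [Field F]
variable {p : ℕ} [hp : Fact p.Prime] [CharP F p]
variable {G : Type*} [Group G] {π : SpecialLinearGroup ι F →* G}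

include hp in
/-- The centre of the special linear group has no elements of order `p`, so `p`-elements are
determined by their image modulo the centre. -/
theorem eq_of_map_eq (hker : ∀ g, π g = 1 ↔ g ∈ Subgroup.center (SpecialLinearGroup ι F))
    {r t : SpecialLinearGroup ι F} (hr : ∃ k : ℕ, r ^ p ^ k = 1) (ht : ∃ k : ℕ, t ^ p ^ k = 1)
    (e : π r = π t) : r = t := by
  obtain ⟨k, hk⟩ := hr
  obtain ⟨m, hm⟩ := ht
  have hs : t⁻¹ * r ∈ Subgroup.center (SpecialLinearGroup ι F) := by
    rw [← hker, map_mul, map_inv, e, inv_mul_cancel]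
  obtain ⟨s, hsr⟩ : ∃ s, s = t⁻¹ * r := ⟨_, rfl⟩
  rw [← hsr] at hs
  have hr' : r = t * s := by rw [hsr, mul_inv_cancel_left]
  have hcomm : Commute t s := (Subgroup.mem_center_iff.mp hs t)
  have hpow : s ^ p ^ (k + m) = 1 := by
    have h1 : r ^ p ^ (k + m) = 1 := by rw [pow_add, pow_mul, hk, one_pow]
    have h2 : t ^ p ^ (k + m) = 1 := by rw [add_comm, pow_add, pow_mul, hm, one_pow]
    rw [hr', hcomm.mul_pow, h2, one_mul] at h1
    exact h1
  obtain ⟨a, -, ha⟩ := Matrix.SpecialLinearGroup.mem_center_iff.mp hs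
  change scalar ι a = mat s at ha
  rw [hr']
  have : s = 1 := by
    apply mat_injective
    rcases isEmpty_or_nonempty ι with hι | ⟨⟨i⟩⟩
    · exact Subsingleton.elim _ _
    have h1 : a ^ p ^ (k + m) = 1 := by
      have := congrArg mat hpow
      rw [map_pow, ← ha, ← map_pow, map_one] at this
      have := congrFun (congrFun this i) i
      simpa using this
    have h2 : a - 1 = 0 := by
      refine pow_eq_zero_iff (n := p ^ (k + m)) (pow_ne_zero _ hp.out.ne_zero) |>.mp ?_
      rw [sub_pow_char_pow, h1, one_pow, sub_self]
    rw [← ha, sub_eq_zero.mp h2, map_one, map_one]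
  rw [this, mul_one]

include hp in
theorem commute_of_map (hker : ∀ g, π g = 1 ↔ g ∈ Subgroup.center (SpecialLinearGroup ι F))
    {r t : SpecialLinearGroup ι F} (ht : ∃ k : ℕ, t ^ p ^ k = 1)
    (e : π t * π r = π r * π t) : t * r = r * t := by
  have h1 : r * t * r⁻¹ = t := by
    refine eq_of_map_eq hker ?_ ht ?_
    · obtain ⟨k, hk⟩ := ht
      exact ⟨k, by rw [conj_pow, hk, mul_one, mul_inv_cancel]⟩
    · rw [map_mul, map_mul, map_inv, ← e, mul_inv_cancel_right]
  conv_lhs => rw [← h1]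
  rw [inv_mul_cancel_right]

omit hp in
theorem pElement_of_mem {P : Subgroup G} (hP : IsPGroup p P) {x : G} (hx : x ∈ P) :
    ∃ k : ℕ, x ^ p ^ k = 1 := by
  obtain ⟨k, hk⟩ := hP ⟨x, hx⟩
  exact ⟨k, by simpa using congrArg Subtype.val hk⟩

end PElements

/-! ### Almost simple groups covered by the special linear group -/

section Cover

variable {ι : Type*} [Fintype ι] [DecidableEq ι] {F : Type*} [Field F]
variable {G : Type*} [Group G]

/-- `π` presents `G` as an almost simple group with socle `PSL`: the kernel of `π` is the centre
of the special linear group, and its image is normal in `G` with trivial centralizer. -/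
structure IsSLCover (π : SpecialLinearGroup ι F →* G) : Prop where
  ker : ∀ g, π g = 1 ↔ g ∈ Subgroup.center (SpecialLinearGroup ι F)
  normal : π.range.Normal
  cent : Subgroup.centralizer (π.range : Set G) = ⊥

/-- Conjugation of subgroups. -/
def cj (g : G) (A : Subgroup G) : Subgroup G := A.map (MulAut.conj g).toMonoidHom

theorem mem_cj {g x : G} {A : Subgroup G} : x ∈ cj g A ↔ g⁻¹ * x * g ∈ A := by
  simp only [cj, Subgroup.mem_map, MulEquiv.coe_toMonoidHom, MulAut.conj_apply]
  constructor
  · rintro ⟨y, hy, rfl⟩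
    simpa [mul_assoc] using hy
  · intro h
    exact ⟨_, h, by group⟩

theorem conj_mem_cj {g x : G} {A : Subgroup G} : g * x * g⁻¹ ∈ cj g A ↔ x ∈ A := by
  rw [mem_cj]; simp [mul_assoc]

theorem cj_mul (g h : G) (A : Subgroup G) : cj (g * h) A = cj g (cj h A) := by
  ext x; simp [mem_cj, mul_assoc]

@[simp] theorem cj_one (A : Subgroup G) : cj 1 A = A := by
  ext x; simp [mem_cj]

theorem cj_inv_eq_iff {g : G} {A B : Subgroup G} : cj g⁻¹ A = B ↔ A = cj g B := by
  constructor
  · rintro rfl; rw [← cj_mul]; simp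
  · rintro rfl; rw [← cj_mul]; simp

theorem cj_injective (g : G) : Function.Injective (cj g) := fun A B h => by
  have := congrArg (cj g⁻¹) h
  simpa [← cj_mul] using this

theorem card_cj (g : G) (A : Subgroup G) : Nat.card (cj g A) = Nat.card A :=
  (Nat.card_congr (A.equivMapOfInjective _ (MulAut.conj g).injective).toEquiv).symm

variable {π : SpecialLinearGroup ι F →* G}

theorem cj_map (h : SpecialLinearGroup ι F) (A : Subgroup (SpecialLinearGroup ι F)) :
    cj (π h) (A.map π) = (cj h A).map π := by
  simp only [cj, Subgroup.map_map]
  congr 1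
  ext x
  simp

theorem cj_Hyp (h : SpecialLinearGroup ι F) (ψ : ι → F) :
    cj h (Hyp ψ) = Hyp (ψ ᵥ* mat h⁻¹) := by
  ext x
  rw [mem_cj]
  constructor
  · rintro ⟨w, hw, e⟩
    refine ⟨mat h *ᵥ w, by rw [dot_conj, hw], ?_⟩
    rw [← conj_tv h hw, ← e]; group
  · rintro ⟨w, hw, rfl⟩
    have := conj_tv h⁻¹ hw
    have d := dot_conj h⁻¹ w (ψ ᵥ* mat h⁻¹)
    rw [inv_inv] at this d
    rw [this]
    rw [vecMul_vecMul, coe_inv_mul_coe, vecMul_one] at d ⊢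
    exact tv_mem_Hyp (by rw [d, hw])

theorem Hyp_smul {ψ : ι → F} {c : F} (hc : c ≠ 0) : Hyp (c • ψ) = Hyp ψ := by
  ext x
  constructor
  · rintro ⟨w, hw, rfl⟩
    have hw' : ψ ⬝ᵥ w = 0 := by simpa [hc] using hw
    rw [← tv_smul_left hw']
    exact tv_mem_Hyp (by simp [hw'])
  · rintro ⟨w, hw, rfl⟩
    have hw' : (c • ψ) ⬝ᵥ (c⁻¹ • w) = 0 := by simp [hw]
    have := tv_mem_Hyp hw'
    rwa [tv_smul_left (by simp [hw]), smul_smul, inv_mul_cancel₀ hc, one_smul] at this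

theorem Cen_smul {w : ι → F} {c : F} (hc : c ≠ 0) : Cen (c • w) = Cen w := by
  ext x
  constructor
  · rintro ⟨ψ, hψ, rfl⟩
    have hw' : ψ ⬝ᵥ w = 0 := by simpa [hc] using hψ
    rw [tv_smul_left hw']
    exact tv_mem_Cen (by simp [hw'])
  · rintro ⟨ψ, hψ, rfl⟩
    have hw' : (c⁻¹ • ψ) ⬝ᵥ (c • w) = 0 := by simp [hψ]
    have := tv_mem_Cen hw'
    rwa [tv_smul_left (by simp [hψ]), smul_smul, mul_inv_cancel₀ hc, one_smul] at this

variable {p : ℕ} [hp : Fact p.Prime] [CharP F p]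

omit hp in
theorem pEl_tv {w ψ : ι → F} (h : ψ ⬝ᵥ w = 0) : ∃ k : ℕ, tv w ψ ^ p ^ k = 1 :=
  ⟨1, by rw [pow_one, tv_pow_char h]⟩

include hp in
theorem map_tv_mem_Cen (hπ : IsSLCover π) {w ψ w' : ι → F} (h : ψ ⬝ᵥ w = 0) (hw : w ≠ 0)
    (hψ : ψ ≠ 0) (hm : π (tv w ψ) ∈ (Cen w').map π) : ∃ c : F, c ≠ 0 ∧ w' = c • w := by
  obtain ⟨_, ⟨ψ', h', rfl⟩, e⟩ := hm
  have := eq_of_map_eq (p := p) hπ.ker (pEl_tv h') (pEl_tv h) e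
  obtain ⟨c, hc, e1, -⟩ := tv_eq_tv h h' hw hψ this.symm
  exact ⟨c, hc, e1⟩

include hp in
theorem map_tv_mem_Hyp (hπ : IsSLCover π) {w ψ ψ' : ι → F} (h : ψ ⬝ᵥ w = 0) (hw : w ≠ 0)
    (hψ : ψ ≠ 0) (hm : π (tv w ψ) ∈ (Hyp ψ').map π) : ∃ c : F, c ≠ 0 ∧ ψ = c • ψ' := by
  obtain ⟨_, ⟨w', h', rfl⟩, e⟩ := hm
  have := eq_of_map_eq (p := p) hπ.ker (pEl_tv h') (pEl_tv h) e
  obtain ⟨c, hc, -, e1⟩ := tv_eq_tv h h' hw hψ this.symm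
  exact ⟨c, hc, e1⟩

include hp in
theorem map_tv_ne_one (hπ : IsSLCover π) {w ψ : ι → F} (h : ψ ⬝ᵥ w = 0) (hw : w ≠ 0)
    (hψ : ψ ≠ 0) : π (tv w ψ) ≠ 1 := by
  intro e
  rw [← map_one π] at e
  exact tv_ne_one h hw hψ (eq_of_map_eq (p := p) hπ.ker (pEl_tv h) ⟨0, by simp⟩ e)

variable [Finite F] [Finite G]

omit [CharP F p] in
include hp in
/-- The Frattini argument. -/
theorem exists_eq_mul_normalizer (hπ : IsSLCover π) (R : Sylow p (SpecialLinearGroup ι F)) (g : G) :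
    ∃ h, ∃ k ∈ Subgroup.normalizer ((R : Subgroup (SpecialLinearGroup ι F)).map π : Set G),
      g = π h * k := by
  have hfin : Finite (SpecialLinearGroup ι F) := Finite.of_injective _ mat_injective
  have := hπ.normal
  let P : Sylow p π.range := Sylow.mapSurjective π.rangeRestrict_surjective R
  have hP : (P : Subgroup π.range).map π.range.subtype
      = (R : Subgroup (SpecialLinearGroup ι F)).map π := by
    rw [Sylow.coe_mapSurjective, Subgroup.map_map]
    congr 1
  have h1 := P.normalizer_sup_eq_top
  rw [hP, sup_comm] at h1
  have h2 : g ∈ π.range ⊔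
      Subgroup.normalizer ((R : Subgroup (SpecialLinearGroup ι F)).map π : Set G) := by
    rw [h1]; trivial
  rw [Subgroup.mem_sup_of_normal_left] at h2
  obtain ⟨_, ⟨h, rfl⟩, k, hk, e⟩ := h2
  exact ⟨h, k, hk, e.symm⟩

omit [Finite F] [Finite G] in
include hp in
/-- Elements normalizing (the image of) `R` permute the root elements in the centre of `R`. -/
theorem conj_root (hπ : IsSLCover π) {w ψ : ι → F} (hw : w ≠ 0) (hψ : ψ ≠ 0) (h : ψ ⬝ᵥ w = 0)
    {R : Sylow p (SpecialLinearGroup ι F)} (hR : IsFlagSylow w ψ R) {k : G}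
    (hk : k ∈ Subgroup.normalizer ((R : Subgroup (SpecialLinearGroup ι F)).map π : Set G)) (c : F) :
    ∃ c' : F, k * π (tv w (c • ψ)) * k⁻¹ = π (tv w (c' • ψ)) := by
  rw [Subgroup.mem_normalizer_iff] at hk
  have hc : (c • ψ) ⬝ᵥ w = 0 := by simp [h]
  obtain ⟨z, hz, ez⟩ := (hk _).mp ⟨tv w (c • ψ), hR.cen_le (tv_mem_Cen hc), rfl⟩
  have hcomm : ∀ x ∈ R, z * x = x * z := by
    intro x hx
    refine commute_of_map hπ.ker (pElement_of_mem R.isPGroup' hz) ?_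
    have hx' : k⁻¹ * π x * k ∈ (R : Subgroup (SpecialLinearGroup ι F)).map π := by
      rw [hk]; exact ⟨x, hx, by group⟩
    obtain ⟨y, hy, ey⟩ := hx'
    have hyc : tv w (c • ψ) * y = y * tv w (c • ψ) := by
      have e1 := conj_tv y hc
      have e2 : (c • ψ) ᵥ* mat y⁻¹ = c • ψ := by
        rw [smul_vecMul, hR.vecMul_eq _ (inv_mem hy)]
      rw [hR.mulVec_eq y hy, e2] at e1
      conv_lhs => rw [← e1]
      group
    have := congrArg π hyc
    rw [map_mul, map_mul, ey] at this
    rw [ez]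
    calc k * π (tv w (c • ψ)) * k⁻¹ * π x
        = k * (π (tv w (c • ψ)) * (k⁻¹ * π x * k)) * k⁻¹ := by group
      _ = π x * (k * π (tv w (c • ψ)) * k⁻¹) := by rw [this]; group
  obtain ⟨c', rfl⟩ := eq_tv_of_commute hw hψ h (hR.mulVec_eq z hz) (hR.vecMul_eq z hz)
    (fun x hx => hcomm x (hR.cen_le hx)) (fun x hx => hcomm x (hR.hyp_le hx))
  exact ⟨c', ez.symm⟩

/-- The set of images of nontrivial transvections. -/
def TG (π : SpecialLinearGroup ι F →* G) : Set G :=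
  {x | ∃ w ψ : ι → F, w ≠ 0 ∧ ψ ≠ 0 ∧ ψ ⬝ᵥ w = 0 ∧ x = π (tv w ψ)}

include hp in
/-- All automorphisms induced by `G` preserve the class of transvections: these are the elements
in the centres of the Sylow `p`-subgroups. -/
theorem conj_mem_TG (hπ : IsSLCover π) {x : G} (hx : x ∈ TG π) (g : G) :
    g * x * g⁻¹ ∈ TG π := by
  obtain ⟨w, ψ, hw, hψ, h, rfl⟩ := hx
  obtain ⟨R, hR⟩ := exists_isFlagSylow (p := p) hw hψ h
  obtain ⟨y, k, hk, rfl⟩ := exists_eq_mul_normalizer hπ R g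
  obtain ⟨c, hc⟩ := conj_root hπ hw hψ h hR hk 1
  rw [one_smul] at hc
  have hc' : (c • ψ) ⬝ᵥ w = 0 := by simp [h]
  have hc0 : c ≠ 0 := by
    rintro rfl
    rw [zero_smul, tv_zero_right, map_one, mul_inv_eq_one, mul_eq_left] at hc
    exact map_tv_ne_one (p := p) hπ h hw hψ hc
  refine ⟨mat y *ᵥ w, (c • ψ) ᵥ* mat y⁻¹, mulVec_ne_zero y hw,
    vecMul_ne_zero _ (smul_ne_zero hc0 hψ), by rw [dot_conj, hc'], ?_⟩
  rw [← conj_tv y hc', map_mul, map_mul, map_inv, ← hc]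
  group

end Cover

/-! ### Conjugation permutes point and hyperplane groups -/

section Pure

variable {ι : Type*} [Fintype ι] [DecidableEq ι] {F : Type*} [Field F]
variable {G : Type*} [Group G] {π : SpecialLinearGroup ι F →* G}

/-- Proportionality of vectors, as the vanishing of all two-by-two minors. -/
def Par (a b : ι → F) : Prop := ∀ i j, a i * b j = a j * b i

omit [Fintype ι] [DecidableEq ι] in
theorem Par.symm {a b : ι → F} (h : Par a b) : Par b a := fun i j => by
  linear_combination -(h i j)

omit [Fintype ι] [DecidableEq ι] in
theorem Par.exists_smul {a b : ι → F} (h : Par a b) (ha : a ≠ 0) : ∃ c : F, b = c • a := by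
  obtain ⟨i, hi⟩ := Function.ne_iff.mp ha
  simp only [Pi.zero_apply] at hi
  refine ⟨b i / a i, ?_⟩
  ext j
  simp only [Pi.smul_apply, smul_eq_mul]
  field_simp
  linear_combination h i j

omit [Fintype ι] [DecidableEq ι] in
theorem Par.trans {a b c : ι → F} (h : Par a b) (h' : Par b c) (hb : b ≠ 0) : Par a c := by
  obtain ⟨s, rfl⟩ := h.symm.exists_smul hb
  obtain ⟨t, rfl⟩ := h'.exists_smul hb
  intro i j
  simp only [Pi.smul_apply, smul_eq_mul]; ring

/-- If the product of two transvections is a transvection or trivial, then they share their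
centre or their axis. -/
theorem par_of_tv_mul_tv {w ψ w' ψ' u φ : ι → F} (h : ψ ⬝ᵥ w = 0) (h' : ψ' ⬝ᵥ w' = 0)
    (hu : φ ⬝ᵥ u = 0) (e : tv w ψ * tv w' ψ' = tv u φ) : Par w w' ∨ Par ψ ψ' := by
  have e1 := congrArg mat e
  rw [map_mul, coe_tv h, coe_tv h', coe_tv hu] at e1
  have e2 : vecMulVec w (ψ + (ψ ⬝ᵥ w') • ψ') + vecMulVec w' ψ' = vecMulVec u φ := by
    simp only [add_mul, mul_add, one_mul, mul_one, vecMulVec_mul_vecMulVec] at e1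
    rw [vecMulVec_add]
    rw [← add_right_inj (1 : Matrix ι ι F), ← e1]
    abel
  have e3 : ∀ i k, w i * (ψ k + (ψ ⬝ᵥ w') * ψ' k) + w' i * ψ' k = u i * φ k := fun i k => by
    have := congrFun (congrFun e2 i) k
    simpa [vecMulVec_apply] using this
  -- the minors of a sum of two rank-one matrices are products of minors of the factors
  have e4 : ∀ i j k l, (w i * w' j - w j * w' i) * (ψ k * ψ' l - ψ l * ψ' k) = 0 := by
    intro i j k l
    have a := e3 i k
    have b := e3 j l
    have c := e3 i l
    have d := e3 j k
    linear_combination (w j * (ψ l + (ψ ⬝ᵥ w') * ψ' l) + w' j * ψ' l) * a + u i * φ k * b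
      - (w j * (ψ k + (ψ ⬝ᵥ w') * ψ' k) + w' j * ψ' k) * c - u i * φ l * d
  by_contra hcon
  simp only [Par] at hcon
  push Not at hcon
  obtain ⟨⟨i, j, hij⟩, ⟨k, l, hkl⟩⟩ := hcon
  exact mul_ne_zero (sub_ne_zero.mpr hij) (sub_ne_zero.mpr hkl) (e4 i j k l)

theorem mem_Cen_of_par {w w' ψ : ι → F} (h : ψ ⬝ᵥ w' = 0) (hw : w ≠ 0) (hw' : w' ≠ 0)
    (hp : Par w w') : tv w' ψ ∈ Cen w := by
  obtain ⟨c, rfl⟩ := hp.exists_smul hw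
  have hc : c ≠ 0 := by rintro rfl; simp at hw'
  rw [← Cen_smul hc]
  exact tv_mem_Cen h

theorem mem_Hyp_of_par {w ψ ψ' : ι → F} (h : ψ' ⬝ᵥ w = 0) (hw : ψ ≠ 0) (hw' : ψ' ≠ 0)
    (hp : Par ψ ψ') : tv w ψ' ∈ Hyp ψ := by
  obtain ⟨c, rfl⟩ := hp.exists_smul hw
  have hc : c ≠ 0 := by rintro rfl; simp at hw'
  rw [← Hyp_smul hc]
  exact tv_mem_Hyp h

/-- A nontrivial group of transvections has a common centre or a common axis. -/
theorem le_Cen_or_le_Hyp {E : Subgroup (SpecialLinearGroup ι F)} (hE : E ≠ ⊥)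
    (h : ∀ x ∈ E, x ≠ 1 → ∃ w ψ : ι → F, w ≠ 0 ∧ ψ ≠ 0 ∧ ψ ⬝ᵥ w = 0 ∧ x = tv w ψ) :
    (∃ w : ι → F, w ≠ 0 ∧ E ≤ Cen w) ∨ ∃ ψ : ι → F, ψ ≠ 0 ∧ E ≤ Hyp ψ := by
  have pair : ∀ {w ψ w' ψ' : ι → F}, ψ ⬝ᵥ w = 0 → ψ' ⬝ᵥ w' = 0 → tv w ψ ∈ E → tv w' ψ' ∈ E →
      Par w w' ∨ Par ψ ψ' := by
    intro w ψ w' ψ' h1 h2 m1 m2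
    by_cases h1' : tv w ψ * tv w' ψ' = 1
    · exact par_of_tv_mul_tv h1 h2 (u := 0) (φ := 0) (by simp) (by simpa using h1')
    · obtain ⟨u, φ, -, -, hu, e⟩ := h _ (mul_mem m1 m2) h1'
      exact par_of_tv_mul_tv h1 h2 hu e
  obtain ⟨x, hx, hx1⟩ := Subgroup.ne_bot_iff_exists_ne_one.mp hE |>.elim
    fun a ha => (⟨a.1, a.2, fun h0 => ha (Subtype.ext h0)⟩ : ∃ x, x ∈ E ∧ x ≠ 1)
  obtain ⟨w, ψ, hw, hψ, hwψ, rfl⟩ := h x hx hx1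
  by_cases hall : E ≤ Cen w
  · exact Or.inl ⟨w, hw, hall⟩
  refine Or.inr ⟨ψ, hψ, ?_⟩
  obtain ⟨y, hy, hyw⟩ := SetLike.not_le_iff_exists.mp hall
  have hy1 : y ≠ 1 := by rintro rfl; exact hyw (one_mem _)
  obtain ⟨w', ψ', hw', hψ', hwψ', rfl⟩ := h y hy hy1
  have hnp : ¬ Par w w' := fun hpar => hyw (mem_Cen_of_par hwψ' hw hw' hpar)
  have hpψ : Par ψ ψ' := (pair hwψ hwψ' hx hy).resolve_left hnp
  intro z hz
  by_cases hz1 : z = 1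
  · rw [hz1]; exact one_mem _
  obtain ⟨u, φ, hu, hφ, huφ, rfl⟩ := h z hz hz1
  refine mem_Hyp_of_par huφ hψ hφ ?_
  by_contra hno
  have h1 : Par w u := (pair hwψ huφ hx hz).resolve_right hno
  have h2 : Par w' u := (pair hwψ' huφ hy hz).resolve_right
    fun h3 => hno (hpψ.trans h3 hψ')
  exact hnp (h1.trans h2.symm hu)

variable {p : ℕ} [hp : Fact p.Prime] [CharP F p] [Finite F] [Finite G]

omit [CharP F p] [Finite G] in
include hp in
/-- A `p`-subgroup of the image of `π` lifts to a `p`-subgroup. -/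
theorem exists_lift_isPGroup {E : Subgroup G} (hE : IsPGroup p E) (hle : E ≤ π.range) :
    ∃ E' : Subgroup (SpecialLinearGroup ι F), IsPGroup p E' ∧ E'.map π = E := by
  have hfin : Finite (SpecialLinearGroup ι F) := Finite.of_injective _ mat_injective
  let ρ : E.comap π →* E := π.subgroupComap E
  have hρ : Function.Surjective ρ := by
    rintro ⟨x, hx⟩
    obtain ⟨y, rfl⟩ := hle hx
    exact ⟨⟨y, hx⟩, rfl⟩
  obtain ⟨P⟩ : Nonempty (Sylow p (E.comap π)) := inferInstance
  have h1 : (P : Subgroup (E.comap π)).map ρ = ⊤ := by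
    have h2 := (Sylow.mapSurjective hρ P).3 (Q := ⊤) (hE.to_subgroup ⊤) le_top
    rw [h2]; simp
  refine ⟨(P : Subgroup (E.comap π)).map (E.comap π).subtype, P.isPGroup'.map _, ?_⟩
  have h2 := congrArg (Subgroup.map E.subtype) h1
  rw [Subgroup.map_map, ← MonoidHom.range_eq_map, Subgroup.range_subtype] at h2
  rw [Subgroup.map_map]
  exact h2

omit [Finite G] in
include hp in
theorem le_map_Cen_or_le_map_Hyp (hπ : IsSLCover π) {E : Subgroup G} (hE : IsPGroup p E)
    (hne : E ≠ ⊥) (h : ∀ x ∈ E, x ≠ 1 → x ∈ TG π) :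
    (∃ w : ι → F, w ≠ 0 ∧ E ≤ (Cen w).map π) ∨ ∃ ψ : ι → F, ψ ≠ 0 ∧ E ≤ (Hyp ψ).map π := by
  have hle : E ≤ π.range := by
    intro x hx
    by_cases hx1 : x = 1
    · rw [hx1]; exact one_mem _
    · obtain ⟨w, ψ, -, -, -, rfl⟩ := h x hx hx1
      exact ⟨_, rfl⟩
  obtain ⟨E', hE', rfl⟩ := exists_lift_isPGroup hE hle
  have hne' : E' ≠ ⊥ := by rintro rfl; simp at hne
  have := le_Cen_or_le_Hyp hne' (fun x hx hx1 => by
    obtain ⟨w, ψ, hw, hψ, hwψ, e⟩ := h (π x) ⟨x, hx, rfl⟩ (fun h0 => hx1 (by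
      rw [← map_one π] at h0
      exact eq_of_map_eq (p := p) hπ.ker (pElement_of_mem hE' hx) ⟨0, by simp⟩ h0))
    exact ⟨w, ψ, hw, hψ, hwψ, eq_of_map_eq (p := p) hπ.ker (pElement_of_mem hE' hx) (pEl_tv hwψ) e⟩)
  rcases this with ⟨w, hw, hle⟩ | ⟨ψ, hψ, hle⟩
  · exact Or.inl ⟨w, hw, Subgroup.map_mono hle⟩
  · exact Or.inr ⟨ψ, hψ, Subgroup.map_mono hle⟩

/-- The family of all images of groups `Cen w` and `Hyp ψ` (for `w`, `ψ` nonzero). -/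
def Fam (π : SpecialLinearGroup ι F →* G) : Set (Subgroup G) :=
  {A | (∃ w : ι → F, w ≠ 0 ∧ A = (Cen w).map π) ∨ ∃ ψ : ι → F, ψ ≠ 0 ∧ A = (Hyp ψ).map π}

omit [Finite G] [Finite F] in
include hp in
theorem card_map_of_isPGroup (hπ : IsSLCover π) {E : Subgroup (SpecialLinearGroup ι F)}
    (hE : IsPGroup p E) : Nat.card (E.map π) = Nat.card E := by
  have hinj : Function.Injective (π.subgroupMap E) := by
    intro a b e
    exact Subtype.ext (eq_of_map_eq (p := p) hπ.ker (pElement_of_mem hE a.2)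
      (pElement_of_mem hE b.2) (congrArg Subtype.val e))
  exact (Nat.card_congr (Equiv.ofBijective _ ⟨hinj, π.subgroupMap_surjective E⟩)).symm

omit [Finite G] in
include hp in
theorem card_eq_of_mem_Fam (hπ : IsSLCover π) {A B : Subgroup G} (hA : A ∈ Fam π)
    (hB : B ∈ Fam π) : Nat.card A = Nat.card B := by
  have hC : ∀ w : ι → F, Nat.card ((Cen w).map π) = Nat.card (Cen w) := fun w =>
    card_map_of_isPGroup (p := p) hπ (isPGroup_Cen w)
  have hH : ∀ ψ : ι → F, Nat.card ((Hyp ψ).map π) = Nat.card (Hyp ψ) := fun ψ =>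
    card_map_of_isPGroup (p := p) hπ (isPGroup_Hyp ψ)
  rcases hA with ⟨w, hw, rfl⟩ | ⟨ψ, hψ, rfl⟩ <;> rcases hB with ⟨w', hw', rfl⟩ | ⟨ψ', hψ', rfl⟩
  · rw [hC, hC, ← card_Hyp_eq_card_Cen hw hw, card_Hyp_eq_card_Cen hw' hw]
  · rw [hC, hH, card_Hyp_eq_card_Cen hw hψ']
  · rw [hC, hH, card_Hyp_eq_card_Cen hw' hψ]
  · rw [hH, hH, card_Hyp_eq_card_Cen hψ hψ, card_Hyp_eq_card_Cen hψ hψ']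

include hp in
theorem eq_of_le_of_mem_Fam (hπ : IsSLCover π) {A B : Subgroup G} (hA : A ∈ Fam π)
    (hB : B ∈ Fam π) (h : A ≤ B) : A = B :=
  Subgroup.eq_of_le_of_card_ge h (card_eq_of_mem_Fam (p := p) hπ hB hA).le

omit [CharP F p] [Finite F] in
theorem exists_perp_ne_zero [Nontrivial ι] (w : ι → F) : ∃ ψ : ι → F, ψ ≠ 0 ∧ ψ ⬝ᵥ w = 0 := by
  obtain ⟨i, j, hij⟩ := exists_pair_ne ι
  by_cases hi : w i = 0
  · exact ⟨Pi.single i 1, by simp, by simp [hi]⟩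
  · refine ⟨Pi.single j (w i) - Pi.single i (w j), fun h => hi ?_, ?_⟩
    · have := congrFun h j
      simpa [hij] using this
    · simp only [sub_dotProduct, single_dotProduct]; ring

omit [CharP F p] [Finite F] in
theorem exists_perp_ne_zero' [Nontrivial ι] (w : ι → F) : ∃ ψ : ι → F, ψ ≠ 0 ∧ w ⬝ᵥ ψ = 0 := by
  obtain ⟨ψ, h1, h2⟩ := exists_perp_ne_zero w
  exact ⟨ψ, h1, by rw [dotProduct_comm, h2]⟩

include hp in
/-- `G` permutes the family `Fam π`. -/
theorem cj_mem_Fam [Nontrivial ι] (hπ : IsSLCover π) {A : Subgroup G} (hA : A ∈ Fam π) (g : G) :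
    cj g A ∈ Fam π := by
  have hA' : IsPGroup p A ∧ A ≠ ⊥ ∧ ∀ x ∈ A, x ≠ 1 → x ∈ TG π := by
    rcases hA with ⟨w, hw, rfl⟩ | ⟨ψ, hψ, rfl⟩
    · refine ⟨(isPGroup_Cen w).map π, ?_, ?_⟩
      · obtain ⟨ψ, hψ, h⟩ := exists_perp_ne_zero w
        intro h0
        refine map_tv_ne_one (p := p) hπ h hw hψ ?_
        rw [← Subgroup.mem_bot, ← h0]
        exact ⟨_, tv_mem_Cen h, rfl⟩
      · rintro _ ⟨_, ⟨ψ, h, rfl⟩, rfl⟩ h1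
        refine ⟨w, ψ, hw, ?_, h, rfl⟩
        rintro rfl; simp at h1
    · refine ⟨(isPGroup_Hyp ψ).map π, ?_, ?_⟩
      · obtain ⟨w, hw, h⟩ := exists_perp_ne_zero' ψ
        intro h0
        refine map_tv_ne_one (p := p) hπ h hw hψ ?_
        rw [← Subgroup.mem_bot, ← h0]
        exact ⟨_, tv_mem_Hyp h, rfl⟩
      · rintro _ ⟨_, ⟨w, h, rfl⟩, rfl⟩ h1
        refine ⟨w, ψ, ?_, hψ, h, rfl⟩
        rintro rfl; simp at h1
  obtain ⟨h1, h2, h3⟩ := hA'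
  have hle := le_map_Cen_or_le_map_Hyp hπ (E := cj g A) (h1.map _)
    (fun h0 => h2 ((Subgroup.map_eq_bot_iff_of_injective _ (MulAut.conj g).injective).mp h0))
    (by
      rintro _ ⟨x, hx, rfl⟩ hne
      have hx1 : x ≠ 1 := by rintro rfl; simp at hne
      exact conj_mem_TG (p := p) hπ (h3 x hx hx1) g)
  have hcard : ∀ B ∈ Fam π, cj g A ≤ B → cj g A = B := fun B hB hAB =>
    Subgroup.eq_of_le_of_card_ge hAB (by
      rw [card_cj, card_eq_of_mem_Fam (p := p) hπ hB hA])
  rcases hle with ⟨w, hw, hle⟩ | ⟨ψ, hψ, hle⟩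
  · exact Or.inl ⟨w, hw, hcard _ (Or.inl ⟨w, hw, rfl⟩) hle⟩
  · exact Or.inr ⟨ψ, hψ, hcard _ (Or.inr ⟨ψ, hψ, rfl⟩) hle⟩

end Pure

/-! ### The centralizer of a point group -/

section Centralizer

variable {ι : Type*} [Fintype ι] [DecidableEq ι] {F : Type*} [Field F]
variable {G : Type*} [Group G] {π : SpecialLinearGroup ι F →* G}

/-- A matrix for which every covector is an eigenvector is central. -/
theorem mem_center_of_forall_vecMul {j : SpecialLinearGroup ι F}
    (h : ∀ ψ : ι → F, ∃ c : F, ψ ᵥ* mat j = c • ψ) :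
    j ∈ Subgroup.center (SpecialLinearGroup ι F) := by
  obtain ⟨a, ha⟩ : ∃ a : F, (mat j).vecMulLinear = a • 1 := by
    refine LinearMap.exists_eq_smul_id_of_forall_notLinearIndependent fun v hv => ?_
    obtain ⟨c, hc⟩ := h v
    rw [Matrix.vecMulLinear_apply, hc, LinearIndependent.pair_iff] at hv
    have := hv c (-1) (by simp)
    simp at this
  have ha' : ∀ ψ : ι → F, ψ ᵥ* mat j = a • ψ := fun ψ => by
    have := LinearMap.congr_fun ha ψ
    simpa using this
  have hj : mat j = a • 1 := by
    ext x y
    have := congrFun (ha' (Pi.single x 1)) y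
    rw [single_one_vecMul] at this
    simpa [Matrix.one_apply, Pi.single_apply, eq_comm] using this
  rw [Subgroup.mem_center_iff]
  intro g
  apply mat_injective
  rw [map_mul, map_mul, hj]
  simp

variable {p : ℕ} [hp : Fact p.Prime] [CharP F p]

include hp in
theorem smul_of_map_Hyp_eq [Nontrivial ι] (hπ : IsSLCover π) {ψ ψ' : ι → F} (hψ : ψ ≠ 0)
    (h : (Hyp ψ).map π = (Hyp ψ').map π) : ∃ c : F, c ≠ 0 ∧ ψ = c • ψ' := by
  obtain ⟨w, hw, hw'⟩ := exists_perp_ne_zero' ψ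
  refine map_tv_mem_Hyp (p := p) hπ hw' hw hψ ?_
  rw [← h]
  exact ⟨_, tv_mem_Hyp hw', rfl⟩

variable [Finite F] [Finite G]

omit [Finite G] in
theorem cj_eq_of_commute {g : G} {A : Subgroup G} (h : ∀ x ∈ A, g * x = x * g) : cj g A = A := by
  ext x
  rw [mem_cj]
  constructor
  · intro hx
    have := h _ hx
    have e : x = g⁻¹ * x * g := by
      calc x = g * (g⁻¹ * x * g) * g⁻¹ := by group
        _ = g⁻¹ * x * g := by rw [this]; group
    rwa [e]
  · intro hx
    have := h _ hx
    rwa [mul_assoc, ← this, inv_mul_cancel_left]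

include hp in
/-- If `g` centralizes `Cen w` then it fixes `Hyp ψ` for all `ψ` vanishing on `w`. -/
theorem cj_Hyp_of_perp [Nontrivial ι] (hπ : IsSLCover π) {w : ι → F} (hw : w ≠ 0) {g : G}
    (hg : ∀ x ∈ (Cen w).map π, g * x = x * g) {ψ : ι → F} (hψ : ψ ≠ 0) (h : ψ ⬝ᵥ w = 0) :
    cj g ((Hyp ψ).map π) = (Hyp ψ).map π := by
  have hmem : π (tv w ψ) ∈ cj g ((Hyp ψ).map π) := by
    rw [mem_cj, mul_assoc, ← hg _ ⟨_, tv_mem_Cen h, rfl⟩, inv_mul_cancel_left]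
    exact ⟨_, tv_mem_Hyp h, rfl⟩
  rcases cj_mem_Fam (p := p) hπ (A := (Hyp ψ).map π) (Or.inr ⟨ψ, hψ, rfl⟩) g with
    ⟨w', hw', e⟩ | ⟨ψ', hψ', e⟩
  · rw [e] at hmem
    obtain ⟨c, hc, rfl⟩ := map_tv_mem_Cen (p := p) hπ h hw hψ hmem
    rw [Cen_smul hc, ← cj_eq_of_commute hg] at e
    rw [cj_injective g e, cj_eq_of_commute hg]
  · rw [e] at hmem
    obtain ⟨c, hc, hcψ⟩ := map_tv_mem_Hyp (p := p) hπ h hw hψ hmem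
    rw [e, hcψ, Hyp_smul hc]

include hp in
/-- If `g` centralizes `Cen w` then it permutes the groups `Hyp ψ` with `ψ` not vanishing
on `w`. -/
theorem exists_cj_Hyp_of_not_perp [Nontrivial ι] (hπ : IsSLCover π) {w : ι → F} (hw : w ≠ 0) {g : G}
    (hg : ∀ x ∈ (Cen w).map π, g * x = x * g) {ψ : ι → F} (h : ψ ⬝ᵥ w = 1) :
    ∃ ψ' : ι → F, ψ' ⬝ᵥ w = 1 ∧ cj g ((Hyp ψ).map π) = (Hyp ψ').map π := by
  have hψ : ψ ≠ 0 := by rintro rfl; simp at h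
  have key : ∃ ψ' : ι → F, ψ' ≠ 0 ∧ cj g ((Hyp ψ).map π) = (Hyp ψ').map π := by
    rcases cj_mem_Fam (p := p) hπ (A := (Hyp ψ).map π) (Or.inr ⟨ψ, hψ, rfl⟩) g with
      ⟨w', hw', e⟩ | ⟨ψ', hψ', e⟩
    swap
    · exact ⟨ψ', hψ', e⟩
    by_cases hex : ∃ ψ₁ : ι → F, ψ₁ ≠ 0 ∧ ψ₁ ⬝ᵥ w = 0 ∧ ψ₁ ⬝ᵥ w' = 0
    · exfalso
      obtain ⟨ψ₁, hψ₁, h1, h2⟩ := hex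
      have m1 : π (tv w' ψ₁) ∈ cj g ((Hyp ψ).map π) := by
        rw [e]; exact ⟨_, tv_mem_Cen h2, rfl⟩
      have m2 : π (tv w' ψ₁) ∈ cj g ((Hyp ψ₁).map π) := by
        rw [cj_Hyp_of_perp (p := p) hπ hw hg hψ₁ h1]; exact ⟨_, tv_mem_Hyp h2, rfl⟩
      rw [mem_cj] at m1 m2
      obtain ⟨_, ⟨u, hu, rfl⟩, e1⟩ := m1
      rw [← e1] at m2
      have hu0 : u ≠ 0 := by
        rintro rfl
        rw [tv_zero_left, map_one] at e1
        refine map_tv_ne_one (p := p) hπ h2 hw' hψ₁ ?_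
        calc π (tv w' ψ₁) = g * (g⁻¹ * π (tv w' ψ₁) * g) * g⁻¹ := by group
          _ = 1 := by rw [← e1]; group
      obtain ⟨c, hc, rfl⟩ := map_tv_mem_Hyp (p := p) hπ hu hu0 hψ m2
      rw [smul_dotProduct, h1, smul_zero] at h
      exact zero_ne_one h
    · push Not at hex
      obtain ⟨ψ', hψ', h'⟩ := exists_perp_ne_zero w'
      refine ⟨ψ', hψ', ?_⟩
      rw [e]
      refine eq_of_le_of_mem_Fam (p := p) hπ (Or.inl ⟨w', hw', rfl⟩) (Or.inr ⟨ψ', hψ', rfl⟩)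
        (Subgroup.map_mono ?_)
      rintro _ ⟨φ, hφ, rfl⟩
      have h0 : ψ' ⬝ᵥ w ≠ 0 := fun h0 => hex ψ' hψ' h0 h'
      have h1 : (ψ' ⬝ᵥ w) • φ - (φ ⬝ᵥ w) • ψ' = 0 := by
        by_contra hne
        refine hex _ hne ?_ ?_
        · simp only [sub_dotProduct, smul_dotProduct, smul_eq_mul]; ring
        · simp [sub_dotProduct, hφ, h']
      have h2 : φ = ((ψ' ⬝ᵥ w)⁻¹ * (φ ⬝ᵥ w)) • ψ' := by
        rw [mul_smul, ← sub_eq_zero.mp h1, smul_smul, inv_mul_cancel₀ h0, one_smul]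
      rw [h2, ← tv_smul_left h']
      exact tv_mem_Hyp (by simp [h'])
  obtain ⟨ψ', hψ', e⟩ := key
  have h0 : ψ' ⬝ᵥ w ≠ 0 := by
    intro h0
    have e2 := cj_Hyp_of_perp (p := p) hπ hw hg hψ' h0
    rw [← e] at e2
    have e3 := cj_injective g e2
    rw [e] at e3
    obtain ⟨c, hc, rfl⟩ := smul_of_map_Hyp_eq (p := p) hπ hψ' e3
    simp [h, hc] at h0
  exact ⟨(ψ' ⬝ᵥ w)⁻¹ • ψ', by simp [h0], by rw [Hyp_smul (inv_ne_zero h0), e]⟩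

omit [Finite F] [Finite G] in
include hp in
/-- An element of `G` fixing all `Hyp ψ` is trivial. -/
theorem eq_one_of_forall_cj_Hyp [Nontrivial ι] (hπ : IsSLCover π) {g : G}
    (hg : ∀ ψ : ι → F, ψ ≠ 0 → cj g ((Hyp ψ).map π) = (Hyp ψ).map π) : g = 1 := by
  have hg' : ∀ ψ : ι → F, ψ ≠ 0 → cj g⁻¹ ((Hyp ψ).map π) = (Hyp ψ).map π := fun ψ hψ => by
    rw [cj_inv_eq_iff, hg ψ hψ]
  rw [← Subgroup.mem_bot, ← hπ.cent, Subgroup.mem_centralizer_iff]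
  rintro _ ⟨h, rfl⟩
  obtain ⟨h', e⟩ : g * π h * g⁻¹ ∈ π.range := hπ.normal.conj_mem _ ⟨h, rfl⟩ g
  have hj : (h⁻¹ * h')⁻¹ ∈ Subgroup.center (SpecialLinearGroup ι F) := by
    refine mem_center_of_forall_vecMul fun ψ => ?_
    by_cases hψ : ψ = 0
    · exact ⟨0, by simp [hψ]⟩
    have e1 : cj (π (h⁻¹ * h')) ((Hyp ψ).map π) = (Hyp ψ).map π := by
      rw [map_mul, e, map_inv, cj_mul, cj_inv_eq_iff, cj_mul, cj_mul, hg' ψ hψ, cj_map, cj_Hyp,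
        hg _ (vecMul_ne_zero _ hψ)]
    rw [cj_map, cj_Hyp] at e1
    obtain ⟨c, -, hc⟩ := smul_of_map_Hyp_eq (p := p) hπ (vecMul_ne_zero _ hψ) e1
    exact ⟨c, hc⟩
  rw [← hπ.ker, map_inv, map_mul, map_inv, inv_eq_one, inv_mul_eq_one] at hj
  conv_lhs => rw [hj, e]
  group

include hp in
/-- The centralizer of `Cen w` lies in the socle. -/
theorem mem_range_of_commute_Cen [Nontrivial ι] (hπ : IsSLCover π) {w : ι → F} (hw : w ≠ 0) {g : G}
    (hg : ∀ x ∈ (Cen w).map π, g * x = x * g) : g ∈ π.range := by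
  obtain ⟨i, hi⟩ := Function.ne_iff.mp hw
  simp only [Pi.zero_apply] at hi
  obtain ⟨ψ₁, h₁⟩ : ∃ ψ : ι → F, ψ ⬝ᵥ w = 1 := ⟨Pi.single i (w i)⁻¹, by simp [hi]⟩
  obtain ⟨ψ₂, h₂, e⟩ := exists_cj_Hyp_of_not_perp (p := p) hπ hw hg h₁
  have hφ : (ψ₂ - ψ₁) ⬝ᵥ w = 0 := by rw [sub_dotProduct, h₁, h₂, sub_self]
  have move : ∀ ψ φ : ι → F, ψ ⬝ᵥ w = 1 → φ ⬝ᵥ w = 0 →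
      cj (π (tv w φ)) ((Hyp ψ).map π) = (Hyp (ψ - φ)).map π := by
    intro ψ φ hψ hφ
    rw [cj_map, cj_Hyp, vecMul_mat_tv_inv hφ, hψ, one_smul]
  have hab : ∀ φ : ι → F, φ ⬝ᵥ w = 0 → ∀ x ∈ (Cen w).map π, π (tv w φ) * x = x * π (tv w φ) := by
    rintro φ hφ _ ⟨_, ⟨φ', hφ', rfl⟩, rfl⟩
    rw [← map_mul, ← map_mul, tv_mul_tv_right hφ hφ', tv_mul_tv_right hφ' hφ, add_comm]
  have hg' : π (tv w (ψ₂ - ψ₁)) * g = 1 := by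
    have hcom : ∀ x ∈ (Cen w).map π, π (tv w (ψ₂ - ψ₁)) * g * x = x * (π (tv w (ψ₂ - ψ₁)) * g) := by
      intro x hx
      rw [mul_assoc, hg x hx, ← mul_assoc, hab _ hφ x hx, mul_assoc]
    refine eq_one_of_forall_cj_Hyp (p := p) hπ fun ψ hψ => ?_
    by_cases h : ψ ⬝ᵥ w = 0
    · exact cj_Hyp_of_perp (p := p) hπ hw hcom hψ h
    have e₁ : cj (π (tv w (ψ₂ - ψ₁)) * g) ((Hyp ψ₁).map π) = (Hyp ψ₁).map π := by
      rw [cj_mul, e, move _ _ h₂ hφ, sub_sub_cancel]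
    rw [← Hyp_smul (inv_ne_zero h)]
    have h1 : ((ψ ⬝ᵥ w)⁻¹ • ψ) ⬝ᵥ w = 1 := by simp [h]
    generalize (ψ ⬝ᵥ w)⁻¹ • ψ = χ at h1 ⊢
    have hφ' : (ψ₁ - χ) ⬝ᵥ w = 0 := by rw [sub_dotProduct, h₁, h1, sub_self]
    have e2 := move ψ₁ _ h₁ hφ'
    rw [sub_sub_cancel] at e2
    rw [← e2, ← cj_mul, hcom _ ⟨_, tv_mem_Cen hφ', rfl⟩, cj_mul, e₁]
  rw [← inv_eq_iff_mul_eq_one] at hg'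
  exact ⟨(tv w (ψ₂ - ψ₁))⁻¹, by rw [map_inv, hg']⟩

end Centralizer

/-! ### The action on a root group -/

section FieldAction

variable {F : Type*} [Field F] [Finite F] {p : ℕ} [hp : Fact p.Prime] [Algebra (ZMod p) F]

/-- Squares generate a finite field additively; hence an additive injection which is semilinear
for multiplications by squares is a multiple of a field automorphism. -/
theorem exists_algEquiv_of_square {κ : F → F} (hinj : Function.Injective κ)
    (hadd : ∀ a b, κ (a + b) = κ a + κ b)
    (hsq : ∀ a : F, a ≠ 0 → ∃ μ, ∀ c, κ (a * a * c) = μ * κ c) :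
    ∃ (m : F) (σ : F ≃ₐ[ZMod p] F), m ≠ 0 ∧ ∀ c, κ c = m * σ c := by
  have h0 : κ 0 = 0 := by simpa using hadd 0 0
  have h1 : κ 1 ≠ 0 := fun h => one_ne_zero (hinj (h.trans h0.symm))
  have hsub : ∀ a b, κ (a - b) = κ a - κ b := fun a b => by
    have := hadd (a - b) b
    rw [sub_add_cancel] at this
    rw [this, add_sub_cancel_right]
  have hsq' : ∀ a : F, ∃ μ, ∀ c, κ (a * a * c) = μ * κ c := by
    intro a
    by_cases ha : a = 0
    · exact ⟨0, fun c => by simp [ha, h0]⟩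
    · exact hsq a ha
  have hall : ∀ b : F, ∃ μ, ∀ c, κ (b * c) = μ * κ c := by
    intro b
    by_cases h2 : ringChar F = 2
    · obtain ⟨a, rfl⟩ := FiniteField.isSquare_of_char_two h2 b
      exact hsq' a
    · have h2' : (2 : F) ≠ 0 := Ring.two_ne_zero h2
      obtain ⟨μ, hμ⟩ := hsq' ((b + 1) / 2)
      obtain ⟨ν, hν⟩ := hsq' ((b - 1) / 2)
      refine ⟨μ - ν, fun c => ?_⟩
      rw [sub_mul, ← hμ, ← hν, ← hsub]
      congr 1
      field_simp
      ring
  have hmul : ∀ b c, κ (b * c) = κ b / κ 1 * κ c := by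
    intro b c
    obtain ⟨μ, hμ⟩ := hall b
    have := hμ 1
    rw [mul_one] at this
    rw [hμ, this, mul_div_cancel_right₀ _ h1]
  let σ : F →+* F :=
    { toFun := fun c => κ c / κ 1
      map_one' := div_self h1
      map_zero' := by simp [h0]
      map_add' := fun a b => by rw [hadd, add_div]
      map_mul' := fun a b => by rw [hmul, mul_div_assoc] }
  let σ' : F →ₐ[ZMod p] F :=
    { σ with
      commutes' := fun r => RingHom.congr_fun
        (Subsingleton.elim (σ.comp (algebraMap (ZMod p) F)) (algebraMap (ZMod p) F)) r }
  have hbij : Function.Bijective σ' := Finite.injective_iff_bijective.mp σ.injective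
  refine ⟨κ 1, AlgEquiv.ofBijective σ' hbij, h1, fun c => ?_⟩
  change κ c = κ 1 * (κ c / κ 1)
  field_simp

end FieldAction

section RootAction

variable {ι : Type*} [Fintype ι] [DecidableEq ι] {F : Type*} [Field F]
variable {G : Type*} [Group G] {π : SpecialLinearGroup ι F →* G}
variable {p : ℕ} [hp : Fact p.Prime] [Algebra (ZMod p) F]

/-- `k` acts on the root group `{tv w (c • ψ)}` through the field automorphism `σ`, up to a
scalar `m`. -/
def RootAct (π : SpecialLinearGroup ι F →* G) (w ψ : ι → F) (k : G) (m : F)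
    (σ : F ≃ₐ[ZMod p] F) : Prop :=
  m ≠ 0 ∧ ∀ c : F, k * π (tv w (c • ψ)) * k⁻¹ = π (tv w ((m * σ c) • ψ))

omit [Algebra (ZMod p) F] in
theorem root_injective [CharP F p] (hπ : IsSLCover π) {w ψ : ι → F} (hw : w ≠ 0) (hψ : ψ ≠ 0)
    (h : ψ ⬝ᵥ w = 0) {a b : F} (e : π (tv w (a • ψ)) = π (tv w (b • ψ))) : a = b := by
  have ha : (a • ψ) ⬝ᵥ w = 0 := by simp [h]
  have hb : (b • ψ) ⬝ᵥ w = 0 := by simp [h]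
  have := eq_of_map_eq (p := p) hπ.ker (pEl_tv ha) (pEl_tv hb) e
  exact smul_left_injective F hψ (tv_eq_tv_right ha hb hw this)

theorem RootAct.mul {w ψ : ι → F} {k k' : G} {m m' : F} {σ σ' : F ≃ₐ[ZMod p] F}
    (h : RootAct π w ψ k m σ) (h' : RootAct π w ψ k' m' σ') :
    RootAct π w ψ (k * k') (m * σ m') (σ * σ') := by
  refine ⟨mul_ne_zero h.1 ((map_ne_zero σ).mpr h'.1), fun c => ?_⟩
  have : k * k' * π (tv w (c • ψ)) * (k * k')⁻¹ = k * (k' * π (tv w (c • ψ)) * k'⁻¹) * k⁻¹ := by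
    group
  rw [this, h'.2, h.2, map_mul, ← mul_assoc]
  rfl

theorem RootAct.unique [CharP F p] (hπ : IsSLCover π) {w ψ : ι → F} (hw : w ≠ 0) (hψ : ψ ≠ 0)
    (hwψ : ψ ⬝ᵥ w = 0) {k : G} {m m' : F} {σ σ' : F ≃ₐ[ZMod p] F}
    (h : RootAct π w ψ k m σ) (h' : RootAct π w ψ k m' σ') : m = m' ∧ σ = σ' := by
  have e : ∀ c, m * σ c = m' * σ' c := fun c =>
    root_injective (p := p) hπ hw hψ hwψ ((h.2 c).symm.trans (h'.2 c))
  have e1 : m = m' := by simpa using e 1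
  refine ⟨e1, AlgEquiv.ext fun c => ?_⟩
  have := e c
  rw [e1] at this
  exact mul_left_cancel₀ h'.1 this

/-- A torus element acting on the root group of `Pi.single i 1`, `Pi.single j 1` by the square
of a given scalar. -/
theorem exists_torus {i j : ι} (hij : i ≠ j) {a : F} (ha : a ≠ 0) :
    ∃ h : SpecialLinearGroup ι F, mat h *ᵥ Pi.single i 1 = a • Pi.single i 1 ∧
      Pi.single j 1 ᵥ* mat h⁻¹ = a • Pi.single j 1 := by
  let d : ι → F := Pi.mulSingle i a * Pi.mulSingle j a⁻¹
  have hd : (diagonal d).det = 1 := by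
    rw [det_diagonal]
    simp only [d, Pi.mul_apply, Finset.prod_mul_distrib]
    have h1 : ∀ (x : ι) (b : F), ∏ y, (Pi.mulSingle x b : ι → F) y = b := fun x b => by
      rw [Finset.prod_eq_single x] <;> simp +contextual
    rw [h1, h1, mul_inv_cancel₀ ha]
  have hdi : d i = a := by simp [d, hij]
  have hdj : d j = a⁻¹ := by simp [d, hij.symm]
  refine ⟨slMk (diagonal d) hd, ?_, ?_⟩
  · rw [mat_slMk]
    ext x
    simp [mulVec_single, Pi.single_apply, hdi]
  · have h1 : (Pi.single j 1 : ι → F) = (a • Pi.single j 1) ᵥ* mat (slMk (diagonal d) hd) := by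
      rw [mat_slMk]
      ext x
      rw [vecMul_diagonal]
      by_cases hx : x = j
      · subst hx; simp [hdj, ha]
      · simp [hx]
    conv_lhs => rw [h1]
    rw [vecMul_vecMul, coe_mul_coe_inv, vecMul_one]

variable [Finite F] [Finite G] [CharP F p]

omit [Finite G] in
/-- An element normalizing `R` acts on the central root group of `R` through a field automorphism,
up to a scalar. Diagonal matrices multiply the root parameter by squares, and their conjugates by
`k` also act by scalars; since the squares generate `F` additively, this forces the normalized action
to be multiplicative. -/
theorem exists_rootAct (hπ : IsSLCover π) {i j : ι} (hij : i ≠ j)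
    {R : Sylow p (SpecialLinearGroup ι F)}
    (hR : IsFlagSylow (Pi.single i 1 : ι → F) (Pi.single j 1) R) {k : G}
    (hk : k ∈ Subgroup.normalizer ((R : Subgroup (SpecialLinearGroup ι F)).map π : Set G)) :
    ∃ (m : F) (σ : F ≃ₐ[ZMod p] F), RootAct π (Pi.single i 1) (Pi.single j 1) k m σ := by
  have hw : (Pi.single i 1 : ι → F) ≠ 0 := by simp
  have hψ : (Pi.single j 1 : ι → F) ≠ 0 := by simp
  have hwψ : (Pi.single j 1 : ι → F) ⬝ᵥ Pi.single i 1 = 0 := by simp [hij]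
  have htor := fun {a : F} (ha : a ≠ 0) => exists_torus hij ha
  generalize (Pi.single i 1 : ι → F) = w at *
  generalize (Pi.single j 1 : ι → F) = ψ at *
  have hc : ∀ c : F, (c • ψ) ⬝ᵥ w = 0 := fun c => by simp [hwψ]
  choose κ hκ using fun c => conj_root hπ hw hψ hwψ hR hk c
  have hinj : Function.Injective κ := by
    intro a b e
    have := (hκ a).trans ((congrArg (fun c => π (tv w (c • ψ))) e).trans (hκ b).symm)
    exact root_injective (p := p) hπ hw hψ hwψ (by simpa using this)
  have hadd : ∀ a b, κ (a + b) = κ a + κ b := by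
    intro a b
    refine root_injective (p := p) hπ hw hψ hwψ ?_
    rw [← hκ, add_smul, add_smul, ← tv_mul_tv_right (hc a) (hc b),
      ← tv_mul_tv_right (hc _) (hc _), map_mul, map_mul, ← hκ, ← hκ]
    group
  obtain ⟨m, σ, hm, hσ⟩ := exists_algEquiv_of_square (p := p) hinj hadd (by
    intro a ha
    obtain ⟨h, h1, h2⟩ := htor ha
    obtain ⟨h', e⟩ : k * π h * k⁻¹ ∈ π.range := hπ.normal.conj_mem _ ⟨h, rfl⟩ k
    have key : ∀ c, tv (mat h' *ᵥ w) ((κ c • ψ) ᵥ* mat h'⁻¹) = tv w (κ (a * a * c) • ψ) := by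
      intro c
      refine eq_of_map_eq (p := p) hπ.ker (pEl_tv (by rw [dot_conj, hc])) (pEl_tv (hc _)) ?_
      have e1 := conj_tv h (hc c)
      rw [h1, tv_smul_left (by rw [smul_vecMul, h2]; simp [hwψ]), smul_vecMul, h2] at e1
      rw [← conj_tv h' (hc _), map_mul, map_mul, map_inv, e, ← hκ, ← hκ]
      have e2 : (a * a * c) • ψ = a • c • a • ψ := by rw [smul_smul, smul_smul]; ring_nf
      rw [e2, ← e1, map_mul, map_mul, map_inv]
      group
    obtain ⟨x, hx⟩ := Function.ne_iff.mp hw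
    obtain ⟨y, hy⟩ := Function.ne_iff.mp hψ
    simp only [Pi.zero_apply] at hx hy
    refine ⟨(mat h' *ᵥ w) x * (ψ ᵥ* mat h'⁻¹) y / (w x * ψ y), fun c => ?_⟩
    have := congrArg mat (key c)
    rw [coe_tv (by rw [dot_conj, hc]), coe_tv (hc _), add_right_inj] at this
    have := congrFun (congrFun this x) y
    simp only [vecMulVec_apply, smul_vecMul, Pi.smul_apply, smul_eq_mul] at this
    rw [eq_comm, div_mul_eq_mul_div, div_eq_iff (mul_ne_zero hx hy)]
    linear_combination this)
  exact ⟨m, σ, hm, fun c => by rw [hκ, hσ]⟩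

end RootAction

/-! ### The action on a flag and on a point group -/

section Flag

variable {ι : Type*} [Fintype ι] [DecidableEq ι] {F : Type*} [Field F]
variable {G : Type*} [Group G] {π : SpecialLinearGroup ι F →* G}
variable {p : ℕ} [hp : Fact p.Prime] [Algebra (ZMod p) F]

/-- The stabilizer of a subgroup under conjugation. -/
def cjStab (A : Subgroup G) : Subgroup G where
  carrier := {g | cj g A = A}
  one_mem' := cj_one A
  mul_mem' {a b} ha hb := by
    change cj (a * b) A = A
    rw [cj_mul, hb, ha]
  inv_mem' {a} ha := cj_inv_eq_iff.mpr (Eq.symm ha)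

theorem mem_cjStab {A : Subgroup G} {g : G} : g ∈ cjStab A ↔ cj g A = A := Iff.rfl

variable [CharP F p] [Finite F] [Finite G]

/-- An element which preserves a root group permutes the point group and the hyperplane group
of the corresponding flag. -/
theorem cj_flag [Nontrivial ι] (hπ : IsSLCover π) {w ψ : ι → F} (hw : w ≠ 0) (hψ : ψ ≠ 0)
    (h : ψ ⬝ᵥ w = 0) {k : G} {m : F} {σ : F ≃ₐ[ZMod p] F} (hk : RootAct π w ψ k m σ)
    {A : Subgroup G} (hA : A = (Cen w).map π ∨ A = (Hyp ψ).map π) :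
    cj k A = (Cen w).map π ∨ cj k A = (Hyp ψ).map π := by
  have hfam : A ∈ Fam π := by
    rcases hA with rfl | rfl
    · exact Or.inl ⟨w, hw, rfl⟩
    · exact Or.inr ⟨ψ, hψ, rfl⟩
  have hmem : π (tv w ψ) ∈ A := by
    rcases hA with rfl | rfl
    · exact ⟨_, tv_mem_Cen h, rfl⟩
    · exact ⟨_, tv_mem_Hyp h, rfl⟩
  have hmem' : π (tv w (m • ψ)) ∈ cj k A := by
    have := hk.2 1
    rw [one_smul, map_one, mul_one] at this
    rw [← this]
    exact conj_mem_cj.mpr hmem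
  have h' : (m • ψ) ⬝ᵥ w = 0 := by simp [h]
  have hψ' : m • ψ ≠ 0 := smul_ne_zero hk.1 hψ
  rcases cj_mem_Fam (p := p) hπ hfam k with ⟨w', -, e⟩ | ⟨ψ', -, e⟩ <;> rw [e] at hmem' ⊢
  · obtain ⟨c, hc, rfl⟩ := map_tv_mem_Cen (p := p) hπ h' hw hψ' hmem'
    left; rw [Cen_smul hc]
  · obtain ⟨c, hc, e'⟩ := map_tv_mem_Hyp (p := p) hπ h' hw hψ' hmem'
    right; rw [← Hyp_smul hk.1 (ψ := ψ), e', Hyp_smul hc]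

/-- Among the elements preserving a root group, those fixing the point group form a subgroup of
index at most two. -/
theorem mul_mem_cjStab_iff [Nontrivial ι] (hπ : IsSLCover π) {w ψ : ι → F} (hw : w ≠ 0)
    (hψ : ψ ≠ 0) (h : ψ ⬝ᵥ w = 0) {k k' : G} {m m' : F} {σ σ' : F ≃ₐ[ZMod p] F}
    (hk : RootAct π w ψ k m σ) (hk' : RootAct π w ψ k' m' σ') :
    k * k' ∈ cjStab ((Cen w).map π) ↔
      (k ∈ cjStab ((Cen w).map π) ↔ k' ∈ cjStab ((Cen w).map π)) := by
  by_cases hs : k' ∈ cjStab ((Cen w).map π)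
  · simp [hs, Subgroup.mul_mem_cancel_right]
  · have e' := (cj_flag hπ hw hψ h hk' (Or.inl rfl)).resolve_left hs
    simp only [hs, iff_false]
    rw [mem_cjStab, cj_mul, e']
    rw [mem_cjStab, e'] at hs
    constructor
    · intro e1 e2
      rw [mem_cjStab] at e2
      exact hs (cj_injective k (e1.trans e2.symm))
    · intro e2
      have e1 := (cj_flag hπ hw hψ h hk (Or.inl rfl)).resolve_left e2
      refine (cj_flag hπ hw hψ h hk (Or.inr rfl)).resolve_right fun e3 => hs ?_
      exact cj_injective k (e3.trans e1.symm)

end Flag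

section LinearAction

variable {ι : Type*} [Fintype ι] [DecidableEq ι] {F : Type*} [Field F]
variable {G : Type*} [Group G] {π : SpecialLinearGroup ι F →* G}
variable {p : ℕ} [hp : Fact p.Prime]

/-- `k` acts on the group of transvections with centre `w` through the linear map `T` on
covectors. The condition `T e = e` normalizes `T` off the hyperplane of covectors killing `w`. -/
def LinAct (π : SpecialLinearGroup ι F →* G) (w e : ι → F) (k : G)
    (T : (ι → F) →ₗ[F] (ι → F)) : Prop :=
  (∀ ψ, ψ ⬝ᵥ w = 0 → T ψ ⬝ᵥ w = 0 ∧ k * π (tv w ψ) * k⁻¹ = π (tv w (T ψ))) ∧ T e = e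

theorem LinAct.one (w e : ι → F) : LinAct π w e 1 LinearMap.id :=
  ⟨fun ψ h => ⟨h, by simp⟩, rfl⟩

theorem LinAct.mul {w e : ι → F} {k k' : G} {T T' : (ι → F) →ₗ[F] (ι → F)}
    (h : LinAct π w e k T) (h' : LinAct π w e k' T') : LinAct π w e (k * k') (T ∘ₗ T') := by
  refine ⟨fun ψ hψ => ⟨(h.1 _ (h'.1 _ hψ).1).1, ?_⟩, by simp [h.2, h'.2]⟩
  have : k * k' * π (tv w ψ) * (k * k')⁻¹ = k * (k' * π (tv w ψ) * k'⁻¹) * k⁻¹ := by group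
  rw [this, (h'.1 _ hψ).2, (h.1 _ (h'.1 _ hψ).1).2]
  rfl

variable [CharP F p]

include hp in
theorem map_tv_right_injective (hπ : IsSLCover π) {w ψ ψ' : ι → F} (hw : w ≠ 0)
    (h : ψ ⬝ᵥ w = 0) (h' : ψ' ⬝ᵥ w = 0) (e : π (tv w ψ) = π (tv w ψ')) : ψ = ψ' :=
  tv_eq_tv_right h h' hw (eq_of_map_eq (p := p) hπ.ker (pEl_tv h) (pEl_tv h') e)

include hp in
theorem LinAct.unique (hπ : IsSLCover π) {w e : ι → F} (he : e ⬝ᵥ w = 1) {k : G}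
    {T T' : (ι → F) →ₗ[F] (ι → F)} (h : LinAct π w e k T) (h' : LinAct π w e k T') :
    T = T' := by
  have hw : w ≠ 0 := by rintro rfl; simp at he
  refine LinearMap.ext fun ψ => ?_
  have h0 : (ψ - (ψ ⬝ᵥ w) • e) ⬝ᵥ w = 0 := by simp [he, sub_dotProduct]
  have e1 : T (ψ - (ψ ⬝ᵥ w) • e) = T' (ψ - (ψ ⬝ᵥ w) • e) :=
    map_tv_right_injective (p := p) hπ hw (h.1 _ h0).1 (h'.1 _ h0).1
      ((h.1 _ h0).2.symm.trans (h'.1 _ h0).2)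
  simpa [h.2, h'.2] using e1

include hp in
/-- An element which normalizes the group of transvections with centre `w`, and acts linearly on
one of its root groups, acts linearly on the whole group. The set of covectors on which the action
is homogeneous is an additive subgroup, stable under the transvections fixing `w`; these suffice
to carry `ψ₀` to any other covector killing `w`. -/
theorem exists_linAct (hπ : IsSLCover π) {w e ψ₀ : ι → F} (he : e ⬝ᵥ w = 1) (hψ₀ : ψ₀ ≠ 0)
    (h₀ : ψ₀ ⬝ᵥ w = 0) {k : G} (hk : k ∈ cjStab ((Cen w).map π)) {m : F} (hm : m ≠ 0)
    (hroot : ∀ c : F, k * π (tv w (c • ψ₀)) * k⁻¹ = π (tv w ((m * c) • ψ₀))) :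
    ∃ T, LinAct π w e k T := by
  have hw : w ≠ 0 := by rintro rfl; simp at he
  have hex : ∀ ψ, ψ ⬝ᵥ w = 0 → ∃ ψ', ψ' ⬝ᵥ w = 0 ∧ k * π (tv w ψ) * k⁻¹ = π (tv w ψ') := by
    intro ψ hψ
    have hmem : k * π (tv w ψ) * k⁻¹ ∈ cj k ((Cen w).map π) :=
      conj_mem_cj.mpr ⟨_, tv_mem_Cen hψ, rfl⟩
    rw [mem_cjStab.mp hk] at hmem
    obtain ⟨_, ⟨ψ', hψ', rfl⟩, e'⟩ := hmem
    exact ⟨ψ', hψ', e'.symm⟩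
  choose! κ hκ0 hκ using hex
  have inj := fun {ψ ψ' : ι → F} => map_tv_right_injective (p := p) hπ (ψ := ψ) (ψ' := ψ') hw
  have hadd : ∀ a b, a ⬝ᵥ w = 0 → b ⬝ᵥ w = 0 → κ (a + b) = κ a + κ b := by
    intro a b ha hb
    have hab : (a + b) ⬝ᵥ w = 0 := by simp [ha, hb]
    refine inj (hκ0 _ hab) (by simp [hκ0 _ ha, hκ0 _ hb]) ?_
    rw [← hκ _ hab, ← tv_mul_tv_right ha hb, ← tv_mul_tv_right (hκ0 _ ha) (hκ0 _ hb), map_mul,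
      map_mul, ← hκ _ ha, ← hκ _ hb]
    group
  have hsub : ∀ a b, a ⬝ᵥ w = 0 → b ⬝ᵥ w = 0 → κ (a - b) = κ a - κ b := by
    intro a b ha hb
    have := hadd (a - b) b (by simp [sub_dotProduct, ha, hb]) hb
    rw [sub_add_cancel] at this
    rw [this, add_sub_cancel_right]
  have hκ₀ : ∀ c : F, κ (c • ψ₀) = (m * c) • ψ₀ := by
    intro c
    have hc : (c • ψ₀) ⬝ᵥ w = 0 := by simp [h₀]
    refine inj (hκ0 _ hc) (by simp [h₀]) ?_
    rw [← hκ _ hc, hroot]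
  let good : (ι → F) → Prop := fun ψ => ψ ⬝ᵥ w = 0 ∧ ∀ c : F, κ (c • ψ) = c • κ ψ
  have good_sub : ∀ a b, good a → good b → good (a - b) := by
    intro a b ha hb
    refine ⟨by simp [sub_dotProduct, ha.1, hb.1], fun c => ?_⟩
    rw [smul_sub, hsub _ _ (by simp [ha.1]) (by simp [hb.1]), hsub _ _ ha.1 hb.1, ha.2, hb.2,
      smul_sub]
  have good_smul : ∀ d : F, good (d • ψ₀) := by
    intro d
    refine ⟨by simp [h₀], fun c => ?_⟩
    rw [smul_smul, hκ₀, hκ₀, smul_smul]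
    congr 1; ring
  have good_one : good ψ₀ := by simpa using good_smul 1
  have good_tv : ∀ v χ ψ : ι → F, χ ⬝ᵥ w = 0 → χ ⬝ᵥ v = 0 → good ψ →
      good (ψ ᵥ* mat (tv v χ)⁻¹) := by
    intro v χ ψ hχ hv hψ
    have hsw : mat (tv v χ) *ᵥ w = w := by rw [mat_tv_mulVec hv, hχ]; simp
    obtain ⟨s', hs'⟩ : k * π (tv v χ) * k⁻¹ ∈ π.range := hπ.normal.conj_mem _ ⟨_, rfl⟩ k
    have hperp : ∀ φ, φ ⬝ᵥ w = 0 → (φ ᵥ* mat (tv v χ)⁻¹) ⬝ᵥ w = 0 := by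
      intro φ hφ
      have := dot_conj (tv v χ) w φ
      rwa [hsw, hφ] at this
    have key : ∀ φ, φ ⬝ᵥ w = 0 →
        tv (mat s' *ᵥ w) (κ φ ᵥ* mat s'⁻¹) = tv w (κ (φ ᵥ* mat (tv v χ)⁻¹)) := by
      intro φ hφ
      have e1 := conj_tv (tv v χ) hφ
      rw [hsw] at e1
      refine eq_of_map_eq (p := p) hπ.ker (pEl_tv (by rw [dot_conj, hκ0 _ hφ]))
        (pEl_tv (hκ0 _ (hperp _ hφ))) ?_
      rw [← conj_tv s' (hκ0 _ hφ), ← hκ _ (hperp _ hφ), ← e1]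
      simp only [map_mul, map_inv, hs', ← hκ _ hφ]
      group
    have hκψ₀ : κ ψ₀ ≠ 0 := by
      have := hκ₀ 1
      rw [one_smul, mul_one] at this
      rw [this]
      exact smul_ne_zero hm hψ₀
    obtain ⟨c, hc0, hc, -⟩ := tv_eq_tv (by rw [dot_conj, hκ0 _ h₀]) (hκ0 _ (hperp _ h₀))
      (mulVec_ne_zero s' hw) (vecMul_ne_zero s'⁻¹ hκψ₀) (key _ h₀)
    have hsw' : mat s' *ᵥ w = c⁻¹ • w := by
      rw [eq_inv_smul_iff₀ hc0]; exact hc.symm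
    -- the action on `ψ` determines that on `ψ ᵥ* mat s⁻¹` through a fixed linear map
    have key' : ∀ φ, φ ⬝ᵥ w = 0 →
        κ (φ ᵥ* mat (tv v χ)⁻¹) = c⁻¹ • (κ φ ᵥ* mat s'⁻¹) := by
      intro φ hφ
      have h1 := key φ hφ
      have h2 : (κ φ ᵥ* mat s'⁻¹) ⬝ᵥ w = 0 := by
        have := dot_conj s' w (κ φ)
        rw [hsw', dotProduct_smul, hκ0 _ hφ, smul_eq_mul] at this
        exact (mul_eq_zero.mp this).resolve_left (inv_ne_zero hc0)
      rw [hsw', tv_smul_left h2] at h1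
      exact (tv_eq_tv_right (by simp [h2]) (hκ0 _ (hperp _ hφ)) hw h1).symm
    refine ⟨hperp _ hψ.1, fun a => ?_⟩
    rw [key' _ hψ.1, ← smul_vecMul, key' _ (by simp [hψ.1]), hψ.2, smul_vecMul, smul_comm]
  have good_all : ∀ χ, χ ⬝ᵥ w = 0 → good χ := by
    intro χ hχ
    by_cases hχ0 : χ = 0
    · subst hχ0; simpa using good_smul 0
    by_cases hex : ∃ v, v ⬝ᵥ χ = 0 ∧ v ⬝ᵥ ψ₀ ≠ 0
    · obtain ⟨v, hv, hv'⟩ := hex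
      have h1 := good_tv ((v ⬝ᵥ ψ₀)⁻¹ • v) χ ψ₀ hχ (by simp [dotProduct_comm χ, hv]) good_one
      rw [vecMul_mat_tv_inv (by simp [dotProduct_comm χ, hv])] at h1
      have h2 := good_sub _ _ good_one h1
      rw [dotProduct_smul, dotProduct_comm ψ₀, smul_eq_mul, inv_mul_cancel₀ hv'] at h2
      simpa using h2
    · push Not at hex
      obtain ⟨c, hc⟩ := exists_smul_of_perp hχ0 hex
      have hc0 : c ≠ 0 := by rintro rfl; exact hψ₀ (by simpa using hc)
      have := good_smul c⁻¹
      rwa [hc, smul_smul, inv_mul_cancel₀ hc0, one_smul] at this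
  have hproj : ∀ ψ, (ψ - (ψ ⬝ᵥ w) • e) ⬝ᵥ w = 0 := fun ψ => by simp [he, sub_dotProduct]
  let T : (ι → F) →ₗ[F] (ι → F) :=
    { toFun := fun ψ => κ (ψ - (ψ ⬝ᵥ w) • e) + (ψ ⬝ᵥ w) • e
      map_add' := fun a b => by
        have : a + b - ((a + b) ⬝ᵥ w) • e = (a - (a ⬝ᵥ w) • e) + (b - (b ⬝ᵥ w) • e) := by
          rw [add_dotProduct, add_smul]; abel
        rw [this, hadd _ _ (hproj a) (hproj b), add_dotProduct, add_smul]; abel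
      map_smul' := fun c a => by
        have : c • a - ((c • a) ⬝ᵥ w) • e = c • (a - (a ⬝ᵥ w) • e) := by
          rw [smul_dotProduct, smul_sub, smul_smul, smul_eq_mul]
        rw [this, (good_all _ (hproj a)).2, smul_dotProduct, RingHom.id_apply, smul_add,
          smul_smul, smul_eq_mul] }
  have hT : ∀ ψ, T ψ = κ (ψ - (ψ ⬝ᵥ w) • e) + (ψ ⬝ᵥ w) • e := fun _ => rfl
  refine ⟨T, fun ψ hψ => ?_, ?_⟩
  · rw [hT, hψ]
    simpa using ⟨hκ0 _ hψ, hκ _ hψ⟩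
  · have : κ 0 = 0 := by simpa using hκ₀ 0
    rw [hT, he]; simp [this]

include hp in
/-- If the determinant of the linear action is the `n`-th power of a scalar, the action is that of
an element of the special linear group. -/
theorem LinAct.mem_range [Nontrivial ι] [Finite F] [Finite G] (hπ : IsSLCover π) {w e : ι → F}
    (he : e ⬝ᵥ w = 1) {k : G} {T : (ι → F) →ₗ[F] (ι → F)} (h : LinAct π w e k T) {α : F}
    (hα : α ≠ 0) (hdet : LinearMap.det T = α ^ Fintype.card ι) : k ∈ π.range := by
  have hw : w ≠ 0 := by rintro rfl; simp at he
  let B : Matrix ι ι F := α⁻¹ • (LinearMap.toMatrix' T)ᵀ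
  have hB : B.det = 1 := by
    rw [det_smul, det_transpose, LinearMap.det_toMatrix', hdet, inv_pow,
      inv_mul_cancel₀ (pow_ne_zero _ hα)]
  have hBv : ∀ ψ, ψ ᵥ* B = α⁻¹ • T ψ := by
    intro ψ
    rw [vecMul_smul, vecMul_transpose, LinearMap.toMatrix'_mulVec]
  have hTw : ∀ ψ, T ψ ⬝ᵥ w = ψ ⬝ᵥ w := by
    intro ψ
    have := (h.1 (ψ - (ψ ⬝ᵥ w) • e) (by simp [he, sub_dotProduct])).1
    rw [map_sub, map_smul, h.2, sub_dotProduct, smul_dotProduct, he, smul_eq_mul, mul_one,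
      sub_eq_zero] at this
    exact this
  let b := slMk B hB
  have hbw : mat b *ᵥ (α • w) = w := by
    refine dotProduct_eq _ _ fun ψ => ?_
    rw [dotProduct_comm, dotProduct_comm w, dotProduct_mulVec, mat_slMk, hBv, smul_dotProduct,
      dotProduct_smul, hTw, smul_eq_mul, smul_eq_mul, inv_mul_cancel_left₀ hα]
  have hbw' : mat b⁻¹ *ᵥ w = α • w := by
    conv_lhs => rw [← hbw]
    rw [mulVec_mulVec, coe_inv_mul_coe, one_mulVec]
  have hcomm : ∀ x ∈ (Cen w).map π, (π b⁻¹)⁻¹ * k * x = x * ((π b⁻¹)⁻¹ * k) := by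
    rintro _ ⟨_, ⟨ψ, hψ, rfl⟩, rfl⟩
    have e1 := conj_tv b⁻¹ hψ
    have hTψ := (h.1 ψ hψ).1
    rw [inv_inv, hbw', mat_slMk, hBv, tv_smul_left (by simp [hTψ]), smul_smul, mul_inv_cancel₀ hα,
      one_smul] at e1
    have e2 := (h.1 ψ hψ).2
    rw [← e1] at e2
    simp only [map_mul, map_inv, inv_inv] at e2 ⊢
    have e3 : k * π (tv w ψ) = (π b)⁻¹ * π (tv w ψ) * π b * k := by
      rw [← e2]; group
    rw [mul_assoc, e3]
    group
  have := mem_range_of_commute_Cen (p := p) hπ hw hcomm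
  have h2 := mul_mem (⟨b⁻¹, rfl⟩ : π b⁻¹ ∈ π.range) this
  rwa [mul_inv_cancel_left] at h2

end LinearAction

/-! ### Shape of the outer group -/

section Assembly

/-- Abstract form of the structure of the outer automorphism group: `N` maps onto `Γ`, the
subgroup `P` of index at most two carries the field automorphisms through `τ`, and the elements
without field automorphism are controlled modulo the kernel by a determinant `Δ` up to `n`-th
powers. -/
theorem exists_outerShape {N Γ A U : Type*} [Group N] [Group Γ] [Group A] [Finite A]
    [IsCyclic A] [CommGroup U] [IsCyclic U] {n f : ℕ} (φ : N →* Γ)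
    (hφ : Function.Surjective φ) (P : Subgroup N)
    (hP : ∀ a b, a * b ∈ P ↔ (a ∈ P ↔ b ∈ P)) (τ : N →* A) (hf : Nat.card A = f)
    (Δ : (P ⊓ τ.ker : Subgroup N) →* U)
    (hΔ : ∀ k, (∃ α, Δ k = α ^ n) → φ k = 1) : Nonempty (OuterShape Γ n f) := by
  obtain ⟨⟨_, k₀, rfl⟩, hk₀⟩ := IsCyclic.exists_generator (α := Δ.range)
  obtain ⟨⟨_, x₀, hx₀, rfl⟩, hx⟩ := IsCyclic.exists_generator (α := P.map τ)
  replace hx₀ : x₀ ∈ P := hx₀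
  have hA : ∀ a b : A, a * b = b * a := IsCyclic.isMulCommutative.is_comm.comm
  have hinv : ∀ a, a⁻¹ ∈ P ↔ a ∈ P := fun a => inv_mem_iff
  have hPn : P.Normal := ⟨fun a ha g => by simp [hP, hinv, ha]⟩
  have hKn : (P ⊓ τ.ker).Normal := inferInstance
  have hd : ∀ k ∈ P ⊓ τ.ker, ∃ i : ℤ, φ k = φ k₀ ^ i := by
    intro k hk
    obtain ⟨i, hi⟩ := Subgroup.mem_zpowers_iff.mp (hk₀ ⟨Δ ⟨k, hk⟩, _, rfl⟩)
    have hi' : Δ k₀ ^ i = Δ ⟨k, hk⟩ := by simpa using congrArg Subtype.val hi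
    refine ⟨i, ?_⟩
    have := hΔ (⟨k, hk⟩ * (k₀ ^ i)⁻¹) ⟨1, by simp [hi']⟩
    simpa [mul_inv_eq_one] using this
  have hdK : (P ⊓ τ.ker).map φ = Subgroup.zpowers (φ k₀) := by
    apply le_antisymm
    · rintro _ ⟨k, hk, rfl⟩
      obtain ⟨i, hi⟩ := hd k hk
      exact ⟨i, hi.symm⟩
    · rw [Subgroup.zpowers_le]
      exact ⟨k₀, k₀.2, rfl⟩
  have hdn : φ k₀ ^ n = 1 := by
    have := hΔ (k₀ ^ n) ⟨Δ k₀, by simp⟩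
    simpa using this
  have hcover : ∃ y : Γ, ∀ g, g ∈ P.map φ ∨ y⁻¹ * g ∈ P.map φ := by
    by_cases hy : ∃ y, y ∉ P
    · obtain ⟨y, hy⟩ := hy
      refine ⟨φ y, fun g => ?_⟩
      obtain ⟨a, rfl⟩ := hφ g
      by_cases ha : a ∈ P
      · exact Or.inl ⟨a, ha, rfl⟩
      · exact Or.inr ⟨y⁻¹ * a, by simp [hP, hinv, hy, ha], by simp⟩
    · push Not at hy
      refine ⟨1, fun g => Or.inl ?_⟩
      obtain ⟨a, rfl⟩ := hφ g
      exact ⟨a, hy a, rfl⟩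
  obtain ⟨y, hy⟩ := hcover
  exact ⟨{ d := φ k₀
           x := φ x₀
           y := y
           E := P.map φ
           d_pow := hdn
           normal := by rw [← hdK]; exact hKn.map φ hφ
           comm := by
             intro g h
             obtain ⟨a, rfl⟩ := hφ g
             obtain ⟨b, rfl⟩ := hφ h
             rw [← hdK]
             have h1 : a * b * a⁻¹ * b⁻¹ ∈ P := by simp only [hP, hinv]; tauto
             have h2 : a * b * a⁻¹ * b⁻¹ ∈ τ.ker := by
               simp [MonoidHom.mem_ker, hA (τ a)]
             exact ⟨_, ⟨h1, h2⟩, by simp⟩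
           x_mem := ⟨x₀, hx₀, rfl⟩
           x_pow := by
             rw [← hdK]
             exact ⟨x₀ ^ f, ⟨pow_mem hx₀ f, by simp [← hf]⟩, by simp⟩
           mem_E := by
             rintro _ ⟨a, ha, rfl⟩
             replace ha : a ∈ P := ha
             obtain ⟨i, hi⟩ := Subgroup.mem_zpowers_iff.mp (hx ⟨τ a, a, ha, rfl⟩)
             have hi' : τ x₀ ^ i = τ a := by simpa using congrArg Subtype.val hi
             obtain ⟨j, hj⟩ := hd ((x₀ ^ i)⁻¹ * a)
               ⟨P.mul_mem (P.inv_mem (P.zpow_mem hx₀ i)) ha, by simp [hi']⟩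
             refine ⟨i, j, ?_⟩
             rw [← hj]; simp
           cover := hy
           y_sq := by
             have h1 : ∀ g, g * g ∈ P.map φ := by
               intro g
               obtain ⟨a, rfl⟩ := hφ g
               exact ⟨a * a, by simp [hP], by simp⟩
             rw [pow_two]; exact h1 y }⟩

end Assembly

/-! ### The count for almost simple groups -/

section Main

/-- The outer automorphisms induced by `G` on its socle have the expected shape. -/
theorem IsSLCover.nonempty_outerShape {ι : Type*} [Fintype ι] [DecidableEq ι] {F : Type*} [Field F]
    [Finite F] {G : Type*} [Group G] [Finite G] {p : ℕ} [hp : Fact p.Prime] [Algebra (ZMod p) F]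
    {π : SpecialLinearGroup ι F →* G} (hπ : IsSLCover π) [hS : π.range.Normal] {i j : ι}
    (hij : i ≠ j) :
    Nonempty (OuterShape (G ⧸ π.range) (Fintype.card ι) (Module.finrank (ZMod p) F)) := by
  have : CharP F p := charP_of_injective_algebraMap (algebraMap (ZMod p) F).injective p
  have : Nontrivial ι := ⟨i, j, hij⟩
  have hw : (Pi.single i 1 : ι → F) ≠ 0 := by simp
  have hψ : (Pi.single j 1 : ι → F) ≠ 0 := by simp
  have hwψ : (Pi.single j 1 : ι → F) ⬝ᵥ Pi.single i 1 = 0 := by simp [hij]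
  have he : (Pi.single i 1 : ι → F) ⬝ᵥ Pi.single i 1 = 1 := by simp
  obtain ⟨R, hR⟩ := exists_isFlagSylow (p := p) hw hψ hwψ
  have hroot := fun {k : G} => exists_rootAct (p := p) hπ hij hR (k := k)
  generalize hwdef : (Pi.single i 1 : ι → F) = w at *
  generalize (Pi.single j 1 : ι → F) = ψ at *
  set N := Subgroup.normalizer ((R : Subgroup (SpecialLinearGroup ι F)).map π : Set G) with hN
  choose m σ hact using fun k : N => hroot k.2
  let τ : N →* (F ≃ₐ[ZMod p] F) := MonoidHom.mk' σ fun a b =>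
    ((hact (a * b)).unique hπ hw hψ hwψ ((hact a).mul (hact b))).2
  let P : Subgroup N := (cjStab ((Cen w).map π)).subgroupOf N
  have hlin : ∀ k : (P ⊓ τ.ker : Subgroup N), ∃ T, LinAct π w w (k : G) T := by
    intro k
    have hσ : σ k = 1 := k.2.2
    refine exists_linAct (p := p) hπ he hψ hwψ k.2.1 (hact k).1 fun c => ?_
    rw [(hact k).2, hσ]
    rfl
  choose T hT using hlin
  let δ : (P ⊓ τ.ker : Subgroup N) →* F :=
    { toFun := fun k => LinearMap.det (T k)
      map_one' := by
        rw [(hT 1).unique (p := p) hπ he (LinAct.one w w), LinearMap.det_id]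
      map_mul' := fun a b => by
        rw [(hT (a * b)).unique (p := p) hπ he ((hT a).mul (hT b)), LinearMap.det_comp] }
  refine exists_outerShape ((QuotientGroup.mk' π.range).comp N.subtype) ?_ P (fun a b => ?_) τ
    (IsGalois.card_aut_eq_finrank (ZMod p) F) δ.toHomUnits ?_
  · intro g
    obtain ⟨g, rfl⟩ := QuotientGroup.mk_surjective g
    obtain ⟨h, k, hk, rfl⟩ := exists_eq_mul_normalizer hπ R g
    refine ⟨⟨k, hk⟩, ?_⟩
    have : (QuotientGroup.mk' π.range) (π h) = 1 := (QuotientGroup.eq_one_iff _).mpr ⟨h, rfl⟩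
    change QuotientGroup.mk' π.range k = QuotientGroup.mk' π.range (π h * k)
    rw [map_mul, this, one_mul]
  · exact mul_mem_cjStab_iff hπ hw hψ hwψ (hact a) (hact b)
  · rintro k ⟨α, hα⟩
    have hα' : δ k = (α : F) ^ Fintype.card ι := by
      simpa using congrArg Units.val hα
    exact (QuotientGroup.eq_one_iff _).mpr ((hT k).mem_range (p := p) hπ he α.ne_zero hα')

end Main

/-- Maximal subgroups containing a normal subgroup correspond to those of the quotient. -/
theorem ncard_coatoms_containing {G : Type*} [Group G] (S : Subgroup G) [S.Normal] :
    {M : Subgroup G | IsCoatom M ∧ S ≤ M}.ncard = {M : Subgroup (G ⧸ S) | IsCoatom M}.ncard := by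
  let c : Subgroup (G ⧸ S) → Subgroup G := Subgroup.comap (QuotientGroup.mk' S)
  have hc : Function.Injective c := Subgroup.comap_injective (QuotientGroup.mk'_surjective S)
  rw [← Set.ncard_image_of_injective _ hc]
  congr 1
  ext M
  constructor
  · rintro ⟨hM, hS⟩
    have hker : (QuotientGroup.mk' S).ker ≤ M := by rwa [QuotientGroup.ker_mk']
    have hcm : c (M.map (QuotientGroup.mk' S)) = M := Subgroup.comap_map_eq_self hker
    refine ⟨M.map (QuotientGroup.mk' S), ⟨fun h => ?_, fun B hB => ?_⟩, hcm⟩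
    · rw [h] at hcm
      exact hM.1 (hcm.symm.trans (Subgroup.comap_top _))
    · have hlt : c (M.map (QuotientGroup.mk' S)) < c B :=
        lt_of_le_of_ne (Subgroup.comap_mono hB.le) (hc.ne hB.ne)
      rw [hcm] at hlt
      exact hc ((hM.2 _ hlt).trans (Subgroup.comap_top _).symm)
  · rintro ⟨M, hM, rfl⟩
    exact ⟨Subgroup.isCoatom_comap_of_surjective (QuotientGroup.mk'_surjective S) hM,
      QuotientGroup.le_comap_mk' S M⟩

/-- **Proposition 2.2(i) for socle `PSL_n(q)`.** Let `q = p^f` with `p` prime and suppose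
`PSL_n(q)` is simple. If `G` is a finite almost simple group with socle `S ≅ PSL_n(q)`,
then the number of maximal subgroups of `G` containing `S` is at most
`2(n-1) + ω(f) + 10`. -/
theorem card_maximal_subgroups_containing_socle_PSL_le
    (p f n : ℕ) [hp : Fact p.Prime] (hf : 1 ≤ f) (hn : 2 ≤ n)
    (hsimple : IsSimpleGroup (ProjectiveSpecialLinearGroup (Fin n) (GaloisField p f)))
    (G : Type*) [Group G] [Finite G] (S : Subgroup G) (hSnorm : S.Normal)
    (hiso : Nonempty (↥S ≃* ProjectiveSpecialLinearGroup (Fin n) (GaloisField p f)))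
    (hcent : Subgroup.centralizer (S : Set G) = ⊥) :
    {M : Subgroup G | IsCoatom M ∧ S ≤ M}.ncard ≤
      2 * (n - 1) + f.primeFactors.card + 10 := by
  obtain ⟨iso⟩ := hiso
  let π : SpecialLinearGroup (Fin n) (GaloisField p f) →* G :=
    S.subtype.comp (iso.symm.toMonoidHom.comp (QuotientGroup.mk' _))
  have hrange : π.range = S := by
    apply le_antisymm
    · rintro _ ⟨x, rfl⟩
      exact (iso.symm (QuotientGroup.mk' _ x)).2
    · intro g hg
      obtain ⟨x, hx⟩ := QuotientGroup.mk_surjective (iso ⟨g, hg⟩)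
      refine ⟨x, ?_⟩
      change ((iso.symm (x : ProjectiveSpecialLinearGroup (Fin n) (GaloisField p f)) : S) : G) = g
      rw [hx, iso.symm_apply_apply]
  have hker : ∀ g, π g = 1 ↔
      g ∈ Subgroup.center (SpecialLinearGroup (Fin n) (GaloisField p f)) := by
    intro g
    have : π g = ((iso.symm (QuotientGroup.mk' _ g) : S) : G) := rfl
    rw [this, OneMemClass.coe_eq_one, MulEquiv.map_eq_one_iff]
    exact QuotientGroup.eq_one_iff g
  have hnorm : π.range.Normal := by rw [hrange]; exact hSnorm
  have hπ : IsSLCover π := ⟨hker, hnorm, by rw [hrange]; exact hcent⟩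
  have : Finite (GaloisField p f) := inferInstance
  have hij : (⟨0, by omega⟩ : Fin n) ≠ ⟨1, by omega⟩ := by simp
  obtain ⟨O⟩ := hπ.nonempty_outerShape (p := p) hij
  rw [Fintype.card_fin, GaloisField.finrank p (by omega)] at O
  have := O.ncard_coatoms_le (by omega) (by omega)
  rw [← hrange, ncard_coatoms_containing]
  omega
end

section
/- Let p be a prime, f ≥ 1, n ≥ 2, and let q = p^f. Assume PSL_n(q) is a simple group (i.e. (n,q) ∉ {(2,2),(2,3)}). Then ω(|PSL_n(q)|) ≥ max(1, (n−2)/2) + ω(f); equivalently, ω(|PSL_n(q)|) ≥ 1 + ω(f) and 2·ω(|PSL_n(q)|) ≥ (n−2) + 2·ω(f). -/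
/-!
The prime `p` divides `|PSLₙ(q)|`, and so does every odd prime dividing some `q ^ i - 1` with
`1 ≤ i ≤ n` (`dvd_card_PSL`): this is read off from `|GLₙ(q)| = ∏ (q ^ n - q ^ i)`, the
determinant, and the fact that the centre of `SLₙ(q)` is the group of `n`-th roots of unity.

By Zsigmondy's theorem (`exists_prime_orderOf_eq`), every `m ≥ 3` with `m ≠ 6` has a prime `ℓ` modulo
which `p` has order exactly `m`. Such primes are different for different `m`, and they divide
`|PSLₙ(q)|` as soon as `m ∣ f * i` for some `2 ≤ i ≤ n`. It remains to exhibit enough exponents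
(`card_add_one_le`). The `n - 1` numbers `f * i` and the `ω(f)` primes dividing `f` are distinct, and
discarding `2` and `6` yields `ω(|PSLₙ(q)|) ≥ n - 2 + ω(f)`, which is the second inequality, and the
first one for `n ≥ 3`. For `n = 2` the first inequality follows from the exponent `2 * f` and the odd
primes dividing `f`, with `f = 1` and `f = 3` treated separately.

Zsigmondy's theorem is proved with cyclotomic values. If no prime has order `m`, every prime divisor
`ℓ` of `Φₘ(a)` divides `m`, is the largest prime factor of `m`, and divides `Φₘ(a)` only once; hence
`Φₘ(a) = ℓ`, which the growth of `Φₘ(a)` rules out.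
-/

open Matrix

/-! ### Primitive prime divisors -/

/-- A prime divisor `ℓ` of `Φₘ(a)` determines the multiplicative order of `a` modulo `ℓ`: it is the
`ℓ`-free part `k` of `m`. In particular `k ∣ ℓ - 1`, so `ℓ` exceeds every other prime factor of `m`
whenever `ℓ ∣ m`. -/
theorem primitiveRoot_of_dvd_cyclotomic {a m ℓ : ℕ} (hℓ : ℓ.Prime) (hm : m ≠ 0)
    (hdvd : (ℓ : ℤ) ∣ (Polynomial.cyclotomic m ℤ).eval (a : ℤ)) :
    ∃ e k, m = ℓ ^ e * k ∧ ¬ ℓ ∣ k ∧ k ≠ 0 ∧ IsPrimitiveRoot (a : ZMod ℓ) k ∧ k ∣ ℓ - 1 := by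
  have := Fact.mk hℓ
  obtain ⟨e, k, hk, rfl⟩ := Nat.exists_eq_pow_mul_and_not_dvd hm ℓ hℓ.ne_one
  have hk0 : k ≠ 0 := by rintro rfl; simp at hk
  have : NeZero (k : ZMod ℓ) := ⟨by rwa [Ne, ZMod.natCast_eq_zero_iff]⟩
  have hroot : IsPrimitiveRoot (a : ZMod ℓ) k := by
    rw [← Polynomial.isRoot_cyclotomic_prime_pow_mul_iff_of_charP (p := ℓ) (k := e),
      Polynomial.IsRoot.def, ← Polynomial.map_cyclotomic_int]
    have h := (ZMod.intCast_zmod_eq_zero_iff_dvd _ ℓ).2 hdvd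
    rw [← h]
    have := Polynomial.eval_intCast_map (Int.castRingHom (ZMod ℓ))
      (Polynomial.cyclotomic (ℓ ^ e * k) ℤ) a
    simpa using this
  refine ⟨e, k, rfl, hk, hk0, hroot, ?_⟩
  rw [hroot.eq_orderOf]
  refine ZMod.orderOf_dvd_card_sub_one fun h => ?_
  have := hroot.pow_eq_one
  rw [h, zero_pow hk0] at this
  exact zero_ne_one this

/-- A prime `ℓ ∣ m` divides `Φₘ(a)` at most once, because `Φₘ(a)` divides `1 + c + ⋯ + c ^ (ℓ - 1)`
with `c = a ^ (m / ℓ) ≡ 1` modulo `ℓ`. The condition `3 ≤ m` is needed for `ℓ = 2`: `Φ₂(3) = 4`. -/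
theorem sq_not_dvd_cyclotomic {a m ℓ : ℕ} (hℓ : ℓ.Prime) (ha : 2 ≤ a) (hm : 3 ≤ m) (hℓm : ℓ ∣ m)
    (hdvd : (ℓ : ℤ) ∣ (Polynomial.cyclotomic m ℤ).eval (a : ℤ)) :
    ¬ (ℓ : ℤ) ^ 2 ∣ (Polynomial.cyclotomic m ℤ).eval (a : ℤ) := by
  have := Fact.mk hℓ
  intro hsq
  obtain ⟨e, k, hmk, hk, hk0, hroot, hkl⟩ :=
    primitiveRoot_of_dvd_cyclotomic hℓ (by omega) hdvd
  obtain ⟨d, hd⟩ := hℓm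
  have hd0 : d ≠ 0 := by rintro rfl; omega
  set c : ℤ := (a : ℤ) ^ d with hc
  have hc1 : 1 < c := one_lt_pow₀ (by exact_mod_cast ha) hd0
  have hcl : (ℓ : ℤ) ∣ c - 1 := by
    rw [← ZMod.intCast_zmod_eq_zero_iff_dvd]
    have h1 : (a : ZMod ℓ) ^ d = 1 := by
      rw [← ZMod.pow_card ((a : ZMod ℓ) ^ d), ← pow_mul, mul_comm, ← hd, hmk, mul_comm, pow_mul,
        hroot.pow_eq_one, one_pow]
    simp [hc, h1]
  have hcl' : ¬ (ℓ : ℤ) ∣ c := fun h => by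
    have := (Int.dvd_iff_dvd_of_dvd_sub hcl).1 h
    exact (Nat.prime_iff_prime_int.1 hℓ).not_dvd_one this
  have hgeom : (Polynomial.cyclotomic m ℤ).eval (a : ℤ) ∣
      ∑ i ∈ Finset.range ℓ, c ^ i * 1 ^ (ℓ - 1 - i) := by
    have hprop : d ∈ m.properDivisors := by
      rw [Nat.mem_properDivisors]
      refine ⟨⟨ℓ, by rw [hd, mul_comm]⟩, ?_⟩
      rw [hd]
      exact lt_mul_of_one_lt_left (Nat.pos_of_ne_zero hd0) hℓ.one_lt
    have h := map_dvd (Polynomial.evalRingHom (a : ℤ))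
      (Polynomial.X_pow_sub_one_mul_cyclotomic_dvd_X_pow_sub_one_of_dvd ℤ hprop)
    have h2 : (a : ℤ) ^ m - 1 = (c - 1) * ∑ i ∈ Finset.range ℓ, c ^ i * 1 ^ (ℓ - 1 - i) := by
      have := geom_sum₂_mul c 1 ℓ
      rw [mul_comm, this, hc, ← pow_mul, mul_comm d, ← hd, one_pow]
    simp only [map_mul, map_sub, map_pow, Polynomial.coe_evalRingHom, Polynomial.eval_X,
      map_one] at h
    rw [h2] at h
    exact Int.dvd_of_mul_dvd_mul_left (by omega) h
  have hsq' := hsq.trans hgeom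
  rcases hℓ.eq_two_or_odd' with rfl | hodd
  · -- Here `m = 2 ^ e` with `e ≥ 2`, so `c` is a square and `c + 1` is not divisible by `4`.
    have hk1 : k = 1 := by simpa using hkl
    subst hk1
    have he : 2 ≤ e := by
      by_contra! h
      interval_cases e <;> omega
    obtain ⟨e, rfl⟩ := Nat.exists_eq_add_of_le he
    have hd' : d = 2 ^ e * 2 := by
      have : 2 * d = 2 * (2 ^ e * 2) := by rw [← hd, hmk]; ring
      omega
    have hcs : c = ((a : ℤ) ^ 2 ^ e) ^ 2 := by rw [hc, hd', pow_mul]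
    have hodd : Odd ((a : ℤ) ^ 2 ^ e) := by
      by_contra h
      rw [Int.not_odd_iff_even] at h
      exact hcl' (by rw [hcs]; exact (even_iff_two_dvd.1 h).trans (dvd_pow_self _ two_ne_zero))
    have := Int.sq_mod_four_eq_one_of_odd hodd
    rw [← hcs] at this
    simp [Finset.sum_range_succ] at hsq'
    omega
  · have h1 := emultiplicity_geom_sum₂_eq_one (R := ℤ) (Nat.prime_iff_prime_int.1 hℓ) hodd
      (x := c) (y := 1) hcl hcl'
    have := le_emultiplicity_of_pow_dvd hsq'
    rw [h1] at this
    exact absurd this (by norm_num)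

theorem cyclotomic_eval_mul_pow {ℓ k : ℕ} (hℓ : ℓ.Prime) (a : ℝ) (j : ℕ) :
    (Polynomial.cyclotomic (k * ℓ * ℓ ^ j) ℝ).eval a =
      (Polynomial.cyclotomic (k * ℓ) ℝ).eval (a ^ ℓ ^ j) := by
  induction j generalizing a with
  | zero => simp
  | succ j ih =>
    rw [pow_succ, ← mul_assoc, ← Polynomial.cyclotomic_expand_eq_cyclotomic hℓ
      ((dvd_mul_left ℓ k).mul_right _), Polynomial.expand_eval, ih, ← pow_mul, mul_comm ℓ]

/-- If `Φₘ(a) = ℓ` with `m = k * ℓ ^ (j + 1)`, then `b = a ^ (ℓ ^ j)` is very small: from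
`Φ_{kℓ}(b) * Φₖ(b) = Φₖ(b ^ ℓ)` and the bounds `(x - 1) ^ φ(k) ≤ Φₖ(x) ≤ (x + 1) ^ φ(k)` one gets
`b ^ ℓ - 1 ≤ ℓ * (b + 1)`. -/
theorem le_of_cyclotomic_eq {a k ℓ j : ℕ} (hℓ : ℓ.Prime) (ha : 2 ≤ a) (hk : ¬ ℓ ∣ k) (hk0 : k ≠ 0)
    (h : (Polynomial.cyclotomic (k * ℓ * ℓ ^ j) ℤ).eval (a : ℤ) = ℓ) :
    (a ^ ℓ ^ j) ^ ℓ ≤ ℓ * (a ^ ℓ ^ j + 1) + 1 := by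
  set b := a ^ ℓ ^ j with hb
  have hb1 : (1 : ℝ) < b := by
    rw [hb]; push_cast
    exact one_lt_pow₀ (by exact_mod_cast ha) (pow_pos hℓ.pos j).ne'
  have hR : (Polynomial.cyclotomic (k * ℓ) ℝ).eval (b : ℝ) = ℓ := by
    rw [hb, Nat.cast_pow, ← cyclotomic_eval_mul_pow hℓ, ← Polynomial.map_cyclotomic_int]
    have := Polynomial.eval_intCast_map (Int.castRingHom ℝ)
      (Polynomial.cyclotomic (k * ℓ * ℓ ^ j) ℤ) a
    rw [Int.cast_id, h] at this
    simpa using this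
  have hmul : (Polynomial.cyclotomic k ℝ).eval ((b : ℝ) ^ ℓ) =
      ℓ * (Polynomial.cyclotomic k ℝ).eval (b : ℝ) := by
    rw [← Polynomial.expand_eval, Polynomial.cyclotomic_expand_eq_cyclotomic_mul hℓ hk,
      Polynomial.eval_mul, hR]
  have hlow := Polynomial.sub_one_pow_totient_le_cyclotomic_eval (q := (b : ℝ) ^ ℓ)
    (one_lt_pow₀ hb1 hℓ.ne_zero) k
  have hup := Polynomial.cyclotomic_eval_le_add_one_pow_totient hb1 k
  have hφ : k.totient ≠ 0 := (Nat.totient_pos.2 (Nat.pos_of_ne_zero hk0)).ne'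
  have hℓ1 : (1 : ℝ) ≤ ℓ := by exact_mod_cast hℓ.one_le
  have : ((b : ℝ) ^ ℓ - 1) ^ k.totient ≤ (ℓ * (b + 1)) ^ k.totient := by
    calc ((b : ℝ) ^ ℓ - 1) ^ k.totient ≤ ℓ * (Polynomial.cyclotomic k ℝ).eval (b : ℝ) := by
          rw [← hmul]; exact hlow
      _ ≤ ℓ ^ k.totient * (b + 1) ^ k.totient := by
          have h0 : (0 : ℝ) ≤ (Polynomial.cyclotomic k ℝ).eval (b : ℝ) :=
            Polynomial.cyclotomic_nonneg k hb1.le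
          gcongr
          exact le_self_pow₀ hℓ1 hφ
      _ = _ := (mul_pow _ _ _).symm
  have := le_of_pow_le_pow_left₀ hφ (by positivity) this
  have h2 : (b : ℝ) ^ ℓ ≤ ℓ * (b + 1) + 1 := by linarith
  exact_mod_cast h2

/-- Zsigmondy's theorem for `a ^ m - 1`, away from the exponents `1`, `2` and `6`. -/
theorem exists_prime_orderOf_eq {a m : ℕ} (ha : 2 ≤ a) (hm : 3 ≤ m) (hm6 : m ≠ 6) :
    ∃ ℓ : ℕ, ℓ.Prime ∧ orderOf (a : ZMod ℓ) = m := by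
  by_contra! hno
  set N : ℤ := (Polynomial.cyclotomic m ℤ).eval (a : ℤ) with hN
  have hN1 : 1 < N.natAbs :=
    lt_of_le_of_lt (by omega) (Polynomial.sub_one_lt_natAbs_cyclotomic_eval (q := a)
      (by omega : 1 < m) (by omega))
  have hNpos : 0 < N := by
    refine Polynomial.cyclotomic_pos_and_nonneg m (a : ℤ) |>.1 ?_
    exact_mod_cast ha
  have key : ∀ ℓ : ℕ, ℓ.Prime → (ℓ : ℤ) ∣ N → ∃ e k, m = ℓ ^ (e + 1) * k ∧ ¬ ℓ ∣ k ∧ k ≠ 0 ∧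
      k ∣ ℓ - 1 := by
    intro ℓ hℓ hdvd
    obtain ⟨e, k, hmk, hk, hk0, hroot, hkl⟩ :=
      primitiveRoot_of_dvd_cyclotomic hℓ (by omega) hdvd
    cases e with
    | zero => exact absurd (hroot.eq_orderOf.symm.trans (by simp [hmk])) (hno ℓ hℓ)
    | succ e => exact ⟨e, k, hmk, hk, hk0, hkl⟩
  -- A prime dividing `N` is the largest prime factor of `m`, so `N` has only one prime divisor.
  have hlt : ∀ ℓ ℓ' : ℕ, ℓ.Prime → ℓ'.Prime → (ℓ : ℤ) ∣ N → (ℓ' : ℤ) ∣ N → ℓ' ≤ ℓ := by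
    intro ℓ ℓ' hℓ hℓ' h h'
    obtain ⟨e, k, hmk, hk, hk0, hkl⟩ := key ℓ hℓ h
    obtain ⟨e', k', hmk', -⟩ := key ℓ' hℓ' h'
    have hdm : ℓ' ∣ ℓ ^ (e + 1) * k := by
      rw [← hmk, hmk', pow_succ']; exact (dvd_mul_right _ _).mul_right _
    rcases (hℓ'.dvd_mul).1 hdm with h1 | h1
    · exact ((Nat.prime_dvd_prime_iff_eq hℓ' hℓ).1 (hℓ'.dvd_of_dvd_pow h1)).le
    · have := Nat.le_of_dvd (Nat.sub_pos_of_lt hℓ.one_lt) (h1.trans hkl)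
      omega
  obtain ⟨ℓ, hℓ, hdvd⟩ := Nat.exists_prime_and_dvd hN1.ne'
  have hdvdN : (ℓ : ℤ) ∣ N := Int.natCast_dvd.2 hdvd
  obtain ⟨e, k, hmk, hk, hk0, hkl⟩ := key ℓ hℓ hdvdN
  have hℓm : ℓ ∣ m := by rw [hmk, pow_succ']; exact (dvd_mul_right _ _).mul_right _
  have hNℓ : N = ℓ := by
    obtain ⟨t, ht⟩ := hdvd
    have ht1 : t = 1 := by
      by_contra h1
      obtain ⟨r, hr, s, rfl⟩ := Nat.exists_prime_and_dvd h1
      have hrN : (r : ℤ) ∣ N := Int.natCast_dvd.2 (ht ▸ ⟨ℓ * s, by ring⟩)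
      have hrl : r = ℓ := le_antisymm (hlt _ _ hℓ hr hdvdN hrN) (hlt _ _ hr hℓ hrN hdvdN)
      subst hrl
      refine sq_not_dvd_cyclotomic hℓ ha hm hℓm hdvdN ?_
      rw [← hN]
      have : r ^ 2 ∣ N.natAbs := ht ▸ ⟨s, by ring⟩
      exact_mod_cast Int.natCast_dvd.2 this
    subst ht1
    omega
  have hm' : m = k * ℓ * ℓ ^ e := by rw [hmk]; ring
  have hle := le_of_cyclotomic_eq hℓ ha hk hk0 (j := e) (by rw [← hm', ← hN, hNℓ])
  set b := a ^ ℓ ^ e with hb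
  have hab : a ≤ b := Nat.le_self_pow (pow_pos hℓ.pos e).ne' a
  have hbe : e ≠ 0 → 4 ≤ b := fun he => by
    calc 4 = 2 ^ 2 := rfl
      _ ≤ a ^ 2 := by gcongr
      _ ≤ b := Nat.pow_le_pow_right (by omega)
          (hℓ.two_le.trans (Nat.le_self_pow he ℓ))
  -- For `ℓ ≥ 5` the inequality `b ^ ℓ ≤ ℓ * (b + 1) + 1` fails for every `b ≥ 2`.
  rcases Nat.lt_or_ge ℓ 5 with h5 | h5
  · have := hℓ.two_le
    interval_cases ℓ
    · -- `ℓ = 2` forces `b ≤ 3`, hence `e = 0`, `k = 1` and `m = 2`.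
      have hb3 : b ≤ 3 := by nlinarith
      have he : e = 0 := by by_contra h; have := hbe h; omega
      have hk1 : k = 1 := by simpa using hkl
      subst he hk1
      omega
    · -- `ℓ = 3` forces `a = 2` and `m ∣ 6`; the case `m = 3` is excluded since `Φ₃(2) = 7`.
      have hb2 : b ≤ 2 := by
        by_contra! h
        have : 3 ^ 2 * b ≤ b ^ 2 * b := by gcongr; omega
        have h3 : b ^ 3 = b ^ 2 * b := pow_succ b 2
        omega
      have he : e = 0 := by by_contra h; have := hbe h; omega
      have ha2 : a = 2 := by omega
      have hk2 : k ≤ 2 := Nat.le_of_dvd (by norm_num) hkl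
      subst he ha2
      interval_cases k
      · omega
      · rw [hN, hm'] at hNℓ
        simp [Polynomial.cyclotomic_three] at hNℓ
      · omega
    · exact absurd hℓ (by norm_num)
  · have h2 : ∀ n : ℕ, 4 ≤ n → 2 * (n + 1) ≤ 2 ^ n := fun n hn => by
      induction n, hn using Nat.le_induction with
      | base => norm_num
      | succ n hn ih => rw [pow_succ]; omega
    obtain ⟨t, rfl⟩ : ∃ t, ℓ = t + 1 := ⟨ℓ - 1, by omega⟩
    have h3 : 2 * (t + 1) ≤ b ^ t :=
      (h2 t (by omega)).trans (Nat.pow_le_pow_left (by omega) t)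
    have h4 : 2 * (t + 1) * b ≤ b ^ (t + 1) := by rw [pow_succ]; gcongr
    nlinarith

/-! ### The order of the projective special linear group -/

theorem card_GL_eq (F : Type*) [Field F] [Finite F] {n : ℕ} (hn : 0 < n) :
    Nat.card (GL (Fin n) F) =
      Nat.card (ProjectiveSpecialLinearGroup (Fin n) F) *
        Nat.card (Subgroup.center (SpecialLinearGroup (Fin n) F)) * (Nat.card F - 1) := by
  have : Nonempty (Fin n) := ⟨⟨0, hn⟩⟩
  have hker : (SpecialLinearGroup.toGL : SpecialLinearGroup (Fin n) F →* GL (Fin n) F).range =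
      (GeneralLinearGroup.det : GL (Fin n) F →* Fˣ).ker := by
    ext g
    rw [MonoidHom.mem_range, MonoidHom.mem_ker]
    constructor
    · rintro ⟨x, rfl⟩
      ext
      simp
    · intro h
      refine ⟨⟨g, ?_⟩, Units.ext rfl⟩
      simpa using congrArg Units.val h
  rw [← Subgroup.card_eq_card_quotient_mul_card_subgroup,
    Nat.card_congr (MonoidHom.ofInjective SpecialLinearGroup.toGL_injective).toEquiv, hker,
    ← Subgroup.card_mul_index (GeneralLinearGroup.det : GL (Fin n) F →* Fˣ).ker,
    Subgroup.index_ker, MonoidHom.range_eq_top.2 GeneralLinearGroup.det_surjective,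
    Subgroup.card_top, Nat.card_units]

theorem card_center_SL (F : Type*) [Field F] [Finite F] {n : ℕ} (hn : 0 < n) :
    Nat.card (Subgroup.center (SpecialLinearGroup (Fin n) F)) ∣ Nat.card F - 1 ∧
      Nat.card (Subgroup.center (SpecialLinearGroup (Fin n) F)) ≤ n := by
  have : NeZero n := ⟨hn.ne'⟩
  rw [Nat.card_congr (SpecialLinearGroup.center_equiv_rootsOfUnity' (⟨0, hn⟩ : Fin n)).toEquiv,
    Fintype.card_fin, ← Nat.card_units]
  exact ⟨Subgroup.card_subgroup_dvd_card _, card_rootsOfUnity F n⟩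

theorem card_GL_field' (F : Type*) [Field F] [Finite F] (n : ℕ) :
    Nat.card (GL (Fin n) F) = ∏ i : Fin n, (Nat.card F ^ n - Nat.card F ^ (i : ℕ)) := by
  have := Fintype.ofFinite F
  rw [card_GL_field, Nat.card_eq_fintype_card]

/-- Both the centre of `SLₙ(q)` and the determinant quotient have order dividing `q - 1`, so primes not
dividing `q - 1` survive from `GLₙ(q)` to `PSLₙ(q)`. -/
theorem dvd_card_PSL_of_not_dvd {F : Type*} [Field F] [Finite F] {n ℓ : ℕ} (hn : 0 < n)
    (hℓ : ℓ.Prime) (h : ℓ ∣ Nat.card (GL (Fin n) F)) (hq : ¬ ℓ ∣ Nat.card F - 1) :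
    ℓ ∣ Nat.card (ProjectiveSpecialLinearGroup (Fin n) F) := by
  rw [card_GL_eq F hn, hℓ.dvd_mul, hℓ.dvd_mul] at h
  rcases h with (h | h) | h
  · exact h
  · exact absurd (h.trans (card_center_SL F hn).1) hq
  · exact absurd h hq

/-- Every odd prime dividing some `q ^ j - 1` with `1 ≤ j ≤ n` divides `|PSLₙ(q)|`. For a prime divisor
`ℓ` of `q - 1` this holds because `(q - 1) ^ n` divides `|GLₙ(q)|`: when `n ≥ 3` a factor `q - 1`
remains, and when `n = 2` the centre has order at most `2`. -/
theorem dvd_card_PSL {F : Type*} [Field F] [Finite F] {n ℓ j : ℕ} (hn : 2 ≤ n)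
    (hℓ : ℓ.Prime) (hℓ2 : ℓ ≠ 2) (hj : j ≠ 0) (hjn : j ≤ n) (h : ℓ ∣ Nat.card F ^ j - 1) :
    ℓ ∣ Nat.card (ProjectiveSpecialLinearGroup (Fin n) F) := by
  by_cases hq : ℓ ∣ Nat.card F - 1
  · have hq0 : 0 < Nat.card F - 1 := Nat.sub_pos_of_lt Finite.one_lt_card
    have hpow : (Nat.card F - 1) ^ n ∣ Nat.card (GL (Fin n) F) := by
      have : (Nat.card F - 1) ^ n = ∏ _i : Fin n, (Nat.card F - 1) := by simp
      rw [this, card_GL_field']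
      refine Finset.prod_dvd_prod_of_dvd _ _ fun i _ => ?_
      obtain ⟨t, ht⟩ := Nat.exists_eq_add_of_le i.2.le
      have : Nat.card F ^ n - Nat.card F ^ (i : ℕ) =
          Nat.card F ^ (i : ℕ) * (Nat.card F ^ t - 1) := by
        rw [Nat.mul_sub, mul_one, ← pow_add, ← ht]
      rw [this]
      exact (Nat.sub_one_dvd_pow_sub_one _ _).mul_left _
    obtain ⟨k, rfl⟩ := Nat.exists_eq_add_of_le' hn
    obtain ⟨hZ, hZn⟩ := card_center_SL F (n := k + 2) (by omega)
    rw [card_GL_eq F (by omega), pow_succ] at hpow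
    have hpow := Nat.dvd_of_mul_dvd_mul_right hq0 hpow
    rcases Nat.eq_zero_or_pos k with rfl | hk
    · have h2 : ℓ ∣ _ := hq.trans ((dvd_pow_self _ (by norm_num)).trans hpow)
      refine ((hℓ.dvd_mul).1 h2).resolve_right fun h3 => ?_
      have := Nat.le_of_dvd Nat.card_pos h3
      have := hℓ.two_le
      omega
    · rw [pow_succ] at hpow
      exact (hq.trans (dvd_pow_self _ hk.ne')).trans
        (Nat.dvd_of_mul_dvd_mul_right hq0 (hpow.trans (mul_dvd_mul_left _ hZ)))
  · refine dvd_card_PSL_of_not_dvd (by omega) hℓ ?_ hq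
    rw [card_GL_field']
    refine dvd_trans ?_ (Finset.dvd_prod_of_mem _ (Finset.mem_univ (⟨n - j, by omega⟩ : Fin n)))
    have : Nat.card F ^ n - Nat.card F ^ (n - j) =
        Nat.card F ^ (n - j) * (Nat.card F ^ j - 1) := by
      rw [Nat.mul_sub, mul_one, ← pow_add, Nat.sub_add_cancel hjn]
    simp only [this]
    exact h.mul_left _

/-! ### Counting prime divisors -/

/-- Each exponent `m ∈ E` contributes a primitive prime divisor of `p ^ m - 1` to `|PSLₙ(p ^ f)|`;
these are distinct for distinct `m` and differ from `p`, which contributes one more prime. -/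
theorem card_add_one_le {p f n : ℕ} [hp : Fact p.Prime] (hf : 1 ≤ f) (hn : 2 ≤ n) (E : Finset ℕ)
    (hE : ∀ m ∈ E, 3 ≤ m ∧ m ≠ 6 ∧ ∃ i, 2 ≤ i ∧ i ≤ n ∧ m ∣ f * i) :
    E.card + 1 ≤ (Nat.card
      (ProjectiveSpecialLinearGroup (Fin n) (GaloisField p f))).primeFactors.card := by
  have hcard : Nat.card (GaloisField p f) = p ^ f := GaloisField.card p f (by omega)
  have hex : ∀ m, ∃ ℓ : ℕ, m ∈ E → ℓ.Prime ∧ orderOf (p : ZMod ℓ) = m := fun m => by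
    by_cases hm : m ∈ E
    · obtain ⟨ℓ, h⟩ := exists_prime_orderOf_eq hp.out.two_le (hE m hm).1 (hE m hm).2.1
      exact ⟨ℓ, fun _ => h⟩
    · exact ⟨0, fun h => absurd h hm⟩
  choose g hg using hex
  have hinj : Set.InjOn g E := fun m hm m' hm' h => by
    rw [← (hg m hm).2, ← (hg m' hm').2, h]
  have hpE : p ∉ E.image g := by
    rw [Finset.mem_image]
    rintro ⟨m, hm, h⟩
    have h3 := (hg m hm).2
    have h4 := (hE m hm).1
    rw [h, CharP.cast_eq_zero, orderOf_eq_zero_iff'.2] at h3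
    · omega
    · intro k hk
      simp [hk.ne']
  rw [← Finset.card_image_of_injOn hinj, ← Finset.card_insert_of_notMem hpE]
  refine Finset.card_le_card (Finset.insert_subset ?_ (Finset.image_subset_iff.2 ?_))
  · rw [Nat.mem_primeFactors]
    refine ⟨hp.out, dvd_card_PSL_of_not_dvd (by omega) hp.out ?_ ?_, Nat.card_pos.ne'⟩
    · rw [card_GL_field', hcard]
      refine dvd_trans ?_ (Finset.dvd_prod_of_mem _ (Finset.mem_univ (⟨1, by omega⟩ : Fin n)))
      exact Nat.dvd_sub (dvd_pow (dvd_pow_self _ (by omega)) (by omega))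
        (dvd_pow (dvd_pow_self _ (by omega)) one_ne_zero)
    · rw [hcard]
      intro h
      have h1 : p ∣ p ^ f := dvd_pow_self _ (by omega)
      have := (Nat.dvd_sub_iff_right (Nat.one_le_pow _ _ hp.out.pos) h1).1 h
      exact hp.out.one_lt.ne' (Nat.dvd_one.1 this)
  · intro m hm
    obtain ⟨hgp, hgo⟩ := hg m hm
    obtain ⟨h3, -, i, hi2, hin, hmi⟩ := hE m hm
    rw [Nat.mem_primeFactors]
    have hgt : g m ≠ 2 := fun h => by
      rw [h] at hgo
      have h2 : ∀ x : ZMod 2, x = 0 ∨ x = 1 := by decide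
      rcases h2 p with h | h
      · rw [h, orderOf_eq_zero_iff'.2] at hgo
        · omega
        · intro k hk
          simp [hk.ne']
      · rw [h, orderOf_one] at hgo
        omega
    refine ⟨hgp, dvd_card_PSL hn hgp hgt (by omega) hin ?_, Nat.card_pos.ne'⟩
    rw [hcard, ← pow_mul, ← ZMod.natCast_eq_zero_iff,
      Nat.cast_sub (Nat.one_le_pow _ _ hp.out.pos), Nat.cast_pow, Nat.cast_one, sub_eq_zero]
    exact orderOf_dvd_iff_pow_eq_one.1 (by rw [hgo]; exact hmi)

/-- **Lemma 3.6 for `PSL_n(q)`.** Let `q = p^f` with `p` prime and suppose `PSL_n(q)` is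
simple. Then `ω(|PSL_n(q)|) ≥ max(1, (n-2)/2) + ω(f)`; equivalently,
`ω(|PSL_n(q)|) ≥ 1 + ω(f)` and `2·ω(|PSL_n(q)|) ≥ (n-2) + 2·ω(f)`. -/
theorem omega_card_PSL_ge
    (p f n : ℕ) [hp : Fact p.Prime] (hf : 1 ≤ f) (hn : 2 ≤ n)
    (hsimple : IsSimpleGroup (ProjectiveSpecialLinearGroup (Fin n) (GaloisField p f))) :
    1 + f.primeFactors.card ≤
      (Nat.card (ProjectiveSpecialLinearGroup (Fin n) (GaloisField p f))).primeFactors.card ∧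
    (n - 2) + 2 * f.primeFactors.card ≤
      2 * (Nat.card (ProjectiveSpecialLinearGroup (Fin n) (GaloisField p f))).primeFactors.card := by
  -- The exponents `f * i` for `2 ≤ i ≤ n` and the prime divisors of `f` are pairwise distinct; at
  -- most two of them, `2` and `6`, have to be discarded.
  have hbig : (n - 1 + f.primeFactors.card - 2) + 1 ≤
      (Nat.card (ProjectiveSpecialLinearGroup (Fin n) (GaloisField p f))).primeFactors.card := by
    set A := (Finset.Icc 2 n).image (f * ·) ∪ f.primeFactors with hA
    have hAcard : A.card = n - 1 + f.primeFactors.card := by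
      rw [hA, Finset.card_union_of_disjoint, Finset.card_image_of_injective, Nat.card_Icc]
      · rfl
      · exact fun x y h => Nat.eq_of_mul_eq_mul_left hf h
      · rw [Finset.disjoint_left]
        intro x hx hx'
        obtain ⟨i, hi, rfl⟩ := Finset.mem_image.1 hx
        have h1 := Nat.le_of_dvd hf (Nat.dvd_of_mem_primeFactors hx')
        have h2 := (Finset.mem_Icc.1 hi).1
        nlinarith
    have hsd : A.card - 2 ≤ (A \ {2, 6}).card := Finset.le_card_sdiff {2, 6} A
    rw [hAcard] at hsd
    refine (Nat.add_le_add_right hsd 1).trans (card_add_one_le hf hn _ fun m hm => ?_)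
    simp only [hA, Finset.mem_sdiff, Finset.mem_union, Finset.mem_image, Finset.mem_Icc,
      Finset.mem_insert, Finset.mem_singleton, not_or] at hm
    obtain ⟨⟨i, ⟨hi2, hin⟩, rfl⟩ | hm, hm2, hm6⟩ := hm
    · have : 1 * 2 ≤ f * i := Nat.mul_le_mul hf hi2
      exact ⟨by omega, hm6, i, hi2, hin, dvd_rfl⟩
    · have := (Nat.prime_of_mem_primeFactors hm).two_le
      exact ⟨by omega, hm6, 2, le_rfl, hn, (Nat.dvd_of_mem_primeFactors hm).mul_right 2⟩
  refine ⟨?_, by omega⟩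
  rcases Nat.lt_or_ge 2 n with hn3 | hn2
  · omega
  obtain rfl : n = 2 := by omega
  rcases eq_or_ne f 1 with rfl | hf1
  · have := card_add_one_le (p := p) hf hn ∅ (by simp)
    simpa using this
  rcases eq_or_ne f 3 with rfl | hf3
  · have := card_add_one_le (p := p) hf hn {3}
      (by simpa using ⟨2, by norm_num⟩)
    simpa [Nat.prime_three.primeFactors] using this
  -- For `n = 2` and `f ≠ 1, 3` the exponent `2 * f` and the odd primes dividing `f` suffice.
  have hmem : 2 * f ∉ f.primeFactors := fun h => by
    have := Nat.le_of_dvd hf (Nat.dvd_of_mem_primeFactors h)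
    omega
  have hins : (insert (2 * f) f.primeFactors).card = f.primeFactors.card + 1 :=
    Finset.card_insert_of_notMem hmem
  have hsd : (insert (2 * f) f.primeFactors).card - 1 ≤
      (insert (2 * f) f.primeFactors \ {2}).card := Finset.le_card_sdiff {2} _
  have hle := card_add_one_le (p := p) hf hn (insert (2 * f) f.primeFactors \ {2}) fun m hm => by
    simp only [Finset.mem_sdiff, Finset.mem_insert, Finset.mem_singleton] at hm
    obtain ⟨rfl | hm, hm2⟩ := hm
    · exact ⟨by omega, by omega, 2, le_rfl, le_rfl, by rw [mul_comm]⟩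
    · have hmp := Nat.prime_of_mem_primeFactors hm
      have := hmp.two_le
      refine ⟨by omega, ?_, 2, le_rfl, hn, (Nat.dvd_of_mem_primeFactors hm).mul_right 2⟩
      rintro rfl
      exact absurd hmp (by norm_num)
  omega
end

section
/- Let p be a prime, f ≥ 1, n ≥ 2, and let q = p^f. Assume PSL_n(q) is a simple group (i.e. (n,q) ∉ {(2,2),(2,3)}). Then m(PSL_n(q)) ≥ 2(n−1) + ω(f); that is, PSL_n(q) has a minimal generating set of size at least 2(n−1) + ω(f). -/
open Matrix

/-!
The bound comes from a family `g` of `2(n-1) + ω(f)` elements of `SL_n(q)`, each matched with a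
proper subgroup containing the center and all the other elements, but not the element itself.

* For each simple root, the transvections `1 + E_{i,i+1}` and `1 + E_{i+1,i}` are matched with the
  maximal lower, respectively upper, parabolic subgroup attached to `i`.
* For each prime `l ∣ f`, a torus element `diag(t, t⁻¹, 1, …, 1)`, with `t` generating the
  multiplicative group of the subfield of degree `l ^ v_l(f)`, is matched with the subgroup of
  matrices that are defined, modulo scalars, over the subfield of index `l`. The subfield of degree
  `l' ^ v_{l'}(f)` lies in the one of index `l` whenever `l' ≠ l`.

If such a family generates `SL_n(q)`, its image in the quotient by the center is a minimal
generating set (`PSLGen.quot_minimal`). That it does generate (`PSLGen.generates`) follows from the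
commutator relations and the action of the torus elements on root subgroups, which scales
parameters by `t ^ 2`; the field is generated by these squares (`PSLGen.addSubgroup_eq_top`).
-/

/-- A finset `S` is a *minimal generating set* of the group `G` if it generates `G`
and no proper subset of it generates `G`. -/
def IsMinimalGeneratingSet {G : Type*} [Group G] (S : Finset G) : Prop :=
  Subgroup.closure (S : Set G) = ⊤ ∧ ∀ T ⊂ S, Subgroup.closure (T : Set G) ≠ ⊤

namespace PSLGen
open Matrix.SpecialLinearGroup

/-! ### Minimality from a family of proper subgroups -/

/-- If a generating family `g` of `G` and proper subgroups `H i` satisfy `g j ∈ H i` for all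
`j ≠ i`, then omitting `g i` leaves the rest inside `H i`, so no element can be dropped. As each
`H i` contains the kernel of `φ`, it stays proper in the image, and the argument passes to the
quotient. Injectivity of `φ ∘ g` comes for free: a repeated value could be dropped. -/
theorem quot_minimal {G Q J : Type*} [Group G] [Group Q] [Fintype J] (φ : G →* Q)
    (hφ : Function.Surjective φ) (g : J → G) (H : J → Subgroup G)
    (hker : ∀ i, φ.ker ≤ H i) (hne : ∀ i, H i ≠ ⊤) (hmem : ∀ i j, i ≠ j → g j ∈ H i)
    (hgen : Subgroup.closure (Set.range g) = ⊤) :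
    ∃ S : Finset Q, IsMinimalGeneratingSet S ∧ S.card = Fintype.card J := by
  classical
  have key : ∀ (i : J) (T : Set Q), T ⊆ (fun j => φ (g j)) '' {j | j ≠ i} →
      Subgroup.closure T ≠ ⊤ := by
    intro i T hT htop
    apply hne i
    rw [← Subgroup.comap_map_eq_self (hker i), eq_top_iff, ← Subgroup.comap_top φ, ← htop]
    apply Subgroup.comap_mono
    rw [Subgroup.closure_le]
    intro x hx
    obtain ⟨j, hj, rfl⟩ := hT hx
    exact Subgroup.mem_map_of_mem φ (hmem i j (Ne.symm hj))
  have htop : Subgroup.closure (Set.range fun j => φ (g j)) = ⊤ := by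
    rw [Set.range_comp' φ g, ← MonoidHom.map_closure, hgen, Subgroup.map_top_of_surjective φ hφ]
  have hinj : Function.Injective fun j => φ (g j) := by
    intro a b hab
    by_contra hne
    refine key a _ ?_ htop
    rintro _ ⟨j, rfl⟩
    by_cases hj : j = a
    · exact ⟨b, fun h => hne h.symm, by subst hj; exact hab.symm⟩
    · exact ⟨j, hj, rfl⟩
  refine ⟨Finset.univ.image fun j => φ (g j), ⟨by simpa using htop, ?_⟩, ?_⟩
  · intro T hT
    have hsub := hT.1
    obtain ⟨x, hx, hxT⟩ := Finset.exists_of_ssubset hT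
    obtain ⟨i, -, rfl⟩ := Finset.mem_image.1 hx
    refine key i _ fun y hy => ?_
    obtain ⟨j, -, rfl⟩ := Finset.mem_image.1 (hsub hy)
    refine ⟨j, ?_, rfl⟩
    rintro rfl
    exact hxT hy
  · rw [Finset.card_image_of_injective _ hinj, Finset.card_univ]

/-! ### Parabolic subgroups -/

variable {ι F : Type*} [Fintype ι] [DecidableEq ι] [Field F]

/-- The subgroup of `SL` of block triangular matrices for the level function `b`, i.e. those with
`A i j = 0` whenever `b j < b i`. With `b` taking two values this is a maximal parabolic subgroup;
reversing the two values gives the opposite parabolic. -/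
def parabolic (F : Type*) [Field F] (b : ι → ℕ) : Subgroup (SpecialLinearGroup ι F) where
  carrier := {A | BlockTriangular (A : Matrix ι ι F) b}
  mul_mem' hA hB := by
    simpa using BlockTriangular.mul hA hB
  one_mem' := by simpa using blockTriangular_one
  inv_mem' {A} hA := by
    have : Invertible (A : Matrix ι ι F) :=
      Matrix.invertibleOfIsUnitDet _ (by simp)
    have h := blockTriangular_inv_of_blockTriangular (M := (A : Matrix ι ι F)) hA
    have e : (A : Matrix ι ι F)⁻¹ = ((A⁻¹ : SpecialLinearGroup ι F) : Matrix ι ι F) := by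
      rw [Matrix.inv_def]; simp [coe_inv]
    rw [e] at h
    exact h

theorem transvection_mem_parabolic (b : ι → ℕ) {i j : ι} (hij : i ≠ j) (u : F)
    (h : b i ≤ b j) : SpecialLinearGroup.transvection hij u ∈ parabolic F b :=
  blockTriangular_transvection h u

theorem diag2n_mem_parabolic (b : ι → ℕ) {i j : ι} (hij : i ≠ j) (t : F) (ht : t ≠ 0) :
    diag2n hij t ht ∈ parabolic F b :=
  blockTriangular_diagonal _

theorem parabolic_ne_top (b : ι → ℕ) {i j : ι} (h : b j < b i) : parabolic F b ≠ ⊤ := by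
  intro htop
  have hij : i ≠ j := by rintro rfl; exact lt_irrefl _ h
  have hm : SpecialLinearGroup.transvection hij (1 : F) ∈ parabolic F b := htop ▸ Subgroup.mem_top _
  have := hm h
  simp [transvection_coe, hij] at this

theorem center_le_parabolic (b : ι → ℕ) :
    Subgroup.center (SpecialLinearGroup ι F) ≤ parabolic F b := by
  intro A hA
  obtain ⟨r, -, hr⟩ := Matrix.SpecialLinearGroup.mem_center_iff.1 hA
  change BlockTriangular (A : Matrix ι ι F) b
  rw [← hr]
  exact blockTriangular_diagonal _

/-! ### Subfield subgroups -/

/-- The subgroup of `SL` of matrices whose class modulo the center is fixed by the field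
endomorphism `σ` applied entrywise. It contains both the center and the matrices over the fixed
field of `σ`. -/
def projFixed (ι : Type*) [Fintype ι] [DecidableEq ι] (σ : F →+* F) :
    Subgroup (SpecialLinearGroup ι F) :=
  MonoidHom.eqLocus ((QuotientGroup.mk' (Subgroup.center _)).comp (SpecialLinearGroup.map σ))
    (QuotientGroup.mk' (Subgroup.center _))

theorem mem_projFixed_of_map_eq {σ : F →+* F} {A : SpecialLinearGroup ι F}
    (h : SpecialLinearGroup.map σ A = A) : A ∈ projFixed ι σ := by
  change QuotientGroup.mk' _ (SpecialLinearGroup.map σ A) = QuotientGroup.mk' _ A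
  rw [h]

theorem map_transvection (σ : F →+* F) {i j : ι} (hij : i ≠ j) (u : F) :
    SpecialLinearGroup.map σ (SpecialLinearGroup.transvection hij u) =
      SpecialLinearGroup.transvection hij (σ u) := by
  ext k l
  simp [transvection_coe, map_apply_coe, Matrix.one_apply, Matrix.single_apply, apply_ite σ]

theorem map_diag2n (σ : F →+* F) {i j : ι} (hij : i ≠ j) (t : F) (ht : t ≠ 0) (h : σ t = t) :
    SpecialLinearGroup.map σ (diag2n hij t ht) = diag2n hij t ht := by
  ext k l
  simp [diag2n_coe, map_apply_coe, Matrix.diagonal_apply, apply_ite σ, h]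

theorem center_le_projFixed (σ : F →+* F) :
    Subgroup.center (SpecialLinearGroup ι F) ≤ projFixed ι σ := by
  intro A hA
  have hA' : SpecialLinearGroup.map σ A ∈ Subgroup.center (SpecialLinearGroup ι F) := by
    obtain ⟨r, h1, hr⟩ := Matrix.SpecialLinearGroup.mem_center_iff.1 hA
    refine Matrix.SpecialLinearGroup.mem_center_iff.2 ⟨σ r, by rw [← map_pow, h1, map_one], ?_⟩
    rw [map_apply_coe, ← hr]
    simp
  change QuotientGroup.mk' _ (SpecialLinearGroup.map σ A) = QuotientGroup.mk' _ A
  rw [QuotientGroup.mk'_apply, QuotientGroup.mk'_apply, (QuotientGroup.eq_one_iff _).2 hA,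
    (QuotientGroup.eq_one_iff _).2 hA']

/-- A transvection with parameter `u` is fixed modulo scalars only if `σ u = u`, since
the transvection with parameter `u - σ u` is central only if that parameter vanishes. -/
theorem projFixed_ne_top {σ : F →+* F} {u : F} (hu : σ u ≠ u) {i j : ι} (hij : i ≠ j) :
    projFixed ι σ ≠ ⊤ := by
  intro htop
  have hm : SpecialLinearGroup.transvection hij u ∈ projFixed ι σ := htop ▸ Subgroup.mem_top _
  change QuotientGroup.mk' _ (SpecialLinearGroup.map σ _) = QuotientGroup.mk' _ _ at hm
  rw [map_transvection, QuotientGroup.mk'_eq_mk'] at hm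
  obtain ⟨z, hz, h⟩ := hm
  have : z = SpecialLinearGroup.transvection hij (-(σ u) + u) := by
    rw [transvection_add, ← h, ← transvection_inv, inv_mul_cancel_left]
  rw [this, transvection_mem_center_iff] at hz
  exact hu (neg_add_eq_zero.1 hz)

/-! ### Relations between transvections and diagonal matrices -/

theorem transvection_commutator {i j k : ι} (hij : i ≠ j) (hjk : j ≠ k) (hik : i ≠ k) (a b : F) :
    SpecialLinearGroup.transvection hik (a * b) =
      SpecialLinearGroup.transvection hij a * SpecialLinearGroup.transvection hjk b *
      (SpecialLinearGroup.transvection hij a)⁻¹ * (SpecialLinearGroup.transvection hjk b)⁻¹ := by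
  rw [eq_mul_inv_iff_mul_eq, eq_mul_inv_iff_mul_eq]
  apply Subtype.ext
  simp [transvection_coe, mul_add, add_mul, hjk.symm, hik.symm]
  abel

theorem diag2n_conj_fst {i j : ι} (hij : i ≠ j) (t : F) (ht : t ≠ 0) (u : F) :
    diag2n hij t ht * SpecialLinearGroup.transvection hij u * (diag2n hij t ht)⁻¹ =
      SpecialLinearGroup.transvection hij (t ^ 2 * u) := by
  rw [mul_inv_eq_iff_eq_mul]
  apply Subtype.ext
  simp [transvection_coe, diag2n_coe, mul_add, add_mul]
  ext k l
  simp only [diagonal_mul, mul_diagonal, single_apply]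
  grind

theorem diag2n_conj_snd {i j : ι} (hij : i ≠ j) (t : F) (ht : t ≠ 0) (u : F) :
    (diag2n hij t ht)⁻¹ * SpecialLinearGroup.transvection hij.symm u * diag2n hij t ht =
      SpecialLinearGroup.transvection hij.symm (t ^ 2 * u) := by
  rw [mul_assoc, inv_mul_eq_iff_eq_mul]
  apply Subtype.ext
  simp [transvection_coe, diag2n_coe, mul_add, add_mul]
  ext k l
  simp only [diagonal_mul, mul_diagonal, single_apply]
  grind

theorem diag2n_decompose {i j : ι} (hij : i ≠ j) (a : F) (ha : a ≠ 0) :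
    diag2n hij a ha = SpecialLinearGroup.transvection hij a *
      SpecialLinearGroup.transvection hij.symm (- a⁻¹) *
      SpecialLinearGroup.transvection hij a *
      SpecialLinearGroup.transvection hij (-1) *
      SpecialLinearGroup.transvection hij.symm 1 *
      SpecialLinearGroup.transvection hij (-1) := by
  apply Subtype.ext
  simp [transvection_coe, mul_add, add_mul, hij, hij.symm, ha, diag2n_coe]
  ext k l
  simp [Matrix.diagonal_apply, Matrix.one_apply, Matrix.single_apply]
  grind


/-! ### Generating the field by elements of prescribed orders -/

/-- Let `t l` generate the multiplicative group of the subfield of degree `l ^ v_l(f)`, for each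
prime `l ∣ f`. An additive subgroup containing `1` and stable under multiplication by every
`(t l) ^ 2` is the whole field. Its multipliers form a subfield `R`, of some degree `d`; were
`l ^ v_l(f) ∤ d`, then `(t l) ^ 2` would lie in the subfield of degree `gcd (l ^ v_l(f), d)`.
Writing `Q` for the order of that subfield, `t l` has order at least `Q ^ 2 - 1` and dividing
`2 (Q - 1)`, which is impossible for `Q ≥ 2`. Hence `f ∣ d`. -/
theorem addSubgroup_eq_top {p f : ℕ} [hp : Fact p.Prime] (hf : f ≠ 0) [Finite F] [CharP F p]
    (hcard : Nat.card F = p ^ f) (t : ℕ → F)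
    (ht : ∀ l ∈ f.primeFactors, orderOf (t l) = p ^ (l ^ f.factorization l) - 1)
    (K : AddSubgroup F) (h1 : 1 ∈ K)
    (hK : ∀ l ∈ f.primeFactors, ∀ u ∈ K, t l ^ 2 * u ∈ K) : K = ⊤ := by
  have := Fintype.ofFinite F
  have hmul : ∀ {a b : F}, (∀ u ∈ K, a * u ∈ K) → (∀ u ∈ K, b * u ∈ K) →
      ∀ u ∈ K, a * b * u ∈ K := fun ha hb u hu => by
    rw [mul_assoc]
    exact ha _ (hb u hu)
  -- the subfield of multipliers of `K`
  let R : Subfield F :=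
    { carrier := {r | ∀ u ∈ K, r * u ∈ K}
      mul_mem' := hmul
      one_mem' := fun u hu => by rwa [one_mul]
      add_mem' := fun {a b} ha hb u hu => by
        rw [add_mul]
        exact K.add_mem (ha u hu) (hb u hu)
      zero_mem' := fun u _ => by
        rw [zero_mul]
        exact K.zero_mem
      neg_mem' := fun {a} ha u hu => by
        rw [neg_mul]
        exact K.neg_mem (ha u hu)
      inv_mem' := fun r hr => by
        change ∀ u ∈ K, r⁻¹ * u ∈ K
        by_cases h0 : r = 0
        · simp [h0]
        have hpow : ∀ m : ℕ, ∀ u ∈ K, r ^ m * u ∈ K := by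
          intro m
          induction m with
          | zero => simp
          | succ m ih =>
            rw [pow_succ]
            exact hmul ih hr
        have e : r⁻¹ = r ^ (Fintype.card F - 1 - 1) := by
          rw [inv_eq_iff_eq_inv, eq_comm, inv_eq_of_mul_eq_one_left]
          rw [← pow_succ', Nat.sub_add_cancel, FiniteField.pow_card_sub_one_eq_one r h0]
          have := Fintype.one_lt_card (α := F)
          omega
        rw [e]
        exact hpow _ }
  have hR : ∀ l ∈ f.primeFactors, t l ^ 2 ∈ R := hK
  have := Fintype.ofFinite R
  have : CharP R p := (algebraMap R F).charP (algebraMap R F).injective p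
  obtain ⟨d, -, hd⟩ := FiniteField.card R p
  have hdvd : f ∣ d := by
    rw [← Nat.factorization_prime_le_iff_dvd hf d.ne_zero]
    intro l hl
    by_cases hlf : l ∈ f.primeFactors
    swap
    · rw [← Nat.support_factorization, Finsupp.notMem_support_iff] at hlf
      simp [hlf]
    rw [← hl.pow_dvd_iff_le_factorization d.ne_zero]
    by_contra hnd
    have ha : f.factorization l ≠ 0 := by
      rw [← Nat.support_factorization] at hlf
      exact Finsupp.mem_support_iff.1 hlf
    obtain ⟨a, ha⟩ := Nat.exists_eq_succ_of_ne_zero ha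
    have ht0 : t l ≠ 0 := by
      intro h0
      have := ht l hlf
      rw [h0, orderOf_zero, eq_comm, Nat.sub_eq_zero_iff_le] at this
      exact absurd this (not_le.2 (Nat.one_lt_pow (pow_ne_zero _ hl.ne_zero) hp.1.one_lt))
    have h2 : (⟨t l ^ 2, hR l hlf⟩ : R) ^ (Fintype.card R - 1) = 1 :=
      FiniteField.pow_card_sub_one_eq_one _ (by
        intro h; exact pow_ne_zero 2 ht0 (congrArg Subtype.val h))
    have h3 : t l ^ (2 * (p ^ (d : ℕ) - 1)) = 1 := by
      have := congrArg Subtype.val h2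
      rw [pow_mul, ← hd]
      simpa using this
    have h4 : p ^ (l ^ f.factorization l) - 1 ∣ 2 * (p ^ (d : ℕ) - 1) := by
      rw [← ht l hlf]
      exact orderOf_dvd_of_pow_eq_one h3
    have h5 : p ^ (l ^ f.factorization l) - 1 ∣
        2 * (p ^ Nat.gcd (l ^ f.factorization l) d - 1) := by
      rw [← Nat.pow_sub_one_gcd_pow_sub_one, ← Nat.gcd_mul_left]
      exact Nat.dvd_gcd (Dvd.intro_left _ rfl) h4
    obtain ⟨b, hb, hg⟩ := (Nat.dvd_prime_pow hl).1 (Nat.gcd_dvd_left (l ^ f.factorization l) d)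
    have hba : b ≤ a := by
      by_contra hlt
      have hbe : b = f.factorization l := by omega
      exact hnd (hbe ▸ hg ▸ Nat.gcd_dvd_right _ _)
    rw [hg, ha] at h5
    -- with `Q = p ^ (l ^ b)`, these bounds contradict `2 ≤ Q`: `Q ^ 2 - 1 ≤ 2 * (Q - 1)`
    have h6 : p ^ (l ^ (a + 1)) - 1 ≤ 2 * (p ^ (l ^ b) - 1) := by
      refine Nat.le_of_dvd ?_ h5
      have := Nat.one_lt_pow (pow_ne_zero b hl.ne_zero) hp.1.one_lt
      omega
    have h7 : 2 * l ^ b ≤ l ^ (a + 1) := by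
      rw [pow_succ']
      exact Nat.mul_le_mul hl.two_le (Nat.pow_le_pow_right hl.pos hba)
    have h8 : p ^ (2 * l ^ b) ≤ p ^ (l ^ (a + 1)) := Nat.pow_le_pow_right hp.1.pos h7
    have h9 : 2 ≤ p ^ (l ^ b) :=
      Nat.one_lt_pow (pow_ne_zero b hl.ne_zero) hp.1.one_lt
    rw [mul_comm, pow_mul] at h8
    have h10 : 2 * p ^ (l ^ b) ≤ (p ^ (l ^ b)) ^ 2 := by nlinarith
    omega
  -- `f ∣ d` bounds the degree of `R` below by that of `F`
  have hRtop : ∀ r : F, r ∈ R := by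
    have hle : Nat.card F ≤ Nat.card R := by
      rw [hcard, Nat.card_eq_fintype_card, hd]
      exact Nat.pow_le_pow_right hp.1.pos (Nat.le_of_dvd d.pos hdvd)
    intro r
    have hu : (R : Set F) = Set.univ := by
      apply Set.eq_of_subset_of_ncard_le (Set.subset_univ _)
      rw [Set.ncard_univ]
      exact hle
    have : r ∈ (R : Set F) := hu ▸ Set.mem_univ r
    exact this
  rw [eq_top_iff]
  intro r _
  simpa using hRtop r 1 h1

/-! ### Generation of the special linear group -/

theorem eq_top_of_transvection_mem [Nontrivial ι] (C : Subgroup (SpecialLinearGroup ι F))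
    (h : ∀ (i j : ι) (hij : i ≠ j) (u : F), SpecialLinearGroup.transvection hij u ∈ C) :
    C = ⊤ := by
  rw [eq_top_iff]
  intro A _
  refine diagonal_transvection_induction' (· ∈ C) A (fun i j hij c hc => ?_) h
    (fun _ _ => C.mul_mem)
  rw [diag2n_decompose]
  refine C.mul_mem (C.mul_mem (C.mul_mem (C.mul_mem (C.mul_mem ?_ ?_) ?_) ?_) ?_) ?_ <;>
  exact h _ _ _ _

theorem transvection_mem_mul {C : Subgroup (SpecialLinearGroup ι F)} {i j k : ι}
    (hij : i ≠ j) (hjk : j ≠ k) (hik : i ≠ k) {a b : F}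
    (ha : SpecialLinearGroup.transvection hij a ∈ C)
    (hb : SpecialLinearGroup.transvection hjk b ∈ C) :
    SpecialLinearGroup.transvection hik (a * b) ∈ C := by
  rw [transvection_commutator hij hjk hik]
  exact C.mul_mem (C.mul_mem (C.mul_mem ha hb) (C.inv_mem ha)) (C.inv_mem hb)

/-- The parameters `u` for which the transvection `1 + u E_{ij}` lies in `C`: the intersection of
`C` with the root subgroup at `(i, j)`, which is isomorphic to the additive group of `F`. -/
def rootParams (C : Subgroup (SpecialLinearGroup ι F)) {i j : ι} (hij : i ≠ j) :
    AddSubgroup F where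
  carrier := {u | SpecialLinearGroup.transvection hij u ∈ C}
  add_mem' {a b} ha hb := by
    change SpecialLinearGroup.transvection hij (a + b) ∈ C
    rw [transvection_add]
    exact C.mul_mem ha hb
  zero_mem' := by
    change SpecialLinearGroup.transvection hij 0 ∈ C
    rw [transvection_coeff_zero]
    exact C.one_mem
  neg_mem' {a} ha := by
    change SpecialLinearGroup.transvection hij (-a) ∈ C
    rw [← transvection_inv]
    exact C.inv_mem ha

/-- The simple root elements and their opposites with parameter `1`, together with the torus
elements `diag(t l, (t l)⁻¹, 1, …, 1)`, generate `SL`. Commutators give all transvections with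
parameter `1`; the torus elements scale the root subgroups at `(0, 1)` and `(1, 0)` by `(t l) ^ 2`,
so these are contained entirely in `C`; commutators again spread this to all root subgroups. -/
theorem generates {p f k : ℕ} [hp : Fact p.Prime] (hf : f ≠ 0) [Finite F] [CharP F p]
    (hcard : Nat.card F = p ^ f) (t : ℕ → F) (ht0 : ∀ l, t l ≠ 0)
    (ht : ∀ l ∈ f.primeFactors, orderOf (t l) = p ^ (l ^ f.factorization l) - 1)
    (C : Subgroup (SpecialLinearGroup (Fin (k + 2)) F))
    (hup : ∀ i : Fin (k + 1),
      SpecialLinearGroup.transvection (Fin.castSucc_lt_succ (i := i)).ne 1 ∈ C)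
    (hdown : ∀ i : Fin (k + 1),
      SpecialLinearGroup.transvection (Fin.castSucc_lt_succ (i := i)).ne' 1 ∈ C)
    (htor : ∀ l ∈ f.primeFactors,
      diag2n (zero_ne_one : (0 : Fin (k + 2)) ≠ 1) (t l) (ht0 l) ∈ C) : C = ⊤ := by
  have hlt : ∀ j i : Fin (k + 2), ∀ h : i < j, SpecialLinearGroup.transvection h.ne 1 ∈ C ∧
      SpecialLinearGroup.transvection h.ne' 1 ∈ C := by
    intro j
    induction j using Fin.induction with
    | zero => intro i h; exact absurd h (Fin.not_lt_zero i)
    | succ j ih =>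
      intro i h
      rcases (Fin.le_castSucc_iff.2 h).eq_or_lt with rfl | h'
      · exact ⟨hup j, hdown j⟩
      · obtain ⟨h1, h2⟩ := ih i h'
        constructor
        · simpa using transvection_mem_mul h'.ne (Fin.castSucc_lt_succ (i := j)).ne h.ne h1 (hup j)
        · simpa using transvection_mem_mul (Fin.castSucc_lt_succ (i := j)).ne' h'.ne' h.ne'
            (hdown j) h2
  have hone : ∀ (i j : Fin (k + 2)) (hij : i ≠ j),
      SpecialLinearGroup.transvection hij 1 ∈ C := by
    intro i j hij
    rcases lt_or_gt_of_ne hij with h | h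
    · exact (hlt j i h).1
    · exact (hlt i j h).2
  -- `P i j`: the whole root subgroup at `(i, j)` lies in `C`
  let P : Fin (k + 2) → Fin (k + 2) → Prop := fun i j =>
    ∀ hij : i ≠ j, ∀ u : F, SpecialLinearGroup.transvection hij u ∈ C
  have hP : ∀ i j l, i ≠ j → j ≠ l → P i j → P i l := by
    intro i j l hij hjl h hil u
    simpa using transvection_mem_mul hij hjl hil (h hij u) (hone j l hjl)
  have hP' : ∀ i j l, i ≠ j → j ≠ l → P j l → P i l := by
    intro i j l hij hjl h hil u
    simpa using transvection_mem_mul hij hjl hil (hone i j hij) (h hjl u)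
  have h01 : P 0 1 := by
    intro hij u
    have : rootParams C hij = ⊤ := by
      refine addSubgroup_eq_top hf hcard t ht _ (hone _ _ _) fun l hl u hu => ?_
      change SpecialLinearGroup.transvection hij (t l ^ 2 * u) ∈ C
      rw [← diag2n_conj_fst hij (t l) (ht0 l)]
      exact C.mul_mem (C.mul_mem (htor l hl) hu) (C.inv_mem (htor l hl))
    exact (this ▸ AddSubgroup.mem_top u : u ∈ rootParams C hij)
  have h10 : P 1 0 := by
    intro hij u
    have : rootParams C hij = ⊤ := by
      refine addSubgroup_eq_top hf hcard t ht _ (hone _ _ _) fun l hl u hu => ?_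
      change SpecialLinearGroup.transvection hij (t l ^ 2 * u) ∈ C
      rw [← diag2n_conj_snd hij.symm (t l) (ht0 l)]
      exact C.mul_mem (C.mul_mem (C.inv_mem (htor l hl)) hu) (htor l hl)
    exact (this ▸ AddSubgroup.mem_top u : u ∈ rootParams C hij)
  have h0 : ∀ j, P 0 j := by
    intro j
    by_cases hj : (1 : Fin (k + 2)) = j
    · exact hj ▸ h01
    · exact hP 0 1 j zero_ne_one hj h01
  have h1 : ∀ j, P 1 j := by
    intro j
    by_cases hj : (0 : Fin (k + 2)) = j
    · exact hj ▸ h10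
    · exact hP 1 0 j one_ne_zero hj h10
  apply eq_top_of_transvection_mem
  intro i j
  change P i j
  by_cases hi0 : i = 0
  · exact hi0 ▸ h0 j
  by_cases hj0 : (0 : Fin (k + 2)) = j
  · by_cases hi1 : i = 1
    · exact hi1 ▸ h1 j
    · exact hP' i 1 j hi1 (hj0 ▸ one_ne_zero) (h1 j)
  · exact hP' i 0 j hi0 hj0 (h0 j)

/-! ### The minimal generating set -/

/-- Over any field of order `p ^ f`, and with `n = k + 2`, the image of the family in
`PSL_n` is a minimal generating set of size exactly `2 (n - 1) + ω(f)`. -/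
theorem exists_minimal {p f : ℕ} [hp : Fact p.Prime] (hf : f ≠ 0) (k : ℕ) [Finite F] [CharP F p]
    (hcard : Nat.card F = p ^ f) :
    ∃ S : Finset (ProjectiveSpecialLinearGroup (Fin (k + 2)) F),
      IsMinimalGeneratingSet S ∧ S.card = 2 * (k + 1) + f.primeFactors.card := by
  have := Fintype.ofFinite F
  obtain ⟨z, hz⟩ := IsCyclic.exists_ofOrder_eq_natCard (α := Fˣ)
  have hz' : orderOf z = p ^ f - 1 := by
    rw [hz, Nat.card_units, hcard]
  have hzpos : p ^ f - 1 ≠ 0 := by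
    have := Nat.one_lt_pow hf hp.1.one_lt
    omega
  -- `s l` generates the multiplicative group of the subfield of order `p ^ (l ^ v_l(f))`
  let s : ℕ → Fˣ := fun l => z ^ ((p ^ f - 1) / (p ^ (l ^ f.factorization l) - 1))
  have hdvd : ∀ {a b : ℕ}, a ∣ b → p ^ a - 1 ∣ p ^ b - 1 := by
    intro a b h
    rw [← Nat.gcd_eq_left_iff_dvd, Nat.pow_sub_one_gcd_pow_sub_one, Nat.gcd_eq_left h]
  have hs : ∀ l, orderOf (s l) = p ^ (l ^ f.factorization l) - 1 := by
    intro l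
    have := orderOf_pow_orderOf_div (x := z) (by rw [hz']; exact hzpos)
      (hz' ▸ hdvd (Nat.ordProj_dvd f l))
    rwa [hz'] at this
  let t : ℕ → F := fun l => s l
  have ht0 : ∀ l, t l ≠ 0 := fun l => (s l).ne_zero
  have ht : ∀ l, orderOf (t l) = p ^ (l ^ f.factorization l) - 1 := by
    intro l
    rw [← hs l]
    exact orderOf_units
  -- the fixed field of `σ l` is the subfield of index `l`
  let σ : ℕ → F →+* F := fun l => iterateFrobenius F p (f / l)
  have hfix : ∀ (x : F) (e : ℕ), x ≠ 0 → (x ^ p ^ e = x ↔ orderOf x ∣ p ^ e - 1) := by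
    intro x e hx
    rw [orderOf_dvd_iff_pow_eq_one]
    conv_lhs => rw [← Nat.sub_add_cancel (Nat.one_le_pow e p hp.1.pos), pow_succ]
    exact mul_eq_right₀ hx
  have hσt : ∀ l ∈ f.primeFactors, ∀ l' ∈ f.primeFactors, l ≠ l' → σ l (t l') = t l' := by
    intro l hl l' hl' hne
    change iterateFrobenius F p (f / l) (t l') = t l'
    rw [iterateFrobenius_def, hfix _ _ (ht0 l'), ht l']
    apply hdvd
    rw [Nat.mem_primeFactors] at hl hl'
    have h1 : l' ^ f.factorization l' ∣ l * (f / l) := by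
      rw [Nat.mul_div_cancel' hl.2.1]
      exact Nat.ordProj_dvd f l'
    exact (Nat.Coprime.pow_left _
      ((Nat.coprime_primes hl'.1 hl.1).2 hne.symm)).dvd_of_dvd_mul_left h1
  have hσz : ∀ l ∈ f.primeFactors, σ l z ≠ z := by
    intro l hl
    change iterateFrobenius F p (f / l) z ≠ z
    rw [iterateFrobenius_def, Ne, hfix _ _ z.ne_zero, orderOf_units, hz']
    rw [Nat.mem_primeFactors] at hl
    have h1 : 0 < f / l := Nat.div_pos (Nat.le_of_dvd (Nat.pos_of_ne_zero hf) hl.2.1) hl.1.pos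
    have h2 : f / l < f := Nat.div_lt_self (Nat.pos_of_ne_zero hf) hl.1.one_lt
    have h3 := Nat.one_lt_pow h1.ne' hp.1.one_lt
    have h4 := Nat.pow_lt_pow_right hp.1.one_lt h2
    intro h
    have := Nat.le_of_dvd (by omega) h
    omega
  -- levels for the parabolics stabilizing the first `i + 1` coordinates, and their opposites;
  -- `g` at the simple root `i` violates only `b' i`, and at its opposite only `b i`
  let b : Fin (k + 1) → Fin (k + 2) → ℕ := fun i a => if a ≤ i.castSucc then 0 else 1
  let b' : Fin (k + 1) → Fin (k + 2) → ℕ := fun i a => if a ≤ i.castSucc then 1 else 0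
  let g : (Fin (k + 1) ⊕ Fin (k + 1)) ⊕ f.primeFactors →
      SpecialLinearGroup (Fin (k + 2)) F := Sum.elim
    (Sum.elim
      (fun i => SpecialLinearGroup.transvection (Fin.castSucc_lt_succ (i := i)).ne 1)
      (fun i => SpecialLinearGroup.transvection (Fin.castSucc_lt_succ (i := i)).ne' 1))
    (fun l => diag2n zero_ne_one (t l) (ht0 l))
  let H : (Fin (k + 1) ⊕ Fin (k + 1)) ⊕ f.primeFactors →
      Subgroup (SpecialLinearGroup (Fin (k + 2)) F) := Sum.elim
    (Sum.elim (fun i => parabolic F (b' i)) (fun i => parabolic F (b i)))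
    (fun l => projFixed _ (σ l))
  have hcardJ : Fintype.card ((Fin (k + 1) ⊕ Fin (k + 1)) ⊕ f.primeFactors) =
      2 * (k + 1) + f.primeFactors.card := by
    simp
    ring
  rw [← hcardJ]
  refine quot_minimal (QuotientGroup.mk' (Subgroup.center _))
    (QuotientGroup.mk'_surjective _) g H ?_ ?_ ?_ ?_
  · rw [QuotientGroup.ker_mk']
    rintro ((i | i) | l)
    · exact center_le_parabolic _
    · exact center_le_parabolic _
    · exact center_le_projFixed _
  · rintro ((i | i) | l)
    · exact parabolic_ne_top (i := i.castSucc) (j := i.succ) _ (by simp [b'])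
    · exact parabolic_ne_top (i := i.succ) (j := i.castSucc) _ (by simp [b])
    · exact projFixed_ne_top (hσz l l.2) (zero_ne_one : (0 : Fin (k + 2)) ≠ 1)
  · rintro ((i | i) | l) ((j | j) | l') hne
    · refine transvection_mem_parabolic _ (Fin.castSucc_lt_succ (i := j)).ne _ ?_
      have : i ≠ j := by rintro rfl; exact hne rfl
      simp only [b', Fin.le_def, Fin.val_castSucc, Fin.val_succ]
      have := Fin.val_ne_of_ne this
      split_ifs <;> omega
    · refine transvection_mem_parabolic _ (Fin.castSucc_lt_succ (i := j)).ne' _ ?_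
      simp only [b', Fin.le_def, Fin.val_castSucc, Fin.val_succ]
      split_ifs <;> omega
    · exact diag2n_mem_parabolic _ zero_ne_one _ (ht0 l')
    · refine transvection_mem_parabolic _ (Fin.castSucc_lt_succ (i := j)).ne _ ?_
      simp only [b, Fin.le_def, Fin.val_castSucc, Fin.val_succ]
      split_ifs <;> omega
    · refine transvection_mem_parabolic _ (Fin.castSucc_lt_succ (i := j)).ne' _ ?_
      have : i ≠ j := by rintro rfl; exact hne rfl
      simp only [b, Fin.le_def, Fin.val_castSucc, Fin.val_succ]
      have := Fin.val_ne_of_ne this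
      split_ifs <;> omega
    · exact diag2n_mem_parabolic _ zero_ne_one _ (ht0 l')
    · exact mem_projFixed_of_map_eq (by simp [g, map_transvection])
    · exact mem_projFixed_of_map_eq (by simp [g, map_transvection])
    · refine mem_projFixed_of_map_eq 
        (map_diag2n _ zero_ne_one _ (ht0 l') (hσt l l.2 l' l'.2 ?_))
      intro h
      exact hne (congrArg Sum.inr (Subtype.ext h))
  · refine generates hf hcard t ht0 (fun l _ => ht l) _ ?_ ?_ ?_
    · exact fun i => Subgroup.subset_closure ⟨Sum.inl (Sum.inl i), rfl⟩
    · exact fun i => Subgroup.subset_closure ⟨Sum.inl (Sum.inr i), rfl⟩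
    · exact fun l hl => Subgroup.subset_closure ⟨Sum.inr ⟨l, hl⟩, rfl⟩

end PSLGen

/-- **Proposition 3.3 for `PSL_n(q)`.** Let `q = p^f` with `p` prime and suppose `PSL_n(q)`
is simple. Then `m(PSL_n(q)) ≥ 2(n-1) + ω(f)`: there is a minimal generating set of
`PSL_n(q)` of size at least `2(n-1) + ω(f)`. -/
theorem max_minimal_generating_set_PSL_ge
    (p f n : ℕ) [hp : Fact p.Prime] (hf : 1 ≤ f) (hn : 2 ≤ n)
    (hsimple : IsSimpleGroup (ProjectiveSpecialLinearGroup (Fin n) (GaloisField p f))) :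
    ∃ S : Finset (ProjectiveSpecialLinearGroup (Fin n) (GaloisField p f)),
      IsMinimalGeneratingSet S ∧ 2 * (n - 1) + f.primeFactors.card ≤ S.card := by
  obtain ⟨k, rfl⟩ := Nat.exists_eq_add_of_le' hn
  obtain ⟨S, hS, hcard⟩ := PSLGen.exists_minimal (F := GaloisField p f) (p := p)
    (Nat.one_le_iff_ne_zero.1 hf) k (GaloisField.card p f (Nat.one_le_iff_ne_zero.1 hf))
  exact ⟨S, hS, hcard.ge⟩
end
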